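/- Let $m$ be a squarefree positive integer and $q$ an integer coprime to $m$ that is not a perfect $p$-th power for any prime $p \mid m$. Then the set of primes $p$ for which $x^m \equiv q \pmod p$ is solvable has natural density $\varphi(m)/m$. -/

import Mathlib

open Filter MeasureTheory Set Topology Complex in
/-- The tent function on `[-l, l]`. -/
noncomputable def pitTent (l y : ℝ) : ℝ := max 0 (1 - |y| / l)

/-- The Fejer kernel. -/
noncomputable def pitK (l v : ℝ) : ℝ := 2 * (1 - Real.cos (l * v)) / (l * v ^ 2)

section
open Filter MeasureTheory Set Topology Complex

lemma pitTent_continuous (l : ℝ) : Continuous (pitTent l) := by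
  unfold pitTent; fun_prop

lemma pitTent_nonneg (l y : ℝ) : 0 ≤ pitTent l y := le_max_left _ _

lemma pitTent_eq_zero {l y : ℝ} (hl : 0 < l) (h : l ≤ |y|) : pitTent l y = 0 := by
  unfold pitTent
  apply max_eq_left
  have := (one_le_div hl).2 h
  linarith

lemma pitTent_compact {l : ℝ} (hl : 0 < l) : HasCompactSupport (pitTent l) := by
  apply HasCompactSupport.intro (isCompact_Icc (a := -l) (b := l))
  intro x hx
  apply pitTent_eq_zero hl
  by_contra h
  push Not at h
  exact hx (abs_le.1 h.le)

lemma pitK_nonneg {l : ℝ} (hl : 0 < l) (v : ℝ) : 0 ≤ pitK l v := by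
  unfold pitK
  have := Real.cos_le_one (l * v)
  apply div_nonneg <;> [linarith; positivity]

lemma pitK_le {l : ℝ} (hl : 0 < l) (v : ℝ) : pitK l v ≤ 4 / (l * v ^ 2) := by
  unfold pitK
  have := Real.neg_one_le_cos (l * v)
  gcongr; linarith

lemma pitK_fourier {l : ℝ} (hl : 0 < l) {v : ℝ} (hv : v ≠ 0) :
    ∫ y : ℝ, (pitTent l y : ℂ) * cexp (I * y * v) = (pitK l v : ℂ) := by
  have hlc : (l : ℂ) ≠ 0 := by exact_mod_cast hl.ne'
  have hvc : (v : ℂ) ≠ 0 := by exact_mod_cast hv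
  have h1 : ∫ y : ℝ, (pitTent l y : ℂ) * cexp (I * y * v)
      = ∫ y in (-l)..l, (pitTent l y : ℂ) * cexp (I * y * v) := by
    rw [intervalIntegral.integral_of_le (by linarith), ← integral_indicator measurableSet_Ioc]
    congr 1; ext y
    by_cases hy : y ∈ Ioc (-l) l
    · rw [indicator_of_mem hy]
    · rw [indicator_of_notMem hy, pitTent_eq_zero hl]
      · simp
      · by_contra h
        push Not at h
        exact hy ⟨(abs_lt.1 h).1, (abs_lt.1 h).2.le⟩
  have hcont : Continuous fun y : ℝ => (pitTent l y : ℂ) * cexp (I * y * v) := by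
    have := pitTent_continuous l
    fun_prop
  rw [h1, ← intervalIntegral.integral_add_adjacent_intervals (b := 0)
    (hcont.intervalIntegrable _ _) (hcont.intervalIntegrable _ _)]
  have hexp : ∀ y : ℝ, HasDerivAt (fun y : ℝ => cexp (I * y * v)) (cexp (I * y * v) * (I * v)) y := by
    intro y
    have : HasDerivAt (fun y : ℝ => I * (y : ℂ) * v) (I * 1 * v) y :=
      ((hasDerivAt_id y).ofReal_comp.const_mul I).mul_const _
    simpa using this.cexp
  have hlin : ∀ y : ℝ, HasDerivAt (fun y : ℝ => (y : ℂ)) 1 y := fun y =>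
    (hasDerivAt_id y).ofReal_comp
  have e2 : ∫ y in (0:ℝ)..l, (pitTent l y : ℂ) * cexp (I * y * v)
      = ((1 - (l : ℂ) / l) * (cexp (I * l * v) / (I * v)) + (1 / l) * (cexp (I * l * v) / (I * v) ^ 2))
        - ((1 - ((0 : ℝ) : ℂ) / l) * (cexp (I * (0 : ℝ) * v) / (I * v)) + (1 / l) * (cexp (I * (0 : ℝ) * v) / (I * v) ^ 2)) := by
    apply intervalIntegral.integral_eq_sub_of_hasDerivAt
      (f := fun y : ℝ => (1 - (y : ℂ) / l) * (cexp (I * y * v) / (I * v)) + (1 / l) * (cexp (I * y * v) / (I * v) ^ 2))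
    · intro y hy
      rw [uIcc_of_le hl.le] at hy
      have : (pitTent l y : ℂ) = 1 - (y : ℂ) / l := by
        have : pitTent l y = 1 - y / l := by
          unfold pitTent
          rw [abs_of_nonneg hy.1, max_eq_right]
          have := (div_le_one hl).2 hy.2
          linarith
        rw [this]; push_cast; ring
      rw [this]
      have hd := ((((hlin y).div_const (l : ℂ)).const_sub 1).mul ((hexp y).div_const (I * v))).add
        (((hexp y).div_const ((I * v) ^ 2)).const_mul (1 / (l : ℂ)))
      refine hd.congr_deriv ?_
      have hI0 := I_ne_zero
      field_simp
      ring
    · exact hcont.intervalIntegrable _ _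
  have e1 : ∫ y in (-l)..(0:ℝ), (pitTent l y : ℂ) * cexp (I * y * v)
      = ((1 + ((0 : ℝ) : ℂ) / l) * (cexp (I * (0 : ℝ) * v) / (I * v)) - (1 / l) * (cexp (I * (0 : ℝ) * v) / (I * v) ^ 2))
        - ((1 + ((-l : ℝ) : ℂ) / l) * (cexp (I * (-l : ℝ) * v) / (I * v)) - (1 / l) * (cexp (I * (-l : ℝ) * v) / (I * v) ^ 2)) := by
    apply intervalIntegral.integral_eq_sub_of_hasDerivAt
      (f := fun y : ℝ => (1 + (y : ℂ) / l) * (cexp (I * y * v) / (I * v)) - (1 / l) * (cexp (I * y * v) / (I * v) ^ 2))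
    · intro y hy
      rw [uIcc_of_le (by linarith)] at hy
      have : (pitTent l y : ℂ) = 1 + (y : ℂ) / l := by
        have : pitTent l y = 1 + y / l := by
          unfold pitTent
          rw [abs_of_nonpos hy.2, max_eq_right]
          · ring
          have := (div_le_one hl).2 (by linarith [hy.1] : -y ≤ l)
          linarith
        rw [this]; push_cast; ring
      rw [this]
      have hd := ((((hlin y).div_const (l : ℂ)).const_add 1).mul ((hexp y).div_const (I * v))).sub
        (((hexp y).div_const ((I * v) ^ 2)).const_mul (1 / (l : ℂ)))
      refine hd.congr_deriv ?_
      have hI0 := I_ne_zero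
      field_simp
      ring
    · exact hcont.intervalIntegrable _ _
  rw [e1, e2]
  have hcos : cexp (I * l * v) + cexp (I * (-l : ℝ) * v) = 2 * (Real.cos (l * v) : ℂ) := by
    push_cast
    rw [Complex.cos]
    ring_nf
  have hI : (I * (v:ℂ)) ^ 2 = - (v:ℂ)^2 := by rw [mul_pow, I_sq]; ring
  unfold pitK
  rw [div_self hlc, hI]
  have h3 : cexp (I * (-l : ℝ) * v) = 2 * (Real.cos (l * v) : ℂ) - cexp (I * l * v) := by
    rw [← hcos]; ring
  rw [h3]
  push_cast
  simp only [mul_zero, zero_mul, Complex.exp_zero, neg_div, div_self hlc]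
  field_simp
  ring

lemma pitK_lower {l : ℝ} (hl : 0 < l) {v : ℝ} (hv : v ≠ 0) (h : |l * v| ≤ 1) :
    l / 2 ≤ pitK l v := by
  unfold pitK
  have h2 : Real.cos (l * v) ≤ 1 - (l * v) ^ 2 / 4 := by
    have := Real.cos_bound h
    have h4 := (abs_le.1 this).2
    have h5 : |l * v| ^ 4 = (l * v) ^ 2 * (l * v) ^ 2 := by
      rw [← abs_pow]; rw [abs_of_nonneg (by positivity)]; ring
    have h6 : (l * v) ^ 2 ≤ 1 := by
      rw [← sq_abs]; exact pow_le_one₀ (abs_nonneg _) h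
    nlinarith [sq_nonneg (l * v)]
  rw [le_div_iff₀ (by positivity)]
  nlinarith

lemma pitK_measurable (l : ℝ) : Measurable (pitK l) := by
  unfold pitK; fun_prop

lemma pitK_bdd {l : ℝ} (hl : 0 < l) (v : ℝ) : pitK l v ≤ l := by
  by_cases hv : v = 0
  · subst hv; simp [pitK, hl.le]
  unfold pitK
  rw [div_le_iff₀ (by positivity)]
  have := Real.one_sub_sq_div_two_le_cos (x := l * v)
  nlinarith

lemma pitK_le_cauchy {l : ℝ} (hl : 0 < l) (v : ℝ) :
    pitK l v ≤ (l + 4 / l) * (1 + v ^ 2)⁻¹ := by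
  by_cases hv : v = 0
  · subst hv; simp [pitK]; positivity
  have h1 := pitK_le hl v
  have h2 := pitK_bdd hl v
  have h3 : pitK l v * v ^ 2 ≤ 4 / l := by
    rw [show 4 / (l * v ^ 2) = 4 / l / v ^ 2 by field_simp] at h1
    rwa [le_div_iff₀ (by positivity)] at h1
  rw [← div_eq_mul_inv, le_div_iff₀ (by positivity)]
  linarith

lemma pitK_integrable {l : ℝ} (hl : 0 < l) : Integrable (pitK l) := by
  apply (integrable_inv_one_add_sq.const_mul (l + 4 / l)).mono' (pitK_measurable l).aestronglyMeasurable
  filter_upwards with v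
  rw [Real.norm_of_nonneg (pitK_nonneg hl v)]
  exact pitK_le_cauchy hl v

end


section
open Filter MeasureTheory Set Topology Complex

lemma pit_conv_eq {b : ℝ → ℝ} (hbm : Measurable b) {M : ℝ} (hM : ∀ t, |b t| ≤ M)
    {g : ℂ → ℂ} (hg : ∀ z : ℂ, 0 < z.re → ∫ t in Ioi (0:ℝ), (b t : ℂ) * cexp (-z * t) = g z)
    {l : ℝ} (hl : 0 < l) (u : ℝ) {e : ℝ} (he : 0 < e) :
    ∫ y : ℝ, (pitTent l y : ℂ) * cexp (I * y * u) * g (e + I * y)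
      = ((∫ t in Ioi (0:ℝ), b t * Real.exp (-e * t) * pitK l (u - t) : ℝ) : ℂ) := by
  have h1 : ∀ y : ℝ, (pitTent l y : ℂ) * cexp (I * y * u) * g (e + I * y)
      = ∫ t in Ioi (0:ℝ), (pitTent l y : ℂ) * cexp (I * y * u) * ((b t : ℂ) * cexp (-(e + I * y) * t)) := by
    intro y
    rw [integral_const_mul, hg]
    simp [he]
  simp_rw [h1]
  rw [integral_integral_swap]
  · rw [← integral_complex_ofReal]
    apply setIntegral_congr_ae measurableSet_Ioi
    have hne : ∀ᵐ t : ℝ, t ≠ u := by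
      simp [ae_iff]
    filter_upwards [hne] with t ht _
    have := pitK_fourier hl (v := u - t) (sub_ne_zero.2 ht.symm)
    push_cast
    rw [← this, ← integral_const_mul]
    congr 1; ext y
    have : cexp (I * y * u) * cexp (-(e + I * y) * t) = cexp (-e * t) * cexp (I * y * ((u - t : ℝ) : ℂ)) := by
      rw [← Complex.exp_add, ← Complex.exp_add]; congr 1; push_cast; ring
    linear_combination (pitTent l y : ℂ) * b t * this
  · have hI1 : Integrable (fun y : ℝ => pitTent l y) :=
      (pitTent_continuous l).integrable_of_hasCompactSupport (pitTent_compact hl)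
    have hI2 : Integrable (fun t : ℝ => M * Real.exp (-e * t)) (volume.restrict (Ioi 0)) :=
      (integrableOn_exp_mul_Ioi (by linarith) 0).const_mul M
    have hI := hI1.mul_prod hI2
    refine hI.mono' ?_ ?_
    · apply Measurable.aestronglyMeasurable
      have := (pitTent_continuous l).measurable
      unfold Function.uncurry
      fun_prop
    · filter_upwards with p
      simp only [Function.uncurry, norm_mul, Complex.norm_real, Complex.norm_exp]
      rw [Real.norm_of_nonneg (pitTent_nonneg _ _)]
      have e1 : (I * (p.1 : ℂ) * u).re = 0 := by simp
      have e2 : (-((e : ℂ) + I * p.1) * p.2).re = -e * p.2 := by simp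
      rw [e1, e2, Real.exp_zero, mul_one]
      have := hM p.2
      have h3 := pitTent_nonneg l p.1
      gcongr
      exact this

lemma pit_conv_tendsto {b : ℝ → ℝ} (hbm : Measurable b) {M : ℝ} (hM : ∀ t, |b t| ≤ M)
    {g : ℂ → ℂ} (hg : ∀ z : ℂ, 0 < z.re → ∫ t in Ioi (0:ℝ), (b t : ℂ) * cexp (-z * t) = g z)
    (hgc : ContinuousOn g {z | 0 ≤ z.re}) {l : ℝ} (hl : 0 < l) (u : ℝ) :
    ∫ y : ℝ, (pitTent l y : ℂ) * cexp (I * y * u) * g (I * y)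
      = ((∫ t in Ioi (0:ℝ), b t * pitK l (u - t) : ℝ) : ℂ) := by
  have hM0 : 0 ≤ M := (abs_nonneg _).trans (hM 0)
  -- real side
  have hR : Tendsto (fun e : ℝ => ((∫ t in Ioi (0:ℝ), b t * Real.exp (-e * t) * pitK l (u - t) : ℝ) : ℂ))
      (𝓝[>] 0) (𝓝 ((∫ t in Ioi (0:ℝ), b t * pitK l (u - t) : ℝ) : ℂ)) := by
    apply (Complex.continuous_ofReal.tendsto _).comp
    apply tendsto_integral_filter_of_dominated_convergence (fun t => M * pitK l (u - t))
    · filter_upwards with e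
      have := pitK_measurable l
      apply Measurable.aestronglyMeasurable
      fun_prop
    · filter_upwards [self_mem_nhdsWithin] with e he
      filter_upwards [ae_restrict_mem measurableSet_Ioi] with t ht
      rw [norm_mul, norm_mul, Real.norm_of_nonneg (pitK_nonneg hl _), Real.norm_eq_abs (Real.exp _),
        Real.abs_exp]
      have h1 : Real.exp (-e * t) ≤ 1 := by
        rw [Real.exp_le_one_iff]
        have : 0 < e * t := mul_pos he ht
        linarith
      have h2 := pitK_nonneg hl (u - t)
      have : ‖b t‖ * Real.exp (-e * t) ≤ M * 1 := by
        gcongr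
        exact hM t
      gcongr
      linarith
    · exact (((pitK_integrable hl).comp_sub_left u).const_mul M).integrableOn
    · filter_upwards with t
      have : Tendsto (fun e : ℝ => b t * Real.exp (-e * t) * pitK l (u - t)) (𝓝 0)
          (𝓝 (b t * Real.exp (-0 * t) * pitK l (u - t))) := by
        apply Continuous.tendsto
        fun_prop
      simp only [neg_zero, zero_mul, Real.exp_zero, mul_one] at this
      exact this.mono_left nhdsWithin_le_nhds
  -- complex side
  have hcomp : IsCompact (Icc (0:ℝ) 1 ×ℂ Icc (-l) l) := isCompact_Icc.reProdIm isCompact_Icc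
  have hgc' : ContinuousOn g (Icc (0:ℝ) 1 ×ℂ Icc (-l) l) := hgc.mono (by
    intro z hz; exact hz.1.1)
  obtain ⟨C, hC⟩ := hcomp.exists_bound_of_continuousOn hgc'
  have hL : Tendsto (fun e : ℝ => ∫ y : ℝ, (pitTent l y : ℂ) * cexp (I * y * u) * g (e + I * y))
      (𝓝[>] 0) (𝓝 (∫ y : ℝ, (pitTent l y : ℂ) * cexp (I * y * u) * g (I * y))) := by
    apply tendsto_integral_filter_of_dominated_convergence (fun y => pitTent l y * C)
    · filter_upwards [self_mem_nhdsWithin] with e he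
      apply Continuous.aestronglyMeasurable
      have h1 := pitTent_continuous l
      have h2 : Continuous fun y : ℝ => g (e + I * y) := by
        apply hgc.comp_continuous (by fun_prop)
        intro y
        have : 0 < e := he
        simp [this.le]
      exact Continuous.mul (by fun_prop) h2
    · filter_upwards [Ioc_mem_nhdsGT (show (0:ℝ) < 1 by norm_num)] with e he
      filter_upwards with y
      simp only [norm_mul, Complex.norm_real, Complex.norm_exp]
      rw [Real.norm_of_nonneg (pitTent_nonneg _ _)]
      have e1 : (I * (y : ℂ) * u).re = 0 := by simp
      rw [e1, Real.exp_zero, mul_one]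
      by_cases hy : |y| ≤ l
      · have h3 := pitTent_nonneg l y
        gcongr
        apply hC
        rw [Complex.mem_reProdIm]
        simp [he.1.le, he.2, abs_le.1 hy]
      · rw [pitTent_eq_zero hl (not_le.1 hy).le]; simp
    · exact ((pitTent_continuous l).integrable_of_hasCompactSupport (pitTent_compact hl)).mul_const C
    · filter_upwards with y
      apply Tendsto.const_mul
      have h0 : ContinuousWithinAt g {z | 0 ≤ z.re} (I * y) := hgc _ (by simp)
      apply h0.tendsto.comp
      apply tendsto_nhdsWithin_iff.2
      constructor
      · have : Tendsto (fun e : ℝ => (e : ℂ) + I * y) (𝓝 0) (𝓝 (((0:ℝ):ℂ) + I * y)) := by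
          apply Continuous.tendsto
          fun_prop
        simp only [ofReal_zero, zero_add] at this
        exact this.mono_left nhdsWithin_le_nhds
      · filter_upwards [self_mem_nhdsWithin] with e he
        have : 0 < e := he
        simp [this.le]
  apply tendsto_nhds_unique hL
  apply hR.congr'
  filter_upwards [self_mem_nhdsWithin] with e he
  exact (pit_conv_eq hbm hM hg hl u he).symm

lemma pit_conv_zero {b : ℝ → ℝ} (hbm : Measurable b) {M : ℝ} (hM : ∀ t, |b t| ≤ M)
    {g : ℂ → ℂ} (hg : ∀ z : ℂ, 0 < z.re → ∫ t in Ioi (0:ℝ), (b t : ℂ) * cexp (-z * t) = g z)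
    (hgc : ContinuousOn g {z | 0 ≤ z.re}) {l : ℝ} (hl : 0 < l) :
    Tendsto (fun u : ℝ => ∫ t in Ioi (0:ℝ), b t * pitK l (u - t)) atTop (𝓝 0) := by
  have h1 := Real.tendsto_integral_exp_smul_cocompact (fun y : ℝ => (pitTent l y : ℂ) * g (I * y))
  have h2 : Tendsto (fun u : ℝ => -u / (2 * Real.pi)) atTop (cocompact ℝ) := by
    have : Tendsto (fun u : ℝ => -u / (2 * Real.pi)) atTop atBot := by
      apply Tendsto.atBot_div_const (by positivity)
      exact tendsto_neg_atTop_atBot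
    exact this.mono_right atBot_le_cocompact
  have h3 := h1.comp h2
  have h4 : Tendsto (fun u : ℝ => ((∫ t in Ioi (0:ℝ), b t * pitK l (u - t) : ℝ) : ℂ)) atTop (𝓝 0) := by
    apply h3.congr
    intro u
    rw [← pit_conv_tendsto hbm hM hg hgc hl u]
    simp only [Function.comp]
    congr 1; ext y
    rw [Circle.smul_def, Real.fourierChar_apply, smul_eq_mul]
    have : cexp (↑(2 * Real.pi * -(y * (-u / (2 * Real.pi)))) * I) = cexp (I * y * u) := by
      congr 1
      have : 2 * Real.pi * -(y * (-u / (2 * Real.pi))) = y * u := by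
        field_simp
      rw [this]; push_cast; ring
    rw [this]; ring
  have := (Complex.continuous_re.tendsto 0).comp h4
  simpa [Function.comp_def] using this

end


section
open Filter MeasureTheory Set Topology Complex

lemma pit_lower {b : ℝ → ℝ} (hbm : Measurable b) {M : ℝ} (hM : ∀ t, |b t| ≤ M)
    {l δ η u : ℝ} (hl : 0 < l) (hδ : 0 < δ) (hη : 0 ≤ η) (hlδ : 1 / l ≤ δ) (hu : δ < u)
    (hb : ∀ t, |u - t| ≤ δ → η ≤ b t) :
    η - M * (4 / l * (1 + 1 / δ ^ 2)) * Real.pi ≤ ∫ t in Ioi (0:ℝ), b t * pitK l (u - t) := by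
  have hM0 : 0 ≤ M := (abs_nonneg _).trans (hM 0)
  set A : ℝ := M * (4 / l * (1 + 1 / δ ^ 2)) with hA
  have hA0 : 0 ≤ A := by positivity
  have hl1 : 0 < 1 / l := by positivity
  have hI1 : Integrable (fun t : ℝ => A * (1 + (u - t) ^ 2)⁻¹) :=
    (integrable_inv_one_add_sq.comp_sub_left u).const_mul A
  have hI2 : Integrable ((Icc (u - 1 / l) (u + 1 / l)).indicator (fun _ : ℝ => η * (l / 2))) :=
    (integrable_indicator_iff measurableSet_Icc).2 (integrableOn_const (by simp))
  have hI3 : Integrable (fun t => b t * pitK l (u - t)) := by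
    apply (((pitK_integrable hl).comp_sub_left u).const_mul M).mono'
    · have := pitK_measurable l
      apply Measurable.aestronglyMeasurable
      fun_prop
    · filter_upwards with t
      rw [norm_mul, Real.norm_of_nonneg (pitK_nonneg hl _)]
      have := pitK_nonneg hl (u - t)
      gcongr
      exact hM t
  have hle : ∫ t in Ioi (0:ℝ), ((Icc (u - 1 / l) (u + 1 / l)).indicator (fun _ : ℝ => η * (l / 2)) t
      - A * (1 + (u - t) ^ 2)⁻¹) ≤ ∫ t in Ioi (0:ℝ), b t * pitK l (u - t) := by
    apply setIntegral_mono_ae (hI2.sub hI1).integrableOn hI3.integrableOn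
    have hne : ∀ᵐ t : ℝ, t ≠ u := by
      simp [ae_iff]
    filter_upwards [hne] with t ht
    have hv : u - t ≠ 0 := sub_ne_zero.2 ht.symm
    have hK := pitK_nonneg hl (u - t)
    have h0 : 0 ≤ A * (1 + (u - t) ^ 2)⁻¹ := by positivity
    change (Icc (u - 1 / l) (u + 1 / l)).indicator (fun _ : ℝ => η * (l / 2)) t
      - A * (1 + (u - t) ^ 2)⁻¹ ≤ b t * pitK l (u - t)
    by_cases h1 : t ∈ Icc (u - 1 / l) (u + 1 / l)
    · rw [indicator_of_mem h1]
      have h2 : |u - t| ≤ 1 / l := by rw [abs_le]; constructor <;> linarith [h1.1, h1.2]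
      have h3 := hb t (h2.trans hlδ)
      have h4 : l / 2 ≤ pitK l (u - t) := by
        apply pitK_lower hl hv
        rw [abs_mul, abs_of_pos hl]
        calc l * |u - t| ≤ l * (1 / l) := by gcongr
          _ = 1 := by field_simp
      have h5 : 0 ≤ b t := hη.trans h3
      have : η * (l / 2) ≤ b t * pitK l (u - t) := by gcongr
      linarith
    · rw [indicator_of_notMem h1]
      by_cases h2 : |u - t| ≤ δ
      · have h3 := hb t h2
        have : 0 ≤ b t * pitK l (u - t) := mul_nonneg (hη.trans h3) hK
        linarith
      · push Not at h2
        have h5 : δ ^ 2 ≤ (u - t) ^ 2 := by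
          rw [← sq_abs (u - t)]; gcongr
        have h6 : pitK l (u - t) ≤ (4 / l * (1 + 1 / δ ^ 2)) * (1 + (u - t) ^ 2)⁻¹ := by
          refine (pitK_le hl _).trans ?_
          rw [show 4 / (l * (u - t) ^ 2) = 4 / l * (1 / (u - t) ^ 2) by field_simp, mul_assoc]
          gcongr
          rw [← div_eq_mul_inv, div_le_div_iff₀ (by positivity) (by positivity)]
          have : 1 ≤ 1 / δ ^ 2 * (u - t) ^ 2 := by
            rw [one_div, ← div_eq_inv_mul, one_le_div (by positivity)]; exact h5
          nlinarith
        have h7 : -(M * pitK l (u - t)) ≤ b t * pitK l (u - t) := by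
          have := (abs_le.1 (hM t)).1
          nlinarith
        have h8 : M * pitK l (u - t) ≤ A * (1 + (u - t) ^ 2)⁻¹ := by
          rw [hA, mul_assoc]; gcongr
        linarith
  refine le_trans ?_ hle
  rw [integral_sub hI2.integrableOn hI1.integrableOn, setIntegral_indicator measurableSet_Icc]
  have e1 : Ioi (0:ℝ) ∩ Icc (u - 1 / l) (u + 1 / l) = Icc (u - 1 / l) (u + 1 / l) := by
    apply inter_eq_right.2
    intro t ht
    simp only [mem_Ioi]
    linarith [ht.1]
  rw [e1, setIntegral_const]
  have e2 : volume.real (Icc (u - 1 / l) (u + 1 / l)) = 2 / l := by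
    rw [Real.volume_real_Icc_of_le (by linarith)]; ring
  rw [e2]
  have e3 : ∫ t in Ioi (0:ℝ), A * (1 + (u - t) ^ 2)⁻¹ ≤ A * Real.pi := by
    calc _ ≤ ∫ t : ℝ, A * (1 + (u - t) ^ 2)⁻¹ := by
          apply setIntegral_le_integral hI1
          filter_upwards with t
          simp only [Pi.zero_apply]
          positivity
      _ = A * Real.pi := by
          rw [integral_const_mul]
          congr 1
          rw [integral_sub_left_eq_self (fun t : ℝ => (1 + t ^ 2)⁻¹) volume u]
          exact integral_univ_inv_one_add_sq
  have e4 : (2 / l) • (η * (l / 2)) = η := by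
    rw [smul_eq_mul]; field_simp
  rw [e4]
  linarith

lemma pit_eventually {b : ℝ → ℝ} (hbm : Measurable b) {M : ℝ} (hM : ∀ t, |b t| ≤ M)
    (hconv : ∀ l : ℝ, 0 < l → Tendsto (fun u : ℝ => ∫ t in Ioi (0:ℝ), b t * pitK l (u - t)) atTop (𝓝 0))
    {δ η : ℝ} (hδ : 0 < δ) (hη : 0 < η) :
    ∀ᶠ u in atTop, ¬ ∀ t, |u - t| ≤ δ → η ≤ b t := by
  have hM0 : 0 ≤ M := (abs_nonneg _).trans (hM 0)
  obtain ⟨l, hl, hlδ, hlA⟩ : ∃ l : ℝ, 0 < l ∧ 1 / l ≤ δ ∧ M * (4 / l * (1 + 1 / δ ^ 2)) * Real.pi ≤ η / 2 := by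
    have h1 : Tendsto (fun l : ℝ => 1 / l) atTop (𝓝 0) := by simpa using tendsto_inv_atTop_zero (𝕜 := ℝ)
    have h2 : Tendsto (fun l : ℝ => M * (4 / l * (1 + 1 / δ ^ 2)) * Real.pi) atTop (𝓝 0) := by
      have := h1.const_mul (M * (4 * (1 + 1 / δ ^ 2)) * Real.pi)
      rw [mul_zero] at this
      apply this.congr
      intro l; ring
    obtain ⟨l, h⟩ := ((eventually_gt_atTop 0).and ((h1.eventually_le_const hδ).and
      (h2.eventually_le_const (half_pos hη)))).exists
    exact ⟨l, h.1, h.2.1, h.2.2⟩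
  filter_upwards [(hconv l hl).eventually_lt_const (half_pos hη), eventually_gt_atTop δ] with u hu1 hu2 hall
  have := pit_lower hbm hM hl hδ hη.le hlδ hu2 hall
  linarith

lemma pit_tauber {b : ℝ → ℝ} (hbm : Measurable b) {M : ℝ} (hM : ∀ t, |b t| ≤ M)
    {g : ℂ → ℂ} (hg : ∀ z : ℂ, 0 < z.re → ∫ t in Ioi (0:ℝ), (b t : ℂ) * cexp (-z * t) = g z)
    (hgc : ContinuousOn g {z | 0 ≤ z.re})
    (hmono : ∀ t t', t ≤ t' → (b t + 1) * Real.exp t ≤ (b t' + 1) * Real.exp t') :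
    Tendsto b atTop (𝓝 0) := by
  have hconv : ∀ l : ℝ, 0 < l → Tendsto (fun u : ℝ => ∫ t in Ioi (0:ℝ), b t * pitK l (u - t)) atTop (𝓝 0) :=
    fun l hl => pit_conv_zero hbm hM hg hgc hl
  have hconv' : ∀ l : ℝ, 0 < l → Tendsto (fun u : ℝ => ∫ t in Ioi (0:ℝ), (-b t) * pitK l (u - t)) atTop (𝓝 0) := by
    intro l hl
    have := (hconv l hl).neg
    rw [neg_zero] at this
    apply this.congr
    intro u
    rw [← integral_neg]
    simp
  rw [Metric.tendsto_nhds]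
  intro ε hε
  wlog hε1 : ε ≤ 1 generalizing ε
  · filter_upwards [this 1 one_pos le_rfl] with u hu
    exact hu.trans (not_le.1 hε1)
  -- choose δ
  obtain ⟨δ, hδ, hδ1⟩ : ∃ δ : ℝ, 0 < δ ∧ Real.exp (2 * δ) ≤ 1 + ε / 4 := by
    have : Tendsto (fun δ : ℝ => Real.exp (2 * δ)) (𝓝[>] 0) (𝓝 1) := by
      have h : Tendsto (fun δ : ℝ => Real.exp (2 * δ)) (𝓝 0) (𝓝 (Real.exp (2 * 0))) :=
        Continuous.tendsto (by fun_prop) _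
      simp only [mul_zero, Real.exp_zero] at h
      exact h.mono_left nhdsWithin_le_nhds
    obtain ⟨δ, h⟩ := ((this.eventually_le_const (show (1:ℝ) < 1 + ε / 4 by linarith)).and
      self_mem_nhdsWithin).exists
    exact ⟨δ, h.2, h.1⟩
  have hM' : ∀ t, |-b t| ≤ M := fun t => by rw [abs_neg]; exact hM t
  have E1 := pit_eventually hbm hM hconv hδ (show 0 < ε / 4 by linarith)
  have E2 := pit_eventually hbm.neg hM' hconv' hδ (show 0 < ε / 4 by linarith)
  have T1 : Tendsto (fun u : ℝ => u + δ) atTop atTop := tendsto_atTop_add_const_right _ _ tendsto_id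
  have T2 : Tendsto (fun u : ℝ => u - δ) atTop atTop := by
    simpa [sub_eq_add_neg] using tendsto_atTop_add_const_right atTop (-δ) (tendsto_id (α := ℝ))
  filter_upwards [T1.eventually E1, T2.eventually E2] with u h1 h2
  rw [dist_zero_right, Real.norm_eq_abs, abs_lt]
  have key : ∀ t t', t ≤ t' → t' - t ≤ 2 * δ → (b t + 1) ≤ (b t' + 1) * (1 + ε / 4) ∨ b t' + 1 ≤ 0 := by
    intro t t' h h'
    by_cases hn : b t' + 1 ≤ 0
    · exact Or.inr hn
    left
    push Not at hn
    have h3 := hmono t t' h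
    have h4 : b t + 1 ≤ (b t' + 1) * Real.exp (t' - t) := by
      rw [Real.exp_sub, ← mul_div_assoc, le_div_iff₀ (Real.exp_pos _)]; exact h3
    refine h4.trans ?_
    gcongr
    refine le_trans ?_ hδ1
    gcongr
  have hsgn : ∀ t t', t ≤ t' → b t' + 1 ≤ 0 → b t + 1 ≤ 0 := by
    intro t t' h hn
    have h3 := hmono t t' h
    have := Real.exp_pos t
    have := Real.exp_pos t'
    by_contra hcon
    push Not at hcon
    have : 0 < (b t + 1) * Real.exp t := by positivity
    have : (b t' + 1) * Real.exp t' ≤ 0 := mul_nonpos_of_nonpos_of_nonneg hn (by positivity)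
    linarith
  constructor
  · by_contra hcon
    push Not at hcon
    apply h2
    intro t ht
    change ε / 4 ≤ -b t
    rw [abs_le] at ht
    have ht1 : t ≤ u := by linarith
    rcases key t u ht1 (by linarith) with h | h
    · nlinarith
    · have := hsgn t u ht1 h
      linarith
  · by_contra hcon
    push Not at hcon
    apply h1
    intro t ht
    rw [abs_le] at ht
    have ht1 : u ≤ t := by linarith
    rcases key u t ht1 (by linarith) with h | h
    · nlinarith
    · have := hsgn u t ht1 h
      linarith

end


section
open Filter MeasureTheory Set Topology Complex

lemma pit_dirichlet {a : ℕ → ℝ} (ha : ∀ n, 0 ≤ a n) {B : ℝ}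
    (hB : ∀ n : ℕ, ∑ k ∈ Finset.Icc 1 n, a k ≤ B * n) {H : ℂ → ℂ}
    (hH : ContinuousOn H {s | 1 ≤ s.re})
    (hL : ∀ s : ℂ, 1 < s.re → LSeries (fun n => (a n : ℂ)) s = 1 / (s - 1) + H s) :
    Tendsto (fun n : ℕ => (∑ k ∈ Finset.Icc 1 n, a k) / n) atTop (𝓝 1) := by
  set S : ℝ → ℝ := fun x => ∑ k ∈ Finset.Icc 1 ⌊x⌋₊, a k with hS
  have hB0 : 0 ≤ B := by
    have := hB 1
    simp only [Finset.Icc_self, Finset.sum_singleton, Nat.cast_one, mul_one] at this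
    exact (ha 1).trans this
  have hS0 : ∀ x, 0 ≤ S x := fun x => Finset.sum_nonneg fun i _ => ha i
  have hSm : Monotone S := by
    intro x y hxy
    apply Finset.sum_le_sum_of_subset_of_nonneg
    · exact Finset.Icc_subset_Icc_right (Nat.floor_mono hxy)
    · intro i _ _; exact ha i
  have hSB : ∀ x, 0 ≤ x → S x ≤ B * x := by
    intro x hx
    refine (hB _).trans ?_
    gcongr
    exact Nat.floor_le hx
  set b : ℝ → ℝ := fun t => Real.exp (-t) * S (Real.exp t) - 1 with hb
  have hbm : Measurable b := by
    have h1 : Measurable S := hSm.measurable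
    fun_prop
  have hbb : ∀ t, b t + 1 = Real.exp (-t) * S (Real.exp t) := fun t => by simp [hb]
  have hbM : ∀ t, |b t| ≤ B + 1 := by
    intro t
    have h1 : Real.exp (-t) * S (Real.exp t) ≤ B := by
      calc _ ≤ Real.exp (-t) * (B * Real.exp t) := by
            gcongr; exact hSB _ (Real.exp_pos t).le
        _ = B * (Real.exp (-t) * Real.exp t) := by ring
        _ = B := by rw [← Real.exp_add]; simp
    have h2 : 0 ≤ Real.exp (-t) * S (Real.exp t) := mul_nonneg (Real.exp_pos _).le (hS0 _)
    rw [abs_le]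
    constructor <;> simp only [hb] <;> linarith
  have hmono : ∀ t t', t ≤ t' → (b t + 1) * Real.exp t ≤ (b t' + 1) * Real.exp t' := by
    intro t t' h
    have e : ∀ t, (b t + 1) * Real.exp t = S (Real.exp t) := by
      intro t
      rw [hbb, mul_right_comm, ← Real.exp_add]; simp
    rw [e, e]
    exact hSm (Real.exp_le_exp.2 h)
  have hO : (fun n : ℕ => ∑ k ∈ Finset.Icc 1 n, a k) =O[atTop] fun n => (n : ℝ) ^ (1:ℝ) := by
    apply Asymptotics.IsBigO.of_bound B
    filter_upwards with n
    rw [Real.rpow_one, Real.norm_of_nonneg (Finset.sum_nonneg fun i _ => ha i), Real.norm_natCast]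
    exact hB n
  set g : ℂ → ℂ := fun z => (H (1 + z) - 1) / (1 + z) with hgdef
  have hgc : ContinuousOn g {z | 0 ≤ z.re} := by
    have h1 : ContinuousOn (fun z => H (1 + z)) {z | 0 ≤ z.re} := by
      apply hH.comp (by fun_prop)
      intro z hz
      simp only [mem_ofPred_eq, add_re, one_re] at hz ⊢
      linarith
    apply ContinuousOn.div (h1.sub continuousOn_const) (by fun_prop)
    intro z hz h
    have := congrArg re h
    simp only [add_re, one_re, zero_re, mem_ofPred_eq] at this hz
    linarith
  have hg : ∀ z : ℂ, 0 < z.re → ∫ t in Ioi (0:ℝ), (b t : ℂ) * cexp (-z * t) = g z := by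
    intro z hz
    have hz0 : z ≠ 0 := by rintro rfl; simp at hz
    have hz1 : 1 + z ≠ 0 := by
      intro h
      have := congrArg re h
      simp only [add_re, one_re, zero_re] at this
      linarith
    have hI1 : IntegrableOn (fun t : ℝ => cexp (-z * t)) (Ioi 0) :=
      integrableOn_exp_mul_complex_Ioi (by simpa using hz) 0
    have hI2 : IntegrableOn (fun t : ℝ => (b t : ℂ) * cexp (-z * t)) (Ioi 0) := by
      apply Integrable.bdd_mul (c := B + 1) hI1
      · apply Measurable.aestronglyMeasurable; fun_prop
      · filter_upwards with t
        rw [norm_real]; exact hbM t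
    have h1 := LSeries_eq_mul_integral_of_nonneg a zero_le_one (s := 1 + z)
      (by simpa using hz) hO ha
    have h2 := integral_comp_exp_Ioi (fun t : ℝ => (∑ k ∈ Finset.Icc 1 ⌊t⌋₊, (a k : ℂ)) * (t : ℂ) ^ (-((1 + z) + 1))) 0
    rw [Real.exp_zero] at h2
    rw [← h2, hL _ (by simpa using hz)] at h1
    have h3 : ∀ t : ℝ, Real.exp t • ((∑ k ∈ Finset.Icc 1 ⌊Real.exp t⌋₊, (a k : ℂ)) * (Real.exp t : ℂ) ^ (-((1 + z) + 1)))
        = (b t : ℂ) * cexp (-z * t) + cexp (-z * t) := by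
      intro t
      have e1 : (∑ k ∈ Finset.Icc 1 ⌊Real.exp t⌋₊, (a k : ℂ)) = (S (Real.exp t) : ℂ) := by
        simp [hS]
      rw [e1]
      have e2 : ((Real.exp t : ℝ) : ℂ) ^ (-((1 + z) + 1)) = cexp (t * (-((1 + z) + 1))) := by
        rw [cpow_def_of_ne_zero (by exact_mod_cast (Real.exp_pos t).ne'), ← ofReal_log (Real.exp_pos t).le,
          Real.log_exp]
      rw [e2, real_smul]
      have e3 : (b t : ℂ) * cexp (-z * t) + cexp (-z * t) = ((b t + 1 : ℝ) : ℂ) * cexp (-z * t) := by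
        push_cast; ring
      rw [e3, hbb]
      push_cast
      have e4 : cexp t * cexp (t * (-((1 + z) + 1))) = cexp (-t) * cexp (-z * t) := by
        rw [← Complex.exp_add, ← Complex.exp_add]; congr 1; ring
      linear_combination (S (Real.exp t) : ℂ) * e4
    simp_rw [h3] at h1
    rw [integral_add hI2 hI1, integral_exp_mul_complex_Ioi (by simpa using hz)] at h1
    simp only [ofReal_zero, mul_zero, Complex.exp_zero] at h1
    rw [hgdef]
    field_simp
    have h4 : 1 + z - 1 = z := by ring
    rw [h4] at h1
    field_simp at h1
    apply mul_left_cancel₀ hz0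
    linear_combination -h1
  have hT := pit_tauber hbm hbM hg hgc hmono
  have hT2 : Tendsto (fun n : ℕ => b (Real.log n) + 1) atTop (𝓝 (0 + 1)) :=
    (hT.comp (Real.tendsto_log_atTop.comp tendsto_natCast_atTop_atTop)).add_const 1
  rw [zero_add] at hT2
  apply hT2.congr'
  filter_upwards [eventually_gt_atTop 0] with n hn
  have hn' : (0:ℝ) < n := by exact_mod_cast hn
  rw [hbb, Real.exp_neg, Real.exp_log hn', hS]
  simp only [Nat.floor_natCast]
  rw [inv_mul_eq_div]

end


section
open Filter MeasureTheory Set Topology Complex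

lemma lat_diff_integral {α : Type*} [MeasurableSpace α] {μ : Measure α} {U : Set ℂ} (hU : IsOpen U)
    {F : ℂ → α → ℂ} (hd : ∀ x, DifferentiableOn ℂ (fun s => F s x) U)
    (hm : ∀ s, AEStronglyMeasurable (F s) μ)
    (hb : ∀ s₀ ∈ U, ∃ r > 0, ∃ bound : α → ℝ, Integrable bound μ ∧
      ∀ s ∈ Metric.ball s₀ r, ∀ x, ‖F s x‖ ≤ bound x) :
    DifferentiableOn ℂ (fun s => ∫ x, F s x ∂μ) U := by
  intro s₀ hs₀
  apply DifferentiableAt.differentiableWithinAt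
  obtain ⟨r, hr, bound, hbi, hbd⟩ := hb s₀ hs₀
  obtain ⟨r', hr', hrU⟩ := Metric.isOpen_iff.1 hU s₀ hs₀
  set ρ := min r r' / 4 with hρ
  have hρ0 : 0 < ρ := by positivity
  have hρr : 4 * ρ ≤ r := by
    have := min_le_left r r'
    linarith
  have hρr' : 4 * ρ ≤ r' := by
    have := min_le_right r r'
    linarith
  have hdA : ∀ x, ∀ s ∈ Metric.ball s₀ (4 * ρ), DifferentiableAt ℂ (fun s => F s x) s := by
    intro x s hs
    have hsU : s ∈ U := hrU (Metric.ball_subset_ball hρr' hs)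
    exact (hd x s hsU).differentiableAt (hU.mem_nhds hsU)
  have hderiv : ∀ x, ∀ s ∈ Metric.ball s₀ ρ, HasDerivAt (fun s => F s x) (deriv (fun s => F s x) s) s := by
    intro x s hs
    exact (hdA x s (Metric.ball_subset_ball (by linarith) hs)).hasDerivAt
  have hbound : ∀ x, ∀ s ∈ Metric.ball s₀ ρ, ‖deriv (fun s => F s x) s‖ ≤ bound x / ρ := by
    intro x s hs
    have hsub : Metric.closedBall s ρ ⊆ Metric.ball s₀ (4 * ρ) := by
      intro z hz
      rw [Metric.mem_closedBall] at hz
      rw [Metric.mem_ball] at hs ⊢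
      linarith [dist_triangle z s s₀]
    apply norm_deriv_le_of_forall_mem_sphere_norm_le hρ0
    · apply DifferentiableOn.diffContOnCl
      intro z hz
      rw [closure_ball _ hρ0.ne'] at hz
      exact (hdA x z (hsub hz)).differentiableWithinAt
    · intro z hz
      apply hbd z
      exact Metric.ball_subset_ball hρr (hsub (Metric.sphere_subset_closedBall hz))
  have hs₀b : s₀ ∈ Metric.ball s₀ ρ := Metric.mem_ball_self hρ0
  have hmeas : AEStronglyMeasurable (fun x => deriv (fun s => F s x) s₀) μ := by
    have ht : ∀ᵐ x ∂μ, Tendsto (fun n : ℕ => ((1 : ℂ) / (n + 1))⁻¹ • (F (s₀ + 1 / (n + 1)) x - F s₀ x))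
        atTop (𝓝 (deriv (fun s => F s x) s₀)) := by
      filter_upwards with x
      have h := (hderiv x s₀ hs₀b).tendsto_slope_zero
      apply h.comp
      rw [tendsto_nhdsWithin_iff]
      refine ⟨tendsto_one_div_add_atTop_nhds_zero_nat, ?_⟩
      filter_upwards with n
      have : (n : ℂ) + 1 ≠ 0 := by exact_mod_cast Nat.succ_ne_zero n
      simpa using this
    refine aestronglyMeasurable_of_tendsto_ae atTop (fun n => ?_) ht
    exact ((hm (s₀ + 1 / (n + 1))).sub (hm s₀)).const_smul (((1 : ℂ) / (n + 1))⁻¹)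
  have hIntgr : Integrable (F s₀) μ := by
    apply hbi.mono' (hm s₀)
    filter_upwards with x
    exact hbd s₀ (Metric.mem_ball_self hr) x
  exact (hasDerivAt_integral_of_dominated_loc_of_deriv_le (F := F) (bound := fun x => bound x / ρ)
    (F' := fun s x => deriv (fun s => F s x) s)
    (Metric.ball_mem_nhds s₀ hρ0) (Eventually.of_forall hm) hIntgr hmeas
    (Eventually.of_forall fun x s hs => hbound x s hs) (hbi.div_const ρ)
    (Eventually.of_forall fun x s hs => hderiv x s hs)).2.differentiableAt

/-- logarithm of the truncated norm -/
noncomputable def latLog {E : Type*} (nm : E → ℝ) (x : E) : ℝ := Real.log (max (nm x) 1)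

/-- the test function -/
noncomputable def latG {E : Type*} (nm g : E → ℝ) (s : ℂ) (x : E) : ℂ := g x * cexp (-s * latLog nm x)

lemma latLog_nonneg {E : Type*} (nm : E → ℝ) (x : E) : 0 ≤ latLog nm x :=
  Real.log_nonneg (le_max_right _ _)

lemma latLog_lip {E : Type*} (nm : E → ℝ) {x y : E} (hx : 0 < nm x) (hy : 0 < nm y) :
    |latLog nm x - latLog nm y| ≤ |Real.log (nm x) - Real.log (nm y)| := by
  have h : ∀ z, 0 < nm z → latLog nm z = max (Real.log (nm z)) 0 := by
    intro z hz
    rw [latLog]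
    rcases le_total (nm z) 1 with h | h
    · rw [max_eq_right h, Real.log_one, max_eq_right (Real.log_nonpos hz.le h)]
    · rw [max_eq_left h, max_eq_left (Real.log_nonneg h)]
  rw [h x hx, h y hy]
  exact abs_max_sub_max_le_abs _ _ _

lemma latG_norm {E : Type*} (nm : E → ℝ) {g : E → ℝ} (hg0 : ∀ x, 0 ≤ g x) (s : ℂ) (x : E) :
    ‖latG nm g s x‖ = g x * Real.exp (-s.re * latLog nm x) := by
  rw [latG, norm_mul, norm_real, Real.norm_of_nonneg (hg0 x), Complex.norm_exp]
  simp

lemma latG_est {E : Type*} [NormedAddCommGroup E] {nm g : E → ℝ} {N : ℕ} {κ : ℝ} (hκ : 0 < κ)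
    (hg0 : ∀ x, 0 ≤ g x) (hg1 : ∀ x, g x ≤ 1) (hgκ : ∀ x, g x ≠ 0 → κ * ‖x‖ ^ N ≤ nm x)
    {C S σ₀ : ℝ} (hC : 0 ≤ C) (hσ : 0 ≤ σ₀) {x y : E} (hx : 1 ≤ ‖x‖) (hgx : g x ≠ 0)
    (hy : 0 < nm y) (h1 : |Real.log (nm x) - Real.log (nm y)| ≤ C / ‖x‖)
    (h2 : |g x - g y| ≤ C / ‖x‖) {s : ℂ} (hs : ‖s‖ ≤ S) (hs' : σ₀ ≤ s.re) :
    ‖latG nm g s x - latG nm g s y‖ ≤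
      (C + S * C * Real.exp (S * C)) * κ ^ (-σ₀) * ‖x‖ ^ (-(N * σ₀ + 1)) := by
  have hS : 0 ≤ S := (norm_nonneg s).trans hs
  have hx0 : 0 < ‖x‖ := by linarith
  have hnx : 0 < nm x := lt_of_lt_of_le (by positivity) (hgκ x hgx)
  have hl : |latLog nm x - latLog nm y| ≤ C / ‖x‖ := (latLog_lip nm hnx hy).trans h1
  have e1 : latG nm g s x - latG nm g s y =
      cexp (-s * latLog nm x) * (((g x - g y : ℝ) : ℂ) +
        g y * (1 - cexp (s * (latLog nm x - latLog nm y)))) := by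
    have : cexp (-s * latLog nm y) = cexp (-s * latLog nm x) * cexp (s * (latLog nm x - latLog nm y)) := by
      rw [← Complex.exp_add]; congr 1; ring
    rw [latG, latG, this]; push_cast; ring
  have e2 : ‖cexp (-s * latLog nm x)‖ ≤ κ ^ (-σ₀) * ‖x‖ ^ (-(N * σ₀)) := by
    rw [Complex.norm_exp]
    have h3 : (-s * (latLog nm x : ℂ)).re = -s.re * latLog nm x := by simp
    rw [h3]
    have h4 : -s.re * latLog nm x ≤ -σ₀ * Real.log (κ * ‖x‖ ^ N) := by
      have h5 : Real.log (κ * ‖x‖ ^ N) ≤ latLog nm x := by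
        apply Real.log_le_log (by positivity)
        exact (hgκ x hgx).trans (le_max_left _ _)
      have h6 := latLog_nonneg nm x
      nlinarith
    refine (Real.exp_le_exp.2 h4).trans (le_of_eq ?_)
    rw [mul_comm (-σ₀), ← Real.rpow_def_of_pos (by positivity), Real.mul_rpow hκ.le (by positivity),
      ← Real.rpow_natCast, ← Real.rpow_mul hx0.le]
    congr 2; ring
  have e3 : ‖1 - cexp (s * (latLog nm x - latLog nm y))‖ ≤ S * C * Real.exp (S * C) / ‖x‖ := by
    set w := s * ((latLog nm x : ℂ) - latLog nm y) with hw
    have hwn : ‖w‖ ≤ S * (C / ‖x‖) := by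
      rw [hw, norm_mul, ← ofReal_sub, norm_real]
      gcongr
      exact hl
    have hw2 : ‖w‖ ≤ S * C := by
      refine hwn.trans ?_
      gcongr
      exact div_le_self hC hx
    rw [norm_sub_rev]
    have h3 : ‖cexp w - 1‖ ≤ ‖w‖ * Real.exp ‖w‖ := by
      simpa using Complex.norm_exp_sub_sum_le_norm_mul_exp w 1
    calc _ ≤ ‖w‖ * Real.exp ‖w‖ := h3
      _ ≤ (S * (C / ‖x‖)) * Real.exp (S * C) := by gcongr
      _ = _ := by ring
  rw [e1, norm_mul]
  have e4 : ‖((g x - g y : ℝ) : ℂ) + g y * (1 - cexp (s * (latLog nm x - latLog nm y)))‖ ≤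
      (C + S * C * Real.exp (S * C)) * ‖x‖⁻¹ := by
    refine (norm_add_le _ _).trans ?_
    rw [norm_real, norm_mul, norm_real, Real.norm_of_nonneg (hg0 y), Real.norm_eq_abs]
    have : g y * ‖1 - cexp (s * (latLog nm x - latLog nm y))‖ ≤ 1 * (S * C * Real.exp (S * C) / ‖x‖) := by
      gcongr
      exact hg1 y
    calc _ ≤ C / ‖x‖ + 1 * (S * C * Real.exp (S * C) / ‖x‖) := add_le_add h2 this
      _ = _ := by ring
  calc _ ≤ (κ ^ (-σ₀) * ‖x‖ ^ (-(N * σ₀))) * ((C + S * C * Real.exp (S * C)) * ‖x‖⁻¹) := by gcongr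
    _ = (C + S * C * Real.exp (S * C)) * κ ^ (-σ₀) * (‖x‖ ^ (-(N * σ₀)) * ‖x‖⁻¹) := by ring
    _ = _ := by
      congr 1
      rw [neg_add, Real.rpow_add hx0, Real.rpow_neg_one]

end


section
open Filter MeasureTheory Set Topology Complex

/-- local regularity of the pair (norm, weight) -/
def LatLoc {E : Type*} [NormedAddCommGroup E] (nm g : E → ℝ) : Prop :=
  ∀ D : ℝ, ∃ C R : ℝ, ∀ x y : E, R ≤ ‖x‖ → ‖x - y‖ ≤ D → g x ≠ 0 →
    0 < nm y ∧ |Real.log (nm x) - Real.log (nm y)| ≤ C / ‖x‖ ∧ |g x - g y| ≤ C / ‖x‖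

lemma latG_norm_le_one {E : Type*} (nm : E → ℝ) {g : E → ℝ} (hg0 : ∀ x, 0 ≤ g x)
    (hg1 : ∀ x, g x ≤ 1) {s : ℂ} (hs : 0 ≤ s.re) (x : E) : ‖latG nm g s x‖ ≤ 1 := by
  rw [latG_norm nm hg0]
  have h1 : Real.exp (-s.re * latLog nm x) ≤ 1 := by
    rw [Real.exp_le_one_iff]
    have := latLog_nonneg nm x
    nlinarith
  calc _ ≤ (1:ℝ) * 1 := mul_le_mul (hg1 x) h1 (Real.exp_pos _).le zero_le_one
    _ = 1 := one_mul 1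

lemma latG_bound {E : Type*} [NormedAddCommGroup E] {nm g : E → ℝ} {N : ℕ} {κ : ℝ} (hκ : 0 < κ)
    (hg0 : ∀ x, 0 ≤ g x) (hg1 : ∀ x, g x ≤ 1) (hgκ : ∀ x, g x ≠ 0 → κ * ‖x‖ ^ N ≤ nm x)
    (hloc : LatLoc nm g) (D S σ₀ : ℝ) (hD : 0 ≤ D) (hS : 0 ≤ S) (hσ : 0 ≤ σ₀) :
    ∃ C' : ℝ, ∀ s : ℂ, ‖s‖ ≤ S → σ₀ ≤ s.re → ∀ x y : E, ‖x - y‖ ≤ D →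
      ‖latG nm g s x - latG nm g s y‖ ≤ C' * (1 + ‖x‖) ^ (-(N * σ₀ + 1)) := by
  obtain ⟨C, R, hCR⟩ := hloc D
  set C₁ := max C 0
  have hC₁ : 0 ≤ C₁ := le_max_right _ _
  set R₁ := max R 1
  have hR₁ : 1 ≤ R₁ := le_max_right _ _
  set r : ℝ := N * σ₀ + 1 with hr
  have hr0 : 0 ≤ r := by positivity
  set K := (C₁ + S * C₁ * Real.exp (S * C₁)) * κ ^ (-σ₀) with hK
  have hK0 : 0 ≤ K := by positivity
  have key : ∀ s : ℂ, ‖s‖ ≤ S → σ₀ ≤ s.re → ∀ x y : E, R₁ ≤ ‖x‖ → ‖x - y‖ ≤ D → g x ≠ 0 →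
      ‖latG nm g s x - latG nm g s y‖ ≤ K * ‖x‖ ^ (-r) := by
    intro s hs hs' x y hx hxy hgx
    have hx1 : 1 ≤ ‖x‖ := hR₁.trans hx
    obtain ⟨h1, h2, h3⟩ := hCR x y ((le_max_left _ _).trans hx) hxy hgx
    have hCC : C / ‖x‖ ≤ C₁ / ‖x‖ := by gcongr; exact le_max_left _ _
    exact latG_est hκ hg0 hg1 hgκ hC₁ hσ hx1 hgx h1 (h2.trans hCC) (h3.trans hCC) hs hs'
  set R₂ := 2 * R₁ + 2 * D + 1 with hR₂
  have hR₂0 : 0 ≤ R₂ := by linarith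
  refine ⟨K * 4 ^ r + 2 * (1 + R₂) ^ r, ?_⟩
  intro s hs hs' x y hxy
  have hp : 0 < (1 + ‖x‖) ^ (-r) := by positivity
  have hA : 0 ≤ K * 4 ^ r := by positivity
  have hB : 0 ≤ 2 * (1 + R₂) ^ r := by positivity
  rcases lt_or_ge ‖x‖ R₂ with hlt | hge
  · have h1 : ‖latG nm g s x - latG nm g s y‖ ≤ 2 := by
      have a1 := latG_norm_le_one nm hg0 hg1 (hσ.trans hs') x
      have a2 := latG_norm_le_one nm hg0 hg1 (hσ.trans hs') y
      linarith [norm_sub_le (latG nm g s x) (latG nm g s y)]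
    have h2 : 1 ≤ (1 + R₂) ^ r * (1 + ‖x‖) ^ (-r) := by
      rw [Real.rpow_neg (by positivity), ← div_eq_mul_inv, one_le_div (by positivity)]
      gcongr
    nlinarith
  · have hz : ∀ z : E, (1 + ‖x‖) / 4 ≤ ‖z‖ → K * ‖z‖ ^ (-r) ≤ K * 4 ^ r * (1 + ‖x‖) ^ (-r) := by
      intro z hz
      have h1 : ‖z‖ ^ (-r) ≤ ((1 + ‖x‖) / 4) ^ (-r) :=
        Real.rpow_le_rpow_of_nonpos (by positivity) hz (by linarith)
      have h2 : ((1 + ‖x‖) / 4) ^ (-r) = 4 ^ r * (1 + ‖x‖) ^ (-r) := by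
        rw [Real.div_rpow (by positivity) (by norm_num), Real.rpow_neg (by norm_num : (0:ℝ) ≤ 4)]
        rw [div_inv_eq_mul, mul_comm]
      rw [mul_assoc K, ← h2]
      gcongr
    by_cases hgx : g x ≠ 0
    · have h1 := key s hs hs' x y (by linarith) hxy hgx
      have h2 := hz x (by linarith)
      nlinarith
    · push Not at hgx
      by_cases hgy : g y ≠ 0
      · have hny : ‖x‖ - D ≤ ‖y‖ := by
          have := norm_sub_norm_le x y
          linarith
        have h1 := key s hs hs' y x (by linarith) (by rwa [norm_sub_rev]) hgy
        rw [norm_sub_rev] at h1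
        have h2 := hz y (by linarith)
        nlinarith
      · push Not at hgy
        simp only [latG, hgx, hgy]
        simp
        positivity

section main
variable {E : Type*} [NormedAddCommGroup E] [NormedSpace ℝ E] [MeasurableSpace E]
  [BorelSpace E] [FiniteDimensional ℝ E] (μ : Measure E) [μ.IsAddHaarMeasure]
  {nm g : E → ℝ}

set_option linter.unusedSectionVars false in
lemma latG_measurable (hnm : Measurable nm) (hg : Measurable g) (s : ℂ) : Measurable (latG nm g s) := by
  unfold latG latLog
  fun_prop

lemma lat_level_integrable {N : ℕ} (hN : N ≠ 0) {κ : ℝ} (hκ : 0 < κ) (hnm : Measurable nm)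
    (hg : Measurable g)
    (hg0 : ∀ x, 0 ≤ g x) (hg1 : ∀ x, g x ≤ 1) (hgκ : ∀ x, g x ≠ 0 → κ * ‖x‖ ^ N ≤ nm x) (t : ℝ) :
    Integrable (fun x => if nm x < t then g x else 0) μ := by
  obtain ⟨R, hR⟩ : ∃ R : ℝ, ∀ x, nm x < t → g x ≠ 0 → ‖x‖ ≤ R := by
    refine ⟨max 1 (t / κ), ?_⟩
    intro x hx hgx
    by_contra hcon
    push Not at hcon
    have h1 : 1 < ‖x‖ := (le_max_left _ _).trans_lt hcon
    have h2 : t / κ < ‖x‖ := (le_max_right _ _).trans_lt hcon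
    have h3 : ‖x‖ ≤ ‖x‖ ^ N := le_self_pow₀ h1.le hN
    have h4 := hgκ x hgx
    rw [div_lt_iff₀ hκ] at h2
    nlinarith
  have hI : Integrable ((Metric.closedBall (0:E) R).indicator fun _ => (1:ℝ)) μ := by
    rw [integrable_indicator_iff measurableSet_closedBall]
    exact integrableOn_const (isCompact_closedBall (0:E) R).measure_lt_top.ne
  apply hI.mono'
  · apply Measurable.aestronglyMeasurable
    exact Measurable.ite (measurableSet_lt hnm measurable_const) hg measurable_const
  · filter_upwards with x
    split_ifs with h
    · by_cases hgx : g x = 0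
      · rw [hgx, norm_zero]
        apply indicator_nonneg
        intros; exact zero_le_one
      · rw [indicator_of_mem (by simpa using hR x h hgx), Real.norm_of_nonneg (hg0 x)]
        exact hg1 x
    · rw [norm_zero]
      apply indicator_nonneg
      intros; exact zero_le_one

lemma lat_level {N : ℕ} (hN : N ≠ 0) (hNE : Module.finrank ℝ E = N)
    (hnms : ∀ r : ℝ, 0 < r → ∀ x, nm (r • x) = r ^ N * nm x)
    (hgs : ∀ r : ℝ, 0 < r → ∀ x, g (r • x) = g x) {t : ℝ} (ht : 0 < t) :
    ∫ x, (if nm x < t then g x else 0) ∂μ = t * ∫ x, (if nm x < 1 then g x else 0) ∂μ := by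
  have h := Measure.integral_comp_smul μ (fun x => if nm x < t then g x else 0) (t ^ ((1:ℝ) / N))
  have hR : 0 < t ^ ((1:ℝ) / N) := by positivity
  have hRN : (t ^ ((1:ℝ) / N)) ^ N = t := by
    rw [← Real.rpow_natCast, ← Real.rpow_mul ht.le]
    rw [one_div_mul_cancel (by exact_mod_cast hN), Real.rpow_one]
  rw [hNE, hRN, abs_of_pos (by positivity), smul_eq_mul] at h
  have h2 : ∀ x, (if nm ((t ^ ((1:ℝ) / N)) • x) < t then g ((t ^ ((1:ℝ) / N)) • x) else 0)
      = if nm x < 1 then g x else 0 := by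
    intro x
    rw [hnms _ hR, hgs _ hR, hRN]
    have : t * nm x < t ↔ nm x < 1 := by
      constructor
      · intro h; nlinarith
      · intro h; nlinarith
    simp only [this]
  simp_rw [h2] at h
  rw [h]
  field_simp

lemma latG_integral {N : ℕ} (hN : N ≠ 0) (hNE : Module.finrank ℝ E = N) {κ : ℝ} (hκ : 0 < κ)
    (hnm : Measurable nm) (hg : Measurable g)
    (hg0 : ∀ x, 0 ≤ g x) (hg1 : ∀ x, g x ≤ 1) (hgκ : ∀ x, g x ≠ 0 → κ * ‖x‖ ^ N ≤ nm x)
    (hnms : ∀ r : ℝ, 0 < r → ∀ x, nm (r • x) = r ^ N * nm x)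
    (hgs : ∀ r : ℝ, 0 < r → ∀ x, g (r • x) = g x) {s : ℂ} (hs : 1 < s.re) :
    Integrable (latG nm g s) μ ∧
      ∫ x, latG nm g s x ∂μ = s / (s - 1) * ((∫ x, (if nm x < 1 then g x else 0) ∂μ : ℝ) : ℂ) := by
  set V := ∫ x, (if nm x < 1 then g x else 0) ∂μ with hV
  set f : E → ℝ → ℂ := fun x t => ((if nm x < t then g x else 0 : ℝ) : ℂ) * (t : ℂ) ^ (-s - 1) with hf
  set ν := (volume : Measure ℝ).restrict (Ioi 1) with hν
  have hs0 : s ≠ 0 := by rintro rfl; simp at hs; linarith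
  have hs1 : s - 1 ≠ 0 := by
    intro h
    have := congrArg re h
    simp at this; linarith
  have hfm : Measurable (Function.uncurry f) := by
    have h1 : Measurable fun p : E × ℝ => (if nm p.1 < p.2 then g p.1 else 0 : ℝ) :=
      Measurable.ite (measurableSet_lt (hnm.comp measurable_fst) measurable_snd)
        (hg.comp measurable_fst) measurable_const
    simp only [hf, Function.uncurry_def]
    fun_prop
  have hnorm : ∀ t : ℝ, t ∈ Ioi (1:ℝ) → ∀ x, ‖f x t‖ = (if nm x < t then g x else 0) * t ^ (-s.re - 1) := by
    intro t ht x
    have ht0 : 0 < t := lt_trans one_pos ht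
    rw [hf, norm_mul, norm_real, norm_cpow_eq_rpow_re_of_pos ht0, Real.norm_of_nonneg]
    · simp
    · split_ifs
      · exact hg0 x
      · rfl
  have hIntgr : Integrable (Function.uncurry f) (μ.prod ν) := by
    rw [integrable_prod_iff' hfm.aestronglyMeasurable]
    constructor
    · filter_upwards with t
      have h0 : Integrable (fun x => ((if nm x < t then g x else 0 : ℝ) : ℂ)) μ :=
        (lat_level_integrable μ hN hκ hnm hg hg0 hg1 hgκ t).ofReal (𝕜 := ℂ)
      exact h0.mul_const ((t : ℂ) ^ (-s - 1))
    · have h1 : IntegrableOn (fun t : ℝ => V * t ^ (-s.re)) (Ioi 1) :=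
        (integrableOn_Ioi_rpow_of_lt (by linarith) one_pos).const_mul V
      apply Integrable.congr h1
      filter_upwards [self_mem_ae_restrict measurableSet_Ioi] with t ht
      have ht0 : 0 < t := lt_trans one_pos ht
      simp only [Function.uncurry_apply_pair]
      simp_rw [hnorm t ht]
      rw [integral_mul_const, lat_level μ hN hNE hnms hgs ht0, ← hV]
      rw [Real.rpow_sub_one ht0.ne']
      field_simp
  have hinner : ∀ x, ∫ t, f x t ∂ν = s⁻¹ * latG nm g s x := by
    intro x
    have e1 : ∀ t, f x t = (Ioi (nm x)).indicator (fun t : ℝ => (g x : ℂ) * (t : ℂ) ^ (-s - 1)) t := by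
      intro t
      simp only [hf, indicator, mem_Ioi]
      split_ifs <;> simp
    simp_rw [e1]
    rw [integral_indicator measurableSet_Ioi, hν, Measure.restrict_restrict measurableSet_Ioi,
      Ioi_inter_Ioi, integral_const_mul]
    have hm : 0 < max (nm x) 1 := lt_of_lt_of_le one_pos (le_max_right _ _)
    have e2 : nm x ⊔ 1 = max (nm x) 1 := rfl
    rw [e2, integral_Ioi_cpow_of_lt (by simp; linarith) hm]
    have e3 : -s - 1 + 1 = -s := by ring
    rw [e3, latG, latLog, cpow_def_of_ne_zero (by exact_mod_cast hm.ne'), ← ofReal_log hm.le,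
      mul_comm _ (-s), neg_div_neg_eq]
    field_simp
  have hGi : Integrable (latG nm g s) μ := by
    have h1 := hIntgr.integral_prod_left
    simp only [Function.uncurry_apply_pair, hinner] at h1
    have h2 := h1.const_mul s
    refine h2.congr ?_
    filter_upwards with x
    field_simp
  refine ⟨hGi, ?_⟩
  have hsw := integral_integral_swap hIntgr
  simp_rw [hinner] at hsw
  rw [integral_const_mul] at hsw
  have h3 : ∫ t, ∫ x, f x t ∂μ ∂ν = ∫ t in Ioi (1:ℝ), (V : ℂ) * (t : ℂ) ^ (-s) := by
    rw [hν]
    apply setIntegral_congr_fun measurableSet_Ioi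
    intro t ht
    have ht0 : 0 < t := lt_trans one_pos ht
    simp only [hf]
    rw [integral_mul_const, integral_complex_ofReal, lat_level μ hN hNE hnms hgs ht0, ← hV]
    have : (t : ℂ) ^ (-s) = t * (t : ℂ) ^ (-s - 1) := by
      have htc : (t : ℂ) ≠ 0 := by exact_mod_cast ht0.ne'
      rw [cpow_sub _ _ htc, cpow_one]
      field_simp
    rw [this]; push_cast; ring
  rw [h3, integral_const_mul, integral_Ioi_cpow_of_lt (by simpa using hs) one_pos] at hsw
  have h4 : -s + 1 ≠ 0 := by
    intro h; apply hs1; linear_combination -h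
  rw [ofReal_one, one_cpow] at hsw
  field_simp at hsw
  field_simp
  linear_combination -hsw
end main
end


section
open Filter MeasureTheory Set Topology Complex

theorem lat_main {E : Type*} [NormedAddCommGroup E] [NormedSpace ℝ E] [MeasurableSpace E]
    [BorelSpace E] [FiniteDimensional ℝ E] (μ : Measure E) [μ.IsAddHaarMeasure]
    {nm g : E → ℝ} {N : ℕ} (hN : N ≠ 0) (hNE : Module.finrank ℝ E = N) {κ : ℝ} (hκ : 0 < κ)
    (hnm : Measurable nm) (hg : Measurable g)
    (hg0 : ∀ x, 0 ≤ g x) (hg1 : ∀ x, g x ≤ 1) (hgκ : ∀ x, g x ≠ 0 → κ * ‖x‖ ^ N ≤ nm x)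
    (hnms : ∀ r : ℝ, 0 < r → ∀ x, nm (r • x) = r ^ N * nm x)
    (hgs : ∀ r : ℝ, 0 < r → ∀ x, g (r • x) = g x) (hloc : LatLoc nm g)
    {ι : Type*} [Fintype ι] (b : Module.Basis ι ℝ E) :
    ∃ Φ : ℂ → ℂ, DifferentiableOn ℂ Φ {s | 1 - 1 / (N : ℝ) < s.re} ∧
      ∀ s : ℂ, 1 < s.re →
        Summable (fun a : Submodule.span ℤ (Set.range b) => latG nm g s (a : E)) ∧
        (s - 1) * ∑' a : Submodule.span ℤ (Set.range b), latG nm g s (a : E) = Φ s := by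
  have hN0 : (0:ℝ) < N := by exact_mod_cast Nat.pos_of_ne_zero hN
  have hN1 : (1:ℝ) ≤ N := by exact_mod_cast Nat.one_le_iff_ne_zero.2 hN
  set U : Set ℂ := {s | 1 - 1 / (N : ℝ) < s.re} with hU
  have hUo : IsOpen U := isOpen_lt continuous_const continuous_re
  set fl : E → E := fun x => (ZSpan.floor b x : E) with hfl
  set D := ∑ i, ‖b i‖ with hD
  have hD0 : 0 ≤ D := Finset.sum_nonneg fun i _ => norm_nonneg _
  have hxfl : ∀ x, ‖x - fl x‖ ≤ D := fun x => ZSpan.norm_fract_le b x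
  have hflm : Measurable fl := by
    have e : ∀ x, fl x = ∑ i, ((⌊b.coord i x⌋ : ℤ) : ℝ) • b i := by
      intro x
      simp only [hfl, ZSpan.floor]
      push_cast
      apply Finset.sum_congr rfl
      intro i _
      simp [Int.cast_smul_eq_zsmul]
    have e' : fl = fun x => ∑ i, ((⌊b.coord i x⌋ : ℤ) : ℝ) • b i := funext e
    rw [e']
    apply Finset.measurable_fun_sum
    intro i _
    apply Measurable.smul_const
    have h1 : Measurable (fun x => b.coord i x) :=
      (LinearMap.continuous_of_finiteDimensional (b.coord i)).measurable
    exact (measurable_from_top (f := fun n : ℤ => (n : ℝ))).comp h1.floor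
  set Fd : ℂ → E → ℂ := fun s x => latG nm g s x - latG nm g s (fl x) with hFd
  have hFm : ∀ s, AEStronglyMeasurable (Fd s) μ := by
    intro s
    have h1 := latG_measurable hnm hg s
    exact (h1.sub (h1.comp hflm)).aestronglyMeasurable
  have hbd : ∀ s₀ ∈ U, ∃ r > 0, ∃ bound : E → ℝ, Integrable bound μ ∧
      ∀ s ∈ Metric.ball s₀ r, ∀ x, ‖Fd s x‖ ≤ bound x := by
    intro s₀ hs₀
    rw [hU, mem_ofPred_eq] at hs₀
    set δ := (s₀.re - (1 - 1 / (N:ℝ))) / 2 with hδ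
    have hδ0 : 0 < δ := by rw [hδ]; linarith
    have hN2 : 1 / (N:ℝ) ≤ 1 := by rw [div_le_one hN0]; exact hN1
    have hσ0 : 0 ≤ s₀.re - δ := by linarith
    obtain ⟨C', hC'⟩ := latG_bound (N := N) hκ hg0 hg1 hgκ hloc D (‖s₀‖ + δ) (s₀.re - δ) hD0
      (by positivity) hσ0
    refine ⟨δ, hδ0, fun x => C' * (1 + ‖x‖) ^ (-(N * (s₀.re - δ) + 1)), ?_, ?_⟩
    · apply Integrable.const_mul
      apply integrable_one_add_norm
      rw [hNE]
      have : 1 - 1 / (N:ℝ) < s₀.re - δ := by linarith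
      have h2 : N * (1 - 1 / (N:ℝ)) < N * (s₀.re - δ) := by gcongr
      have h3 : N * (1 - 1 / (N:ℝ)) = N - 1 := by field_simp
      linarith
    · intro s hs x
      rw [Metric.mem_ball, dist_eq_norm] at hs
      apply hC' s
      · have := norm_sub_norm_le s s₀
        linarith
      · have h1 : |(s - s₀).re| ≤ ‖s - s₀‖ := abs_re_le_norm _
        rw [sub_re] at h1
        have := (abs_le.1 h1).1
        linarith
      · exact hxfl x
  have hdiff : DifferentiableOn ℂ (fun s => ∫ x, Fd s x ∂μ) U := by
    apply lat_diff_integral hUo _ hFm hbd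
    intro x
    have : Differentiable ℂ (fun s => Fd s x) := by
      simp only [hFd, latG]
      fun_prop
    exact this.differentiableOn
  set V : ℝ := ∫ x, (if nm x < 1 then g x else 0) ∂μ
  set F := ZSpan.fundamentalDomain b with hF
  set v : ℝ := μ.real F with hv
  have hv0 : v ≠ 0 := by
    rw [hv, Measure.real, ENNReal.toReal_ne_zero]
    refine ⟨ZSpan.measure_fundamentalDomain_ne_zero b, ?_⟩
    exact (ZSpan.fundamentalDomain_isBounded b).measure_lt_top.ne
  refine ⟨fun s => (s * V - (s - 1) * ∫ x, Fd s x ∂μ) / v, ?_, ?_⟩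
  · apply DifferentiableOn.div_const
    apply DifferentiableOn.sub
    · fun_prop
    · exact DifferentiableOn.mul (by fun_prop) hdiff
  intro s hs
  have hs1 : s - 1 ≠ 0 := by
    intro h
    have := congrArg re h
    simp at this; linarith
  obtain ⟨hI1, hI2⟩ := latG_integral μ hN hNE hκ hnm hg hg0 hg1 hgκ hnms hgs hs
  have hsU : s ∈ U := by
    rw [hU, mem_ofPred_eq]
    have : 0 < 1 / (N:ℝ) := by positivity
    linarith
  have hFi : Integrable (Fd s) μ := by
    obtain ⟨r, hr, bound, hb1, hb2⟩ := hbd s hsU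
    apply hb1.mono' (hFm s)
    filter_upwards with x
    exact hb2 s (Metric.mem_ball_self hr) x
  have hI3 : Integrable (fun x => latG nm g s (fl x)) μ := by
    have := hI1.sub hFi
    refine this.congr ?_
    filter_upwards with x
    simp [hFd]
  set P : Submodule.span ℤ (Set.range b) → Set E := fun a => {x | ZSpan.floor b x = a} with hP
  have hPpre : ∀ a, P a = (fun x => x - (a : E)) ⁻¹' F := by
    intro a
    ext x
    have := ZSpan.vadd_mem_fundamentalDomain b (-a) x
    rw [neg_inj] at this
    have e : -a +ᵥ x = x - (a : E) := by
      rw [Submodule.vadd_def, vadd_eq_add]; push_cast; abel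
    rw [e] at this
    simp only [hP, mem_ofPred_eq, mem_preimage]
    rw [this]
    exact eq_comm
  have hPm : ∀ a, MeasurableSet (P a) := by
    intro a
    rw [hPpre]
    exact (ZSpan.fundamentalDomain_measurableSet b).preimage (by fun_prop)
  have hPv : ∀ a, μ.real (P a) = v := by
    intro a
    simp only [hPpre, hv, Measure.real, sub_eq_add_neg, measure_preimage_add_right]
  have hPd : Pairwise (Function.onFun Disjoint P) := by
    intro a a' haa
    rw [Function.onFun, Set.disjoint_left]
    intro x hx hx'
    exact haa (hx.symm.trans hx')
  have hPu : (⋃ a, P a) = univ := by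
    rw [eq_univ_iff_forall]
    intro x
    exact mem_iUnion.2 ⟨ZSpan.floor b x, rfl⟩
  have hsum := hasSum_integral_iUnion hPm hPd (f := fun x => latG nm g s (fl x)) (μ := μ)
    (by rw [hPu]; exact hI3.integrableOn)
  rw [hPu, setIntegral_univ] at hsum
  have hterm : ∀ a, ∫ x in P a, latG nm g s (fl x) ∂μ = v * latG nm g s (a : E) := by
    intro a
    have : ∫ x in P a, latG nm g s (fl x) ∂μ = ∫ x in P a, latG nm g s (a : E) ∂μ := by
      apply setIntegral_congr_fun (hPm a)
      intro x hx
      simp only [hfl]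
      rw [hx]
    rw [this, setIntegral_const, hPv, real_smul]
  simp_rw [hterm] at hsum
  have hvc : (v : ℂ) ≠ 0 := by exact_mod_cast hv0
  have hsum2 := hsum.mul_left (v : ℂ)⁻¹
  simp only [inv_mul_cancel_left₀ hvc] at hsum2
  refine ⟨hsum2.summable, ?_⟩
  rw [hsum2.tsum_eq]
  have h5 : ∫ x, Fd s x ∂μ = ∫ x, latG nm g s x ∂μ - ∫ x, latG nm g s (fl x) ∂μ := integral_sub hI1 hI3
  beta_reduce
  rw [h5, hI2]
  field_simp
  ring

end


section
open Filter MeasureTheory Set Topology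
open NumberField NumberField.InfinitePlace NumberField.mixedEmbedding
open NumberField.Units NumberField.Units.dirichletUnitTheorem
open scoped Classical

variable (K : Type*) [Field K] [NumberField K]


noncomputable def nfG (T : logSpace K → ℝ) (x : mixedSpace K) : ℝ :=
  if mixedEmbedding.norm x = 0 then 0 else T (logMap x)

variable {K}

theorem nf_log_norm {x : mixedSpace K} (hx : mixedEmbedding.norm x ≠ 0) :
    Real.log (mixedEmbedding.norm x) = ∑ w, (mult w : ℝ) * Real.log (normAtPlace w x) := by
  have h := mixedEmbedding.norm_ne_zero_iff.mp hx
  rw [mixedEmbedding.norm_apply, Real.log_prod (fun w _ => pow_ne_zero _ (h w))]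
  simp [Real.log_pow]

theorem nf_place_le (w : InfinitePlace K) (x : mixedSpace K) : normAtPlace w x ≤ ‖x‖ := by
  rw [norm_eq_sup'_normAtPlace]
  exact Finset.le_sup' (fun w => normAtPlace w x) (Finset.mem_univ w)

theorem nf_place_sub (w : InfinitePlace K) (x y : mixedSpace K) :
    |normAtPlace w x - normAtPlace w y| ≤ ‖x - y‖ := by
  have h1 := normAtPlace_add_le w (x - y) y
  have h2 := normAtPlace_add_le w (y - x) x
  have h3 : normAtPlace w (y - x) = normAtPlace w (x - y) := by
    rw [← normAtPlace_neg]; congr 1; abel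
  have h4 := nf_place_le w (x - y)
  simp only [sub_add_cancel] at h1 h2
  rw [abs_le]; constructor <;> linarith

set_option linter.unusedSectionVars false in
theorem nf_mult_bd (w : InfinitePlace K) : (1 : ℝ) ≤ mult w ∧ (mult w : ℝ) ≤ 2 := by
  unfold mult; split_ifs <;> norm_num

theorem nf_sum_mult : ∑ w : InfinitePlace K, (mult w : ℝ) = Module.finrank ℚ K := by
  exact_mod_cast congrArg (Nat.cast (R := ℝ)) (sum_mult_eq (K := K))

/-- bounded log coordinates force every place to be comparable with the norm -/
theorem nf_place_ge (R : ℝ) : ∃ k : ℝ, 0 < k ∧ ∀ x : mixedSpace K, mixedEmbedding.norm x ≠ 0 →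
    ‖logMap x‖ ≤ R → ∀ w, k * ‖x‖ ≤ normAtPlace w x := by
  set M : ℝ := (Fintype.card (InfinitePlace K) : ℝ) with hM
  have hM1 : 1 ≤ M := by
    rw [hM]; exact_mod_cast Fintype.card_pos
  refine ⟨Real.exp (-(2 * (M * |R|))), Real.exp_pos _, fun x hx hR w => ?_⟩
  have hp := mixedEmbedding.norm_ne_zero_iff.mp hx
  have hpp : ∀ w, 0 < normAtPlace w x := fun w => lt_of_le_of_ne (normAtPlace_nonneg _ _) (hp w).symm
  set N : ℝ := (Module.finrank ℚ K : ℝ) with hN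
  have hN0 : N ≠ 0 := by rw [hN]; exact_mod_cast Module.finrank_pos.ne'
  set L : ℝ := Real.log (mixedEmbedding.norm x) * N⁻¹ with hL
  have hsum : ∑ w, (mult w : ℝ) * (Real.log (normAtPlace w x) - L) = 0 := by
    simp only [mul_sub, Finset.sum_sub_distrib]
    rw [← nf_log_norm hx, ← Finset.sum_mul, nf_sum_mult, ← hN, hL]
    field_simp
    ring
  have h1 : ∀ w : InfinitePlace K, w ≠ w₀ → |(mult w : ℝ) * (Real.log (normAtPlace w x) - L)| ≤ |R| := by
    intro w hw
    have := (norm_le_pi_norm (logMap x) ⟨w, hw⟩).trans (hR.trans (le_abs_self R))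
    simpa only [logMap_apply, Real.norm_eq_abs] using this
  have h2 : ∀ w : InfinitePlace K, |(mult w : ℝ) * (Real.log (normAtPlace w x) - L)| ≤ M * |R| := by
    intro w
    by_cases hw : w = w₀
    · subst hw
      rw [← Finset.add_sum_erase _ _ (Finset.mem_univ w₀)] at hsum
      rw [eq_neg_of_add_eq_zero_left hsum, abs_neg]
      refine (Finset.abs_sum_le_sum_abs _ _).trans ?_
      refine (Finset.sum_le_sum (fun w hw => h1 w (Finset.ne_of_mem_erase hw))).trans ?_
      rw [Finset.sum_const, nsmul_eq_mul]
      refine mul_le_mul_of_nonneg_right ?_ (abs_nonneg _)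
      rw [hM]
      exact_mod_cast Finset.card_le_univ (Finset.univ.erase (w₀ : InfinitePlace K))
    · exact (h1 w hw).trans (le_mul_of_one_le_left (abs_nonneg _) hM1)
  have h3 : ∀ w : InfinitePlace K, |Real.log (normAtPlace w x) - L| ≤ M * |R| := by
    intro w
    refine le_trans ?_ (h2 w)
    rw [abs_mul]
    refine le_mul_of_one_le_left (abs_nonneg _) ?_
    rw [abs_of_nonneg (by positivity)]
    exact (nf_mult_bd w).1
  have h4 : ‖x‖ ≤ Real.exp (L + M * |R|) := by
    rw [norm_eq_sup'_normAtPlace]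
    refine Finset.sup'_le _ _ fun w _ => ?_
    rw [← Real.log_le_iff_le_exp (hpp w)]
    linarith [(abs_le.mp (h3 w)).2]
  calc _ ≤ Real.exp (-(2 * (M * |R|))) * Real.exp (L + M * |R|) := by gcongr
    _ = Real.exp (L - M * |R|) := by rw [← Real.exp_add]; ring_nf
    _ ≤ _ := by
      rw [← Real.le_log_iff_exp_le (hpp w)]
      linarith [(abs_le.mp (h3 w)).1]

theorem nf_log_sub {a b c : ℝ} (hc : 0 < c) (ha : c ≤ a) (hb : c ≤ b) :
    |Real.log a - Real.log b| ≤ |a - b| / c := by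
  have key : ∀ a b : ℝ, c ≤ a → c ≤ b → Real.log a - Real.log b ≤ |a - b| / c := by
    intro a b ha hb
    have ha' := hc.trans_le ha
    have hb' := hc.trans_le hb
    rw [← Real.log_div ha'.ne' hb'.ne']
    refine (Real.log_le_sub_one_of_pos (by positivity)).trans ?_
    rw [div_sub_one hb'.ne']
    calc _ ≤ |a - b| / b := by gcongr; exact le_abs_self _
      _ ≤ _ := by gcongr
  rw [abs_le]
  have := key b a hb ha
  rw [abs_sub_comm] at this
  exact ⟨by linarith, key a b ha hb⟩

theorem nfG_loc {T : logSpace K → ℝ} {R A : ℝ} (hA : 0 ≤ A) (hT : ∀ v, T v ≠ 0 → ‖v‖ ≤ R)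
    (hLip : ∀ v v', |T v - T v'| ≤ A * ‖v - v'‖) :
    LatLoc (mixedEmbedding.norm : mixedSpace K → ℝ) (nfG K T) := by
  intro D
  obtain ⟨k, hk, hkx⟩ := nf_place_ge (K := K) R
  set N : ℝ := (Module.finrank ℚ K : ℝ) with hN
  have hN1 : 1 ≤ N := by rw [hN]; exact_mod_cast Module.finrank_pos
  refine ⟨(N + 4 * A) * (2 * |D| / k), 2 * |D| / k + 1, fun x y hx hxy hgx => ?_⟩
  have hx0 : 0 < ‖x‖ := by
    have : 0 ≤ 2 * |D| / k := by positivity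
    linarith
  have hnx : mixedEmbedding.norm x ≠ 0 := by
    intro h; exact hgx (by simp [nfG, h])
  have hTx : T (logMap x) ≠ 0 := by simpa [nfG, hnx] using hgx
  have hw := hkx x hnx (hT _ hTx)
  have hD : |D| ≤ k * ‖x‖ / 2 := by
    have : 2 * |D| / k ≤ ‖x‖ := by linarith
    rw [div_le_iff₀ hk] at this
    linarith
  have hc : 0 < k * ‖x‖ / 2 := by positivity
  have hwx : ∀ w, k * ‖x‖ / 2 ≤ normAtPlace w x := fun w => by linarith [hw w]
  have hsub : ∀ w, |normAtPlace w x - normAtPlace w y| ≤ |D| := fun w =>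
    (nf_place_sub w x y).trans (hxy.trans (le_abs_self _))
  have hwy : ∀ w, k * ‖x‖ / 2 ≤ normAtPlace w y := fun w => by
    linarith [hw w, (abs_le.mp (hsub w)).2]
  have hny : mixedEmbedding.norm y ≠ 0 :=
    mixedEmbedding.norm_ne_zero_iff.mpr fun w => (hc.trans_le (hwy w)).ne'
  set e : ℝ := 2 * |D| / k / ‖x‖ with he
  have he0 : 0 ≤ e := by positivity
  have hl : ∀ w, |Real.log (normAtPlace w x) - Real.log (normAtPlace w y)| ≤ e := fun w => by
    refine (nf_log_sub hc (hwx w) (hwy w)).trans ?_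
    rw [he]
    calc _ ≤ |D| / (k * ‖x‖ / 2) := div_le_div_of_nonneg_right (hsub w) hc.le
      _ = _ := by field_simp
  have hln : |Real.log (mixedEmbedding.norm x) - Real.log (mixedEmbedding.norm y)| ≤ N * e := by
    rw [nf_log_norm hnx, nf_log_norm hny, ← Finset.sum_sub_distrib, hN, ← nf_sum_mult,
      Finset.sum_mul]
    refine (Finset.abs_sum_le_sum_abs _ _).trans (Finset.sum_le_sum fun w _ => ?_)
    rw [← mul_sub, abs_mul, abs_of_nonneg (by positivity : (0 : ℝ) ≤ mult w)]
    gcongr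
    exact hl w
  have hlm : ‖logMap x - logMap y‖ ≤ 4 * e := by
    rw [pi_norm_le_iff_of_nonneg (by positivity)]
    intro w
    rw [Pi.sub_apply, logMap_apply, logMap_apply, Real.norm_eq_abs, ← mul_sub, abs_mul,
      abs_of_nonneg (by positivity : (0 : ℝ) ≤ mult w.val)]
    have h1 : |Real.log (normAtPlace w.val x) - Real.log (mixedEmbedding.norm x) * (Module.finrank ℚ K : ℝ)⁻¹ -
      (Real.log (normAtPlace w.val y) - Real.log (mixedEmbedding.norm y) * (Module.finrank ℚ K : ℝ)⁻¹)| ≤ e + e := by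
      rw [← hN, sub_sub_sub_comm, ← sub_mul]
      refine (abs_sub _ _).trans (add_le_add (hl _) ?_)
      rw [abs_mul, abs_of_nonneg (by positivity : (0 : ℝ) ≤ N⁻¹)]
      calc _ ≤ (N * e) * N⁻¹ := by gcongr
        _ = e := by field_simp
    calc _ ≤ 2 * (e + e) := by
          gcongr
          exact (nf_mult_bd w.val).2
      _ = _ := by ring
  have hfin : (N + 4 * A) * (2 * |D| / k) / ‖x‖ = N * e + A * (4 * e) := by rw [he]; ring
  refine ⟨lt_of_le_of_ne (mixedEmbedding.norm_nonneg _) hny.symm, ?_, ?_⟩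
  · rw [hfin]; have : 0 ≤ A * (4 * e) := by positivity
    linarith
  · rw [hfin]
    have : 0 ≤ N * e := by positivity
    simp only [nfG, hnx, hny, if_false]
    have h2 : A * ‖logMap x - logMap y‖ ≤ A * (4 * e) := by gcongr
    linarith [hLip (logMap x) (logMap y)]

theorem nfG_ge {T : logSpace K → ℝ} {R : ℝ} (hT : ∀ v, T v ≠ 0 → ‖v‖ ≤ R) :
    ∃ κ : ℝ, 0 < κ ∧ ∀ x : mixedSpace K, nfG K T x ≠ 0 →
      κ * ‖x‖ ^ (Module.finrank ℚ K) ≤ mixedEmbedding.norm x := by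
  obtain ⟨k, hk, hkx⟩ := nf_place_ge (K := K) R
  refine ⟨k ^ (Module.finrank ℚ K), by positivity, fun x hgx => ?_⟩
  have hnx : mixedEmbedding.norm x ≠ 0 := by
    intro h; exact hgx (by simp [nfG, h])
  have hTx : T (logMap x) ≠ 0 := by simpa [nfG, hnx] using hgx
  rw [← mul_pow, mixedEmbedding.norm_apply, ← sum_mult_eq, ← Finset.prod_pow_eq_pow_sum]
  refine Finset.prod_le_prod (fun w _ => by positivity) fun w _ => ?_
  gcongr
  exact hkx x hnx (hT _ hTx) w

theorem nfG_measurable {T : logSpace K → ℝ} (hT : Measurable T) : Measurable (nfG K T) := by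
  unfold nfG
  refine Measurable.ite ?_ measurable_const (hT.comp ?_)
  · exact measurableSet_eq_fun (mixedEmbedding.continuous_norm K).measurable measurable_const
  · unfold logMap
    refine measurable_pi_iff.mpr fun w ↦ measurable_const.mul ?_
    exact (continuous_normAtPlace _).measurable.log.sub <|
      (mixedEmbedding.continuous_norm _).measurable.log.mul measurable_const

theorem nfG_smul (T : logSpace K → ℝ) (r : ℝ) (hr : 0 < r) (x : mixedSpace K) :
    nfG K T (r • x) = nfG K T x := by
  unfold nfG
  by_cases hx : mixedEmbedding.norm x = 0
  · simp [hx, mixedEmbedding.norm_smul]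
  · rw [if_neg hx, if_neg, logMap_real_smul hx hr.ne']
    rw [mixedEmbedding.norm_smul]
    have : 0 < |r| := abs_pos.mpr hr.ne'
    positivity

end


section
open Filter MeasureTheory Set Topology
open NumberField NumberField.InfinitePlace NumberField.mixedEmbedding
open NumberField.Units NumberField.Units.dirichletUnitTheorem
open scoped Classical

noncomputable def tent (c : ℝ) : ℝ := max 0 (1 - |c|)

theorem tent_nonneg (c : ℝ) : 0 ≤ tent c := le_max_left _ _
theorem tent_le_one (c : ℝ) : tent c ≤ 1 := max_le zero_le_one (by linarith [abs_nonneg c])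
theorem tent_ne {c : ℝ} (h : tent c ≠ 0) : |c| < 1 := by
  by_contra h'
  exact h (max_eq_left (by linarith))
theorem tent_lip (c d : ℝ) : |tent c - tent d| ≤ |c - d| := by
  unfold tent
  rw [max_comm 0, max_comm 0]
  refine (abs_max_sub_max_le_abs _ _ _).trans (le_trans ?_ (abs_abs_sub_abs_le_abs_sub c d))
  rw [show (1 - |c|) - (1 - |d|) = -(|c| - |d|) by ring, abs_neg]

theorem tent_sum (c : ℝ) : ∑ j ∈ ({⌊-c⌋, ⌊-c⌋ + 1} : Finset ℤ), tent (j + c) = 1 := by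
  rw [Finset.sum_pair (by simp)]
  have h1 := Int.floor_le (-c)
  have h2 := Int.lt_floor_add_one (-c)
  unfold tent
  push_cast
  rw [abs_of_nonpos (by linarith), abs_of_nonneg (by linarith), max_eq_right (by linarith),
    max_eq_right (by linarith)]
  ring

theorem tent_notMem {c : ℝ} {j : ℤ} (h : j ∉ ({⌊-c⌋, ⌊-c⌋ + 1} : Finset ℤ)) : tent (j + c) = 0 := by
  by_contra h'
  have h1 := abs_lt.mp (tent_ne h')
  have h3 := Int.floor_le (-c)
  have h4 := Int.lt_floor_add_one (-c)
  have h5 : j < ⌊-c⌋ + 2 := by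
    have : (j : ℝ) < ⌊-c⌋ + 2 := by linarith
    exact_mod_cast this
  have h6 : ⌊-c⌋ - 1 < j := by
    have : (⌊-c⌋ : ℝ) - 1 < j := by linarith
    exact_mod_cast this
  apply h
  simp only [Finset.mem_insert, Finset.mem_singleton]
  omega

theorem prod_sub_prod_abs {ι : Type*} (s : Finset ι) (a b : ι → ℝ) (ha : ∀ i, |a i| ≤ 1)
    (hb : ∀ i, |b i| ≤ 1) : |∏ i ∈ s, a i - ∏ i ∈ s, b i| ≤ ∑ i ∈ s, |a i - b i| := by
  induction s using Finset.induction_on with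
  | empty => simp
  | insert i s hi ih =>
    rw [Finset.prod_insert hi, Finset.prod_insert hi, Finset.sum_insert hi]
    have h1 : |∏ i ∈ s, a i| ≤ 1 := by
      rw [Finset.abs_prod]
      exact Finset.prod_le_one (fun _ _ => abs_nonneg _) (fun i _ => ha i)
    calc |a i * ∏ i ∈ s, a i - b i * ∏ i ∈ s, b i|
        = |(a i - b i) * ∏ i ∈ s, a i + b i * (∏ i ∈ s, a i - ∏ i ∈ s, b i)| := by ring_nf
      _ ≤ |a i - b i| * |∏ i ∈ s, a i| + |b i| * |∏ i ∈ s, a i - ∏ i ∈ s, b i| := by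
        rw [← abs_mul, ← abs_mul]; exact abs_add_le _ _
      _ ≤ |a i - b i| * 1 + 1 * ∑ i ∈ s, |a i - b i| := by
        gcongr
        exact hb i
      _ = _ := by ring

variable (K : Type*) [Field K] [NumberField K]

noncomputable def nfB : Module.Basis (Fin (rank K)) ℝ (logSpace K) :=
  (basisUnitLattice K).ofZLatticeBasis ℝ _

noncomputable def nfT (v : logSpace K) : ℝ := ∏ i, tent ((nfB K).repr v i)

theorem nfT_nonneg (v : logSpace K) : 0 ≤ nfT K v := Finset.prod_nonneg fun _ _ => tent_nonneg _
theorem nfT_le_one (v : logSpace K) : nfT K v ≤ 1 :=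
  Finset.prod_le_one (fun _ _ => tent_nonneg _) (fun _ _ => tent_le_one _)

theorem nfT_supp (v : logSpace K) (hv : nfT K v ≠ 0) : ‖v‖ ≤ ∑ i, ‖nfB K i‖ := by
  have h := Finset.prod_ne_zero_iff.mp hv
  conv_lhs => rw [← (nfB K).sum_repr v]
  refine (norm_sum_le _ _).trans (Finset.sum_le_sum fun i hi => ?_)
  rw [_root_.norm_smul, Real.norm_eq_abs]
  exact mul_le_of_le_one_left (norm_nonneg _) (tent_ne (h i hi)).le

theorem nfT_lip : ∃ A : ℝ, 0 ≤ A ∧ ∀ v v', |nfT K v - nfT K v'| ≤ A * ‖v - v'‖ := by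
  refine ⟨∑ i, ‖LinearMap.toContinuousLinearMap ((nfB K).coord i)‖, by positivity, fun v v' => ?_⟩
  have ht : ∀ c, |tent c| ≤ 1 := fun c => by rw [abs_of_nonneg (tent_nonneg c)]; exact tent_le_one c
  refine (prod_sub_prod_abs _ _ _ (fun _ => ht _) (fun _ => ht _)).trans ?_
  rw [Finset.sum_mul]
  refine Finset.sum_le_sum fun i _ => (tent_lip _ _).trans ?_
  have := (LinearMap.toContinuousLinearMap ((nfB K).coord i)).le_opNorm (v - v')
  simpa using this

theorem nfT_measurable : Measurable (nfT K) := by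
  obtain ⟨A, hA, h⟩ := nfT_lip K
  have : LipschitzWith A.toNNReal (nfT K) := LipschitzWith.of_dist_le_mul fun v v' => by
    rw [Real.dist_eq, dist_eq_norm, Real.coe_toNNReal _ hA]; exact h v v'
  exact this.continuous.measurable

noncomputable def nfUnitEquiv : torsion K × (Fin (rank K) → ℤ) ≃ (𝓞 K)ˣ :=
  Equiv.ofBijective (fun ζe => ζe.1 * ∏ i, (fundSystem K i) ^ (ζe.2 i)) <| by
    rw [Function.bijective_iff_existsUnique]
    intro b
    obtain ⟨p, hp, hu⟩ := exist_unique_eq_mul_prod K b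
    exact ⟨p, hp.symm, fun y hy => hu y hy.symm⟩

theorem nf_repr (p : torsion K × (Fin (rank K) → ℤ)) (i : Fin (rank K)) :
    (nfB K).repr (logEmbedding K (Additive.ofMul (nfUnitEquiv K p))) i = p.2 i := by
  have h : logEmbedding K (Additive.ofMul (nfUnitEquiv K p)) = ∑ i, (p.2 i : ℝ) • nfB K i := by
    simp only [nfUnitEquiv, Equiv.ofBijective_apply, ofMul_mul, map_add, ofMul_prod, map_sum,
      ofMul_zpow, map_zsmul]
    rw [logEmbedding_eq_zero_iff.mpr p.1.2, zero_add]
    refine Finset.sum_congr rfl fun i _ => ?_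
    rw [logEmbedding_fundSystem, nfB, Module.Basis.ofZLatticeBasis_apply, Int.cast_smul_eq_zsmul]
  rw [h, Module.Basis.repr_sum_self]

theorem nf_unit_sum {x : mixedSpace K} (hx : mixedEmbedding.norm x ≠ 0) :
    HasSum (fun u : (𝓞 K)ˣ => nfG K (nfT K) (u • x)) (torsionOrder K) := by
  have : Fintype (torsion K) := Fintype.ofFinite _
  rw [← (nfUnitEquiv K).hasSum_iff]
  set c := fun i => (nfB K).repr (logMap x) i with hc
  have hF : ∀ p, ((fun u : (𝓞 K)ˣ => nfG K (nfT K) (u • x)) ∘ nfUnitEquiv K) p =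
      ∏ i, tent (p.2 i + c i) := by
    intro p
    simp only [Function.comp_apply, nfG, norm_unit_smul, hx, if_false]
    rw [logMap_unit_smul _ hx, nfT]
    simp only [map_add, Finsupp.add_apply, nf_repr, hc]
  set S : Finset (torsion K × (Fin (rank K) → ℤ)) :=
    Finset.univ ×ˢ Fintype.piFinset (fun i => ({⌊-c i⌋, ⌊-c i⌋ + 1} : Finset ℤ)) with hS
  have h0 : ∀ p ∉ S, ((fun u : (𝓞 K)ˣ => nfG K (nfT K) (u • x)) ∘ nfUnitEquiv K) p = 0 := by
    intro p hp
    rw [hF]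
    simp only [hS, Finset.mem_product, Finset.mem_univ, true_and, Fintype.mem_piFinset,
      not_forall] at hp
    obtain ⟨i, hi⟩ := hp
    exact Finset.prod_eq_zero (Finset.mem_univ i) (tent_notMem hi)
  have := hasSum_sum_of_ne_finset_zero (L := .unconditional _) h0
  convert this using 1
  simp only [hF]
  rw [hS, Finset.sum_product]
  simp only
  rw [← Finset.prod_univ_sum (fun i => ({⌊-c i⌋, ⌊-c i⌋ + 1} : Finset ℤ)) (fun i j => tent (j + c i))]
  simp only [tent_sum, Finset.prod_const_one, Finset.sum_const, nsmul_eq_mul, mul_one]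
  rw [torsionOrder, Finset.card_univ, Nat.card_eq_fintype_card]

end


section
open Filter MeasureTheory Set Topology
open NumberField NumberField.InfinitePlace NumberField.mixedEmbedding
open NumberField.Units NumberField.Units.dirichletUnitTheorem
open scoped Classical nonZeroDivisors

variable (K : Type*) [Field K] [NumberField K]

theorem nf_norm_gen (a : 𝓞 K) : mixedEmbedding.norm (mixedEmbedding K (a : K)) =
    (Ideal.absNorm (Ideal.span {a}) : ℝ) := by
  rw [mixedEmbedding.norm_eq_norm, Ideal.absNorm_span_singleton, ← Algebra.coe_norm_int]
  simp [Nat.cast_natAbs]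

theorem nf_lat (J : (Ideal (𝓞 K))⁰) : ∃ Λ : Submodule ℤ (mixedSpace K),
    (∀ x, x ∈ Λ ↔ ∃ a ∈ (J : Ideal (𝓞 K)), mixedEmbedding K (a : K) = x) ∧ ∃ Φ : ℂ → ℂ,
    DifferentiableOn ℂ Φ {s | 1 - 1 / (Module.finrank ℚ K : ℝ) < s.re} ∧ ∀ s : ℂ, 1 < s.re →
      Summable (fun a : Λ => latG mixedEmbedding.norm (nfG K (nfT K)) s (a : mixedSpace K)) ∧
      (s - 1) * ∑' a : Λ, latG mixedEmbedding.norm (nfG K (nfT K)) s (a : mixedSpace K) = Φ s := by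
  obtain ⟨A, hA, hLip⟩ := nfT_lip K
  obtain ⟨κ, hκ, hgκ⟩ := nfG_ge (nfT_supp K)
  have hmem : ∀ x, x ∈ Submodule.span ℤ (Set.range (fractionalIdealLatticeBasis K (FractionalIdeal.mk0 K J))) ↔
      ∃ a ∈ (J : Ideal (𝓞 K)), mixedEmbedding K (a : K) = x := by
    intro x
    rw [mem_span_fractionalIdealLatticeBasis, FractionalIdeal.coe_mk0]
    simp only [Set.mem_image, SetLike.mem_coe, FractionalIdeal.mem_coeIdeal]
    constructor
    · rintro ⟨_, ⟨a, ha, rfl⟩, rfl⟩; exact ⟨a, ha, rfl⟩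
    · rintro ⟨a, ha, rfl⟩; exact ⟨_, ⟨a, ha, rfl⟩, rfl⟩
  obtain ⟨Φ, hΦ, hΦs⟩ := lat_main (volume : Measure (mixedSpace K))
    (nm := mixedEmbedding.norm) (g := nfG K (nfT K)) (N := Module.finrank ℚ K)
    Module.finrank_pos.ne' (mixedEmbedding.finrank K) hκ
    (mixedEmbedding.continuous_norm K).measurable (nfG_measurable (nfT_measurable K))
    (fun x => by unfold nfG; split_ifs; exacts [le_rfl, nfT_nonneg K _])
    (fun x => by unfold nfG; split_ifs; exacts [zero_le_one, nfT_le_one K _])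
    hgκ (fun r hr x => by rw [mixedEmbedding.norm_smul, abs_of_pos hr])
    (nfG_smul (nfT K)) (nfG_loc hA (nfT_supp K) hLip) (fractionalIdealLatticeBasis K (FractionalIdeal.mk0 K J))
  exact ⟨_, hmem, Φ, hΦ, hΦs⟩

theorem nf_gen (J I : (Ideal (𝓞 K))⁰) (h : ClassGroup.mk0 J = (ClassGroup.mk0 I)⁻¹) :
      ∃ g : 𝓞 K, Ideal.span {g} = (J : Ideal (𝓞 K)) * I := by
  have h1 : ClassGroup.mk0 (J * I) = 1 := by
    rw [map_mul, h, inv_mul_cancel]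
  have h2 := (ClassGroup.mk0_eq_one_iff (J * I).2).mp h1
  obtain ⟨g, hg⟩ := h2
  exact ⟨g, hg.symm⟩
theorem nf_gen' (J I : (Ideal (𝓞 K))⁰) {g : 𝓞 K} (h : Ideal.span {g} = (J : Ideal (𝓞 K)) * I) :
      ClassGroup.mk0 J = (ClassGroup.mk0 I)⁻¹ := by
  have h1 : ClassGroup.mk0 (J * I) = 1 := 
    (ClassGroup.mk0_eq_one_iff (J * I).2).mpr ⟨g, h.symm⟩
  rwa [map_mul, mul_eq_one_iff_eq_inv] at h1

theorem nf_class (C : ClassGroup (𝓞 K)) : ∃ Φ : ℂ → ℂ,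
    DifferentiableOn ℂ Φ {s | 1 - 1 / (Module.finrank ℚ K : ℝ) < s.re} ∧ ∀ s : ℂ, 1 < s.re →
      ∃ S : ℂ, HasSum (fun I : {I : (Ideal (𝓞 K))⁰ | ClassGroup.mk0 I = C} =>
        (Ideal.absNorm (I.1 : Ideal (𝓞 K)) : ℂ) ^ (-s)) S ∧ (s - 1) * S = Φ s := by
  obtain ⟨J, hJ⟩ := ClassGroup.mk0_surjective C⁻¹
  have hprin : ∀ I : {I : (Ideal (𝓞 K))⁰ | ClassGroup.mk0 I = C},
      ∃ g : 𝓞 K, Ideal.span {g} = (J : Ideal (𝓞 K)) * I.1 := by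
    intro I
    exact nf_gen K J I.1 (by rw [hJ, show ClassGroup.mk0 I.1 = C from I.2])
  choose gen hgen using hprin
  have hgen0 : ∀ I, gen I ≠ 0 := by
    intro I h
    have h1 := hgen I
    rw [h, Ideal.span_singleton_eq_bot.mpr rfl] at h1
    exact nonZeroDivisors.ne_zero (J * I.1).2 h1.symm
  have hgenJ : ∀ I, gen I ∈ (J : Ideal (𝓞 K)) := by
    intro I
    have h1 : (J : Ideal (𝓞 K)) ∣ Ideal.span {gen I} := by
      rw [hgen I]; exact dvd_mul_right _ _
    exact Ideal.dvd_span_singleton.mp h1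
  obtain ⟨Λ, hmem, Φ, hΦ, hΦs⟩ := nf_lat K J
  set φ : {I : (Ideal (𝓞 K))⁰ | ClassGroup.mk0 I = C} × (𝓞 K)ˣ → Λ :=
    fun p => ⟨p.2 • mixedEmbedding K (gen p.1 : K), (hmem _).mpr ⟨p.2 * gen p.1,
      Ideal.mul_mem_left _ _ (hgenJ _), (unit_smul_eq_iff_mul_eq.mpr rfl).symm⟩⟩ with hφ
  have hφinj : Function.Injective φ := by
    rintro ⟨I, u⟩ ⟨I', u'⟩ h
    have h1 : u • mixedEmbedding K (gen I : K) = u' • mixedEmbedding K (gen I' : K) :=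
      congrArg Subtype.val h
    have h2 : (u : 𝓞 K) * gen I = u' * gen I' := by
      rw [unit_smul_eq_iff_mul_eq.mpr (rfl : (u : 𝓞 K) * gen I = _),
        unit_smul_eq_iff_mul_eq.mpr (rfl : (u' : 𝓞 K) * gen I' = _)] at h1
      exact RingOfIntegers.coe_injective (mixedEmbedding_injective K h1)
    have h3 : Ideal.span {gen I} = Ideal.span {gen I'} := by
      rw [← Ideal.span_singleton_mul_left_unit u.isUnit, h2,
        Ideal.span_singleton_mul_left_unit u'.isUnit]
    rw [hgen, hgen] at h3
    have h4 : I = I' := by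
      have := mul_left_cancel₀ (nonZeroDivisors.ne_zero J.2) h3
      exact Subtype.ext (Subtype.ext this)
    subst h4
    have := mul_right_cancel₀ (hgen0 I) h2
    exact Prod.ext rfl (Units.ext this)
  have hφs : ∀ s, Function.support (fun a : Λ =>
      latG mixedEmbedding.norm (nfG K (nfT K)) s (a : mixedSpace K)) ⊆ Set.range φ := by
    rintro s ⟨x, hx⟩ hne
    obtain ⟨a, haJ, rfl⟩ := (hmem x).mp hx
    have ha0 : a ≠ 0 := by
      rintro rfl
      apply hne
      simp [latG, nfG]
    obtain ⟨I, hI⟩ : (J : Ideal (𝓞 K)) ∣ Ideal.span {a} := Ideal.dvd_span_singleton.mpr haJ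
    have hI0 : I ∈ (Ideal (𝓞 K))⁰ := by
      rw [mem_nonZeroDivisors_iff_ne_zero]
      rintro rfl
      simp at hI
      exact ha0 hI
    have hc : ClassGroup.mk0 ⟨I, hI0⟩ = C := by
      have h1 := nf_gen' K J ⟨I, hI0⟩ hI
      rw [hJ, inv_inj] at h1
      exact h1.symm
    have h2 := hgen ⟨⟨I, hI0⟩, hc⟩
    obtain ⟨u, hu⟩ := Ideal.span_singleton_eq_span_singleton.mp (h2.trans hI.symm)
    refine ⟨⟨⟨⟨I, hI0⟩, hc⟩, u⟩, Subtype.ext ?_⟩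
    simp only [hφ]
    rw [unit_smul_eq_iff_mul_eq, mul_comm]
    exact hu
  have hJ0 : (Ideal.absNorm (J : Ideal (𝓞 K)) : ℂ) ≠ 0 :=
    Nat.cast_ne_zero.mpr (Ideal.absNorm_ne_zero_of_nonZeroDivisors J)
  have hw0 : (torsionOrder K : ℂ) ≠ 0 := Nat.cast_ne_zero.mpr (torsionOrder_ne_zero K)
  refine ⟨fun s => (Ideal.absNorm (J : Ideal (𝓞 K)) : ℂ) ^ s * (torsionOrder K : ℂ)⁻¹ * Φ s, ?_, ?_⟩
  · refine DifferentiableOn.mul (DifferentiableOn.mul ?_ (differentiableOn_const _)) hΦ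
    exact (differentiable_id.const_cpow (Or.inl hJ0)).differentiableOn
  intro s hs
  obtain ⟨hsum, heq⟩ := hΦs s hs
  have hS := (hsum.comp_injective hφinj).hasSum
  rw [show (∑' p, ((fun a : Λ =>
      latG mixedEmbedding.norm (nfG K (nfT K)) s (a : mixedSpace K)) ∘ φ) p) = _ from
      hφinj.tsum_eq (hφs s)] at hS
  have hfib : ∀ I, HasSum (fun u => ((fun a : Λ =>
      latG mixedEmbedding.norm (nfG K (nfT K)) s (a : mixedSpace K)) ∘ φ) (I, u))
      ((torsionOrder K : ℂ) * (Ideal.absNorm (J : Ideal (𝓞 K)) : ℂ) ^ (-s) *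
        (Ideal.absNorm (I.1 : Ideal (𝓞 K)) : ℂ) ^ (-s)) := by
    intro I
    have hn : mixedEmbedding.norm (mixedEmbedding K (gen I : K)) =
      ((Ideal.absNorm (J : Ideal (𝓞 K)) * Ideal.absNorm (I.1 : Ideal (𝓞 K)) : ℕ) : ℝ) := by
      rw [nf_norm_gen, hgen, map_mul]
    have hp : 0 < Ideal.absNorm (J : Ideal (𝓞 K)) * Ideal.absNorm (I.1 : Ideal (𝓞 K)) :=
      Nat.mul_pos (Ideal.absNorm_pos_of_nonZeroDivisors J)
        (Ideal.absNorm_pos_of_nonZeroDivisors I.1)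
    have hne : mixedEmbedding.norm (mixedEmbedding K (gen I : K)) ≠ 0 := by
      rw [hn]; exact_mod_cast hp.ne'
    have h1 := (Complex.hasSum_ofReal.mpr (nf_unit_sum K hne)).mul_right
      (((Ideal.absNorm (J : Ideal (𝓞 K)) * Ideal.absNorm (I.1 : Ideal (𝓞 K)) : ℕ) : ℂ) ^ (-s))
    convert! h1 using 1
    · funext u
      simp only [Function.comp_apply, hφ, latG, latLog, norm_unit_smul, hn]
      congr 1
      rw [max_eq_left (by exact_mod_cast hp), Complex.cpow_def_of_ne_zero (by exact_mod_cast hp.ne'),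
        Complex.natCast_log, mul_comm]
    · push_cast
      rw [Complex.natCast_mul_natCast_cpow, mul_assoc]
  have hfin := HasSum.prod_fiberwise hS hfib
  have hc : (torsionOrder K : ℂ) * (Ideal.absNorm (J : Ideal (𝓞 K)) : ℂ) ^ (-s) ≠ 0 :=
    mul_ne_zero hw0 (by rw [Complex.cpow_neg]; exact inv_ne_zero (by simp [Complex.cpow_eq_zero_iff, hJ0]))
  have hfin2 := hfin.mul_left ((torsionOrder K : ℂ) * (Ideal.absNorm (J : Ideal (𝓞 K)) : ℂ) ^ (-s))⁻¹
  simp only [inv_mul_cancel_left₀ hc] at hfin2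
  refine ⟨_, hfin2, ?_⟩
  beta_reduce
  rw [← heq, mul_inv, Complex.cpow_neg, inv_inv]
  ring

theorem nf_zeta : ∃ Φ : ℂ → ℂ,
    DifferentiableOn ℂ Φ {s | 1 - 1 / (Module.finrank ℚ K : ℝ) < s.re} ∧ ∀ s : ℂ, 1 < s.re →
      ∃ S : ℂ, HasSum (fun I : (Ideal (𝓞 K))⁰ =>
        (Ideal.absNorm (I : Ideal (𝓞 K)) : ℂ) ^ (-s)) S ∧ (s - 1) * S = Φ s := by
  choose Φ hΦ h using nf_class K
  refine ⟨fun s => ∑ C, Φ C s, DifferentiableOn.fun_sum fun C _ => hΦ C, fun s hs => ?_⟩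
  choose S hS hS' using fun C => h C s hs
  refine ⟨∑ C, S C, ?_, by rw [Finset.mul_sum]; simp only [hS']⟩
  have := hasSum_sum (s := Finset.univ) (fun C _ => (hasSum_subtype_iff_indicator
    (f := fun I : (Ideal (𝓞 K))⁰ => (Ideal.absNorm (I : Ideal (𝓞 K)) : ℂ) ^ (-s))).mp (hS C))
  convert this using 1
  funext I
  simp only [Set.indicator_apply, Set.mem_ofPred_eq, Finset.sum_ite_eq, Finset.mem_univ, if_true]

theorem nf_hasSum_LSeries (c : ℕ → ℂ) {s S : ℂ} (h : HasSum (fun I : (Ideal (𝓞 K))⁰ =>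
        c (Ideal.absNorm (I : Ideal (𝓞 K))) * (Ideal.absNorm (I : Ideal (𝓞 K)) : ℂ) ^ (-s)) S) :
    LSeriesHasSum (fun n ↦ c n * Nat.card {I : Ideal (𝓞 K) // Ideal.absNorm I = n}) s S := by
  unfold LSeriesHasSum
  rw [← (Equiv.sigmaFiberEquiv (fun I : (Ideal (𝓞 K))⁰ => Ideal.absNorm (I : Ideal (𝓞 K)))).hasSum_iff] at h
  refine HasSum.sigma h fun n => ?_
  rcases eq_or_ne n 0 with rfl | hn
  · rw [LSeries.term_zero]
    have : IsEmpty {I : (Ideal (𝓞 K))⁰ // Ideal.absNorm (I : Ideal (𝓞 K)) = 0} :=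
      ⟨fun I => Ideal.absNorm_ne_zero_of_nonZeroDivisors I.1 I.2⟩
    exact hasSum_empty
  · rw [LSeries.term_of_ne_zero hn]
    have hfin : Finite {I : (Ideal (𝓞 K))⁰ // Ideal.absNorm (I : Ideal (𝓞 K)) = n} := by
      have := Ideal.finite_setOfPred_absNorm_eq (S := 𝓞 K) n
      have : Finite {I : Ideal (𝓞 K) // Ideal.absNorm I = n} := this
      refine Finite.of_injective (β := {I : Ideal (𝓞 K) // Ideal.absNorm I = n})
        (fun I => ⟨I.1, I.2⟩) fun I I' h => ?_
      exact Subtype.ext (Subtype.ext (Subtype.mk.inj h))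
    have := Fintype.ofFinite {I : (Ideal (𝓞 K))⁰ // Ideal.absNorm (I : Ideal (𝓞 K)) = n}
    have h1 : Nat.card {I : Ideal (𝓞 K) // Ideal.absNorm I = n} =
        Fintype.card {I : (Ideal (𝓞 K))⁰ // Ideal.absNorm (I : Ideal (𝓞 K)) = n} := by
      rw [← Nat.card_eq_fintype_card]
      refine Nat.card_congr ⟨fun I => ⟨⟨I.1, mem_nonZeroDivisors_iff_ne_zero.mpr ?_⟩, I.2⟩,
        fun I => ⟨I.1, I.2⟩, fun _ => rfl, fun _ => rfl⟩
      intro h0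
      have := I.2
      rw [h0] at this
      simp at this
      exact hn this.symm
    have h2 := hasSum_fintype (fun I : {I : (Ideal (𝓞 K))⁰ // Ideal.absNorm (I : Ideal (𝓞 K)) = n} =>
      c n * (n : ℂ) ^ (-s)) (L := .unconditional _)
    convert! h2 using 1
    · funext I
      simp [Equiv.sigmaFiberEquiv, I.2]
    · rw [h1, Finset.sum_const, Finset.card_univ, nsmul_eq_mul, Complex.cpow_neg, div_eq_mul_inv]
      ring

end


section
open Filter Set Topology
open NumberField
open scoped Classical nonZeroDivisors

variable (K : Type*) [Field K] [NumberField K]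

theorem hasSum_mul_complex {α β : Type*} {f : α → ℂ} {g : β → ℂ} {A B : ℂ} (hA : HasSum f A)
    (hB : HasSum g B) : HasSum (fun y : α × β => f y.1 * g y.2) (A * B) :=
  hA.mul hB (summable_mul_of_summable_norm hA.summable.norm hB.summable.norm)

/-- pairs (prime ideal, exponent minus one) -/
abbrev nfPP : Type _ := {x : (_ : Ideal (𝓞 K)) × ℕ // Prime x.1}

theorem nf_absNorm_pos (I : (Ideal (𝓞 K))⁰) : 0 < Ideal.absNorm (I : Ideal (𝓞 K)) :=
  Nat.pos_of_ne_zero (Ideal.absNorm_ne_zero_of_nonZeroDivisors I)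

/-- the ideal P^(k+1) -/
noncomputable def nfPow (x : nfPP K) : (Ideal (𝓞 K))⁰ :=
  ⟨x.1.1 ^ (x.1.2 + 1), mem_nonZeroDivisors_iff_ne_zero.mpr (pow_ne_zero _ x.2.ne_zero)⟩

theorem nfPow_inj : Function.Injective (nfPow K) := by
  rintro ⟨⟨P, k⟩, hP⟩ ⟨⟨Q, l⟩, hQ⟩ h
  have h : P ^ (k + 1) = Q ^ (l + 1) := congrArg Subtype.val h
  have hP' : Prime P := hP
  have hQ' : Prime Q := hQ
  have h1 : P ∣ Q := hP'.dvd_of_dvd_pow (h ▸ dvd_pow_self P (Nat.succ_ne_zero k))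
  have h2 : P = Q := associated_iff_eq.mp (hP'.associated_of_dvd hQ' h1)
  subst h2
  have h3 := pow_injective_of_not_isUnit hP'.not_isUnit hP'.ne_zero h
  have : k = l := by omega
  subst this
  rfl

theorem nf_logsum (a : Ideal (𝓞 K)) (ha : a ≠ 0) :
    ∑ y ∈ (UniqueFactorizationMonoid.normalizedFactors a).toFinset.sigma
      (fun P => Finset.range ((UniqueFactorizationMonoid.normalizedFactors a).count P)),
      Real.log (Ideal.absNorm y.1) = Real.log (Ideal.absNorm a) := by
  rw [Finset.sum_sigma]
  simp only [Finset.sum_const, Finset.card_range]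
  rw [← Finset.sum_multiset_map_count]
  conv_rhs => rw [← Ideal.prod_normalizedFactors_eq_self ha]
  rw [map_multiset_prod, Nat.cast_multiset_prod, Real.log_multiset_prod]
  · simp
  · intro x hx
    simp only [Multiset.map_map, Multiset.mem_map] at hx
    obtain ⟨P, hP, rfl⟩ := hx
    have hP0 := (UniqueFactorizationMonoid.prime_of_normalized_factor P hP).ne_zero
    simpa [Ideal.absNorm_eq_zero_iff] using hP0

theorem nf_mem_T (a : Ideal (𝓞 K)) (ha : a ≠ 0) (P : Ideal (𝓞 K)) (k : ℕ) :
    (⟨P, k⟩ : (_ : Ideal (𝓞 K)) × ℕ) ∈ (UniqueFactorizationMonoid.normalizedFactors a).toFinset.sigma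
      (fun P => Finset.range ((UniqueFactorizationMonoid.normalizedFactors a).count P)) ↔
    Prime P ∧ P ^ (k + 1) ∣ a := by
  simp only [Finset.mem_sigma, Multiset.mem_toFinset, Finset.mem_range]
  have key : Prime P → (k < (UniqueFactorizationMonoid.normalizedFactors a).count P ↔ P ^ (k+1) ∣ a) := by
    intro hP
    rw [← Nat.succ_le_iff, Multiset.le_count_iff_replicate_le, pow_dvd_iff_le_emultiplicity,
      ← normalize_eq P, ← UniqueFactorizationMonoid.le_emultiplicity_iff_replicate_le_normalizedFactors hP.irreducible ha]
    simp
  constructor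
  · rintro ⟨h1, h2⟩
    have hP := UniqueFactorizationMonoid.prime_of_normalized_factor P h1
    exact ⟨hP, (key hP).mp h2⟩
  · rintro ⟨hP, h⟩
    have := (key hP).mpr h
    exact ⟨Multiset.count_pos.mp (by omega), this⟩

theorem nf_conv {s A B : ℂ} 
    (hA : HasSum (fun x : nfPP K => (Real.log (Ideal.absNorm x.1.1) : ℂ) *
      (Ideal.absNorm (nfPow K x : Ideal (𝓞 K)) : ℂ) ^ (-s)) A)
    (hB : HasSum (fun I : (Ideal (𝓞 K))⁰ => (Ideal.absNorm (I : Ideal (𝓞 K)) : ℂ) ^ (-s)) B) :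
    HasSum (fun I : (Ideal (𝓞 K))⁰ => (Real.log (Ideal.absNorm (I : Ideal (𝓞 K))) : ℂ) *
      (Ideal.absNorm (I : Ideal (𝓞 K)) : ℂ) ^ (-s)) (A * B) := by
  have hmul := hasSum_mul_complex hA hB
  rw [← (Equiv.sigmaFiberEquiv (fun y : nfPP K × (Ideal (𝓞 K))⁰ => nfPow K y.1 * y.2)).hasSum_iff] at hmul
  refine HasSum.sigma hmul fun a => ?_
  set T := (UniqueFactorizationMonoid.normalizedFactors (a : Ideal (𝓞 K))).toFinset.sigma
      (fun P => Finset.range ((UniqueFactorizationMonoid.normalizedFactors (a : Ideal (𝓞 K))).count P)) with hT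
  have ha0 : (a : Ideal (𝓞 K)) ≠ 0 := nonZeroDivisors.coe_ne_zero a
  have hmem : ∀ y : {y : nfPP K × (Ideal (𝓞 K))⁰ // nfPow K y.1 * y.2 = a}, y.1.1.1 ∈ T := by
    rintro ⟨⟨⟨⟨P, k⟩, hP⟩, c⟩, h⟩
    rw [hT, nf_mem_T K _ ha0]
    exact ⟨hP, (c : Ideal (𝓞 K)), (congrArg Subtype.val h).symm⟩
  let e : {y : nfPP K × (Ideal (𝓞 K))⁰ // nfPow K y.1 * y.2 = a} → T := fun y => ⟨y.1.1.1, hmem y⟩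
  have he : Function.Bijective e := by
    constructor
    · rintro ⟨⟨x, c⟩, h⟩ ⟨⟨x', c'⟩, h'⟩ hh
      have h1 : x = x' := Subtype.ext (congrArg (fun z : T => z.1) hh)
      subst h1
      have h2 : nfPow K x * c = nfPow K x * c' := h.trans h'.symm
      have h3 : c = c' := by
        have := congrArg Subtype.val h2
        exact Subtype.ext (mul_left_cancel₀ (nonZeroDivisors.coe_ne_zero (nfPow K x)) this)
      subst h3; rfl
    · rintro ⟨⟨P, k⟩, h⟩
      have h' := h
      rw [hT, nf_mem_T K _ ha0] at h'
      obtain ⟨hP, c, hc⟩ := h'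
      have hc0 : c ≠ 0 := by rintro rfl; simp at hc; exact ha0 hc
      exact ⟨⟨⟨⟨⟨P, k⟩, hP⟩, ⟨c, mem_nonZeroDivisors_iff_ne_zero.mpr hc0⟩⟩, Subtype.ext hc.symm⟩, rfl⟩
  have hfin := hasSum_fintype (fun y : T => (Real.log (Ideal.absNorm y.1.1) : ℂ) *
      (Ideal.absNorm (a : Ideal (𝓞 K)) : ℂ) ^ (-s)) (L := .unconditional _)
  rw [← Finset.sum_mul, Finset.sum_coe_sort T (fun y => (Real.log (Ideal.absNorm y.1) : ℂ)),
    ← Complex.ofReal_sum, hT, nf_logsum K _ ha0, ← (Equiv.ofBijective e he).hasSum_iff] at hfin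
  convert! hfin using 1
  funext y
  obtain ⟨⟨x, c⟩, h⟩ := y
  have h0 : Ideal.absNorm (a : Ideal (𝓞 K)) = Ideal.absNorm (nfPow K x : Ideal (𝓞 K)) *
      Ideal.absNorm (c : Ideal (𝓞 K)) := by
    rw [← map_mul]; exact congrArg _ (congrArg Subtype.val h).symm
  simp only [Function.comp, Equiv.sigmaFiberEquiv, Equiv.coe_fn_mk, Equiv.ofBijective_apply, e]
  rw [h0, Nat.cast_mul, Complex.natCast_mul_natCast_cpow]
  ring

end


section
open Filter Set Topology
open NumberField
open scoped Classical nonZeroDivisors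

variable (K : Type*) [Field K] [NumberField K]

/-- number of ideals of given norm -/
noncomputable def nfA (n : ℕ) : ℂ := Nat.card {I : Ideal (𝓞 K) // Ideal.absNorm I = n}

/-- the von Mangoldt coefficients of the number field -/
noncomputable def nfV (n : ℕ) : ℝ :=
  ∑' x : {x : nfPP K // Ideal.absNorm (nfPow K x : Ideal (𝓞 K)) = n}, Real.log (Ideal.absNorm x.1.1.1)

theorem nfPP_fin {n : ℕ} : Finite {x : nfPP K // Ideal.absNorm (nfPow K x : Ideal (𝓞 K)) = n} := by
  have := Ideal.finite_setOfPred_absNorm_eq (S := 𝓞 K) n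
  have : Finite {I : Ideal (𝓞 K) // Ideal.absNorm I = n} := this
  refine Finite.of_injective (β := {I : Ideal (𝓞 K) // Ideal.absNorm I = n})
    (fun x => ⟨nfPow K x.1, x.2⟩) fun x x' h => ?_
  exact Subtype.ext (nfPow_inj K (Subtype.ext (Subtype.mk.inj h)))

theorem nfV_nonneg (n : ℕ) : 0 ≤ nfV K n :=
  tsum_nonneg fun _ => Real.log_natCast_nonneg _

theorem nf_log_summable {σ : ℝ} (hσ : 1 < σ) : Summable (fun I : (Ideal (𝓞 K))⁰ =>
    Real.log (Ideal.absNorm (I : Ideal (𝓞 K))) * (Ideal.absNorm (I : Ideal (𝓞 K)) : ℝ) ^ (-σ)) := by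
  obtain ⟨Φ, _, h⟩ := nf_zeta K
  obtain ⟨S, hS, _⟩ := h (((1 + σ) / 2 : ℝ) : ℂ) (by rw [Complex.ofReal_re]; linarith)
  have hs := (hS.summable.norm).mul_left (1 / ((σ - 1) / 2))
  refine Summable.of_nonneg_of_le (fun I => mul_nonneg (Real.log_natCast_nonneg _) (by positivity)) (fun I => ?_) hs
  have hp : (0 : ℝ) < Ideal.absNorm (I : Ideal (𝓞 K)) := by exact_mod_cast nf_absNorm_pos K I
  have hε : 0 < (σ - 1) / 2 := by linarith
  have h1 := Real.log_le_rpow_div hp.le hε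
  have h2 : ‖((Ideal.absNorm (I : Ideal (𝓞 K)) : ℂ) ^ (-(((1 + σ) / 2 : ℝ) : ℂ)))‖ =
      (Ideal.absNorm (I : Ideal (𝓞 K)) : ℝ) ^ (-((1 + σ) / 2)) := by
    rw [Complex.norm_natCast_cpow_of_pos (nf_absNorm_pos K I)]
    simp
  rw [h2]
  calc _ ≤ _ := mul_le_mul_of_nonneg_right h1 (by positivity)
    _ = _ := by
      rw [div_mul_eq_mul_div, ← Real.rpow_add hp, div_eq_inv_mul, one_div]
      congr 2; ring

theorem nf_pp_summable {s : ℂ} (hs : 1 < s.re) :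
    Summable (fun x : nfPP K => (Real.log (Ideal.absNorm x.1.1) : ℂ) *
      (Ideal.absNorm (nfPow K x : Ideal (𝓞 K)) : ℂ) ^ (-s)) := by
  refine Summable.of_norm_bounded ((nf_log_summable K hs).comp_injective (nfPow_inj K)) fun x => ?_
  have hI := nf_absNorm_pos K (nfPow K x)
  simp only [Function.comp]
  rw [norm_mul, Complex.norm_natCast_cpow_of_pos hI, Complex.norm_real, Complex.neg_re,
    Real.norm_of_nonneg (Real.log_natCast_nonneg _)]
  refine mul_le_mul_of_nonneg_right ?_ (by positivity)
  have h0 : 0 < Ideal.absNorm x.1.1 := Nat.pos_of_ne_zero (by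
    rw [Ne, Ideal.absNorm_eq_zero_iff]; exact x.2.ne_zero)
  refine Real.log_le_log (by exact_mod_cast h0) ?_
  have : Ideal.absNorm (nfPow K x : Ideal (𝓞 K)) = Ideal.absNorm x.1.1 ^ (x.1.2 + 1) := by
    simp [nfPow]
  rw [this]
  exact_mod_cast Nat.le_self_pow (Nat.succ_ne_zero _) _

theorem nf_pp_LSeries {s A : ℂ} (h : HasSum (fun x : nfPP K => (Real.log (Ideal.absNorm x.1.1) : ℂ) *
      (Ideal.absNorm (nfPow K x : Ideal (𝓞 K)) : ℂ) ^ (-s)) A) :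
    LSeriesHasSum (fun n => (nfV K n : ℂ)) s A := by
  unfold LSeriesHasSum
  rw [← (Equiv.sigmaFiberEquiv (fun x : nfPP K => Ideal.absNorm (nfPow K x : Ideal (𝓞 K)))).hasSum_iff] at h
  refine HasSum.sigma h fun n => ?_
  have hf := nfPP_fin K (n := n)
  rcases eq_or_ne n 0 with rfl | hn
  · rw [LSeries.term_zero]
    have : IsEmpty {x : nfPP K // Ideal.absNorm (nfPow K x : Ideal (𝓞 K)) = 0} :=
      ⟨fun x => (nf_absNorm_pos K _).ne' x.2⟩
    exact hasSum_empty
  · rw [LSeries.term_of_ne_zero hn]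
    have := Fintype.ofFinite {x : nfPP K // Ideal.absNorm (nfPow K x : Ideal (𝓞 K)) = n}
    have h2 := hasSum_fintype (fun x : {x : nfPP K // Ideal.absNorm (nfPow K x : Ideal (𝓞 K)) = n} =>
      (Real.log (Ideal.absNorm x.1.1.1) : ℂ) * (n : ℂ) ^ (-s)) (L := .unconditional _)
    convert! h2 using 1
    · funext I
      simp [Equiv.sigmaFiberEquiv, I.2]
    · rw [nfV, tsum_fintype, ← Finset.sum_mul, Complex.cpow_neg, div_eq_mul_inv, Complex.ofReal_sum]

theorem nf_zeta_residue : ∃ Z : ℂ → ℂ,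
    DifferentiableOn ℂ Z {s | 1 - 1 / (Module.finrank ℚ K : ℝ) < s.re} ∧ Z 1 ≠ 0 ∧ ∀ s : ℂ, 1 < s.re →
      LSeriesSummable (nfA K) s ∧ (s - 1) * LSeries (nfA K) s = Z s ∧
      LSeriesSummable (fun n => (nfV K n : ℂ)) s ∧
      LSeries (fun n => (nfV K n : ℂ)) s * LSeries (nfA K) s = LSeries (LSeries.logMul (nfA K)) s := by
  obtain ⟨Z, hZ, h⟩ := nf_zeta K
  have hA : ∀ s : ℂ, 1 < s.re → LSeriesSummable (nfA K) s ∧ (s - 1) * LSeries (nfA K) s = Z s ∧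
      LSeriesSummable (fun n => (nfV K n : ℂ)) s ∧
      LSeries (fun n => (nfV K n : ℂ)) s * LSeries (nfA K) s = LSeries (LSeries.logMul (nfA K)) s := by
    intro s hs
    obtain ⟨S, hS, hS'⟩ := h s hs
    have h1 := nf_hasSum_LSeries K (fun _ => 1) (by simpa using hS)
    have h1' : LSeriesHasSum (nfA K) s S := by
      convert h1 using 2
      simp [nfA]
    obtain ⟨A, hP⟩ := nf_pp_summable K hs
    have h2 := nf_pp_LSeries K hP
    have h3 := nf_hasSum_LSeries K (fun n => (Real.log n : ℂ)) (nf_conv K hP hS)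
    have h3' : LSeriesHasSum (LSeries.logMul (nfA K)) s (A * S) := by
      convert h3 using 2
      simp [nfA, LSeries.logMul]
    exact ⟨h1'.LSeriesSummable, by rw [h1'.LSeries_eq, hS'], h2.LSeriesSummable,
      by rw [h1'.LSeries_eq, h2.LSeries_eq, h3'.LSeries_eq]⟩
  refine ⟨Z, hZ, ?_, hA⟩
  have hN : (0 : ℝ) < Module.finrank ℚ K := by exact_mod_cast Module.finrank_pos
  have hopen : IsOpen {s : ℂ | 1 - 1 / (Module.finrank ℚ K : ℝ) < s.re} :=
    isOpen_lt continuous_const Complex.continuous_re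
  have hc : ContinuousAt Z 1 := (hZ.continuousOn).continuousAt (hopen.mem_nhds (by
    simp only [Set.mem_ofPred_eq, Complex.one_re]; have := one_div_pos.mpr hN; linarith))
  have t1 := NumberField.tendsto_sub_one_mul_dedekindZeta_nhdsGT K
  have t2 : Tendsto (fun s : ℝ => Z s) (𝓝[>] 1) (𝓝 (Z 1)) := by
    have : Tendsto (fun s : ℝ => (s : ℂ)) (𝓝[>] 1) (𝓝 1) := by
      have := (Complex.continuous_ofReal.tendsto 1).mono_left (nhdsWithin_le_nhds (s := Set.Ioi 1))
      simpa using this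
    exact hc.tendsto.comp this
  have t3 := t1.congr' (f₂ := fun s : ℝ => Z s) (by
    filter_upwards [self_mem_nhdsWithin] with s hs
    rw [← (hA s (by simpa using hs)).2.1]
    rfl)
  rw [tendsto_nhds_unique t2 t3]
  simpa using NumberField.dedekindZeta_residue_ne_zero K

end


section
open Filter Set Topology

theorem nv_order {Z : ℂ → ℂ} {s₀ : ℂ} (hZ : AnalyticAt ℂ Z s₀) (hne : ¬ ∀ᶠ z in 𝓝 s₀, Z z = 0) :
    ∃ n : ℕ, (Z s₀ = 0 ↔ n ≠ 0) ∧ (∀ᶠ z in 𝓝[≠] s₀, Z z ≠ 0) ∧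
      Tendsto (fun z => (z - s₀) * deriv Z z / Z z) (𝓝[≠] s₀) (𝓝 n) := by
  obtain ⟨n, g, hg, hg0, h⟩ := hZ.exists_eventuallyEq_pow_smul_nonzero_iff.mpr hne
  have hgne : ∀ᶠ z in 𝓝 s₀, g z ≠ 0 := hg.continuousAt.eventually_ne hg0
  refine ⟨n, ?_, ?_, ?_⟩
  · rw [h.self_of_nhds]
    rcases eq_or_ne n 0 with rfl | hn
    · simp [hg0]
    · simp [hn]
  · filter_upwards [h.filter_mono nhdsWithin_le_nhds, hgne.filter_mono nhdsWithin_le_nhds,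
      self_mem_nhdsWithin] with z h1 h2 h3
    rw [h1]
    exact smul_ne_zero (pow_ne_zero _ (sub_ne_zero.mpr h3)) h2
  · have hlim : Tendsto (fun z => (n : ℂ) + (z - s₀) * deriv g z / g z) (𝓝[≠] s₀) (𝓝 n) := by
      have : ContinuousAt (fun z => (n : ℂ) + (z - s₀) * deriv g z / g z) s₀ := by
        have h1 := hg.deriv.continuousAt
        have h2 := hg.continuousAt
        fun_prop (disch := assumption)
      have := this.tendsto
      simp only [sub_self, zero_mul, zero_div, add_zero] at this
      exact this.mono_left nhdsWithin_le_nhds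
    refine hlim.congr' ?_
    filter_upwards [(h.eventually_nhds).filter_mono nhdsWithin_le_nhds,
      hgne.filter_mono nhdsWithin_le_nhds, (hg.eventually_analyticAt).filter_mono nhdsWithin_le_nhds,
      self_mem_nhdsWithin] with z h1 h2 h4 h3
    have hz : z - s₀ ≠ 0 := sub_ne_zero.mpr h3
    have hd : HasDerivAt Z ((n * (z - s₀) ^ (n - 1) * 1) * g z + (z - s₀) ^ n * deriv g z) z := by
      have := ((((hasDerivAt_id z).sub_const s₀).fun_pow n).mul h4.differentiableAt.hasDerivAt)
      refine (this.congr_of_eventuallyEq ?_)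
      filter_upwards [h1] with w hw
      rw [hw]; simp
    rw [hd.deriv, h1.self_of_nhds, smul_eq_mul]
    have hp : (z - s₀) ^ n ≠ 0 := pow_ne_zero _ hz
    have hpow : (n : ℂ) * (z - s₀) ^ (n - 1) * (z - s₀) = n * (z - s₀) ^ n := by
      rcases n with _ | n
      · simp
      · simp [pow_succ]; ring
    rw [eq_div_iff (mul_ne_zero hp h2), add_mul, div_mul_eq_mul_div, eq_comm]
    field_simp
    linear_combination (g z) * hpow

theorem nv_341 {v : ℕ → ℝ} (hv : ∀ n, 0 ≤ v n) {σ t : ℝ}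
    (h : ∀ s : ℂ, s.re = σ → LSeriesSummable (fun n => (v n : ℂ)) s) :
    0 ≤ (3 * LSeries (fun n => (v n : ℂ)) (σ : ℂ) + 4 * LSeries (fun n => (v n : ℂ)) (σ + t * Complex.I)
      + LSeries (fun n => (v n : ℂ)) (σ + (2 * t : ℝ) * Complex.I)).re := by
  have h1 : HasSum _ _ := (h (σ : ℂ) (by simp)).LSeriesHasSum
  have h2 : HasSum _ _ := (h (σ + t * Complex.I) (by simp)).LSeriesHasSum
  have h3 : HasSum _ _ := (h (σ + (2 * t : ℝ) * Complex.I) (by simp)).LSeriesHasSum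
  have := Complex.hasSum_re (((h1.mul_left 3).add (h2.mul_left 4)).add h3)
  refine this.nonneg fun n => ?_
  rcases eq_or_ne n 0 with rfl | hn
  · simp
  have hn' : (0 : ℝ) < n := by exact_mod_cast Nat.pos_of_ne_zero hn
  have key : ∀ u : ℝ, LSeries.term (fun n => (v n : ℂ)) (σ + u * Complex.I) n =
      ((v n * (n : ℝ) ^ (-σ) : ℝ) : ℂ) * Complex.exp (((-(u * Real.log n) : ℝ) : ℂ) * Complex.I) := by
    intro u
    rw [LSeries.term_of_ne_zero hn, div_eq_mul_inv, ← Complex.cpow_neg, neg_add,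
      Complex.cpow_add _ _ (by exact_mod_cast hn), Complex.ofReal_mul,
      Complex.ofReal_cpow hn'.le, mul_assoc]
    congr 2
    · push_cast; rfl
    · rw [Complex.cpow_def_of_ne_zero (by exact_mod_cast hn), ← Complex.natCast_log]
      congr 1; push_cast; ring
  have k1 := key 0
  simp only [Complex.ofReal_zero, zero_mul, add_zero, neg_zero, Complex.exp_zero, mul_one] at k1
  rw [k1, key, key]
  simp only [Complex.add_re, Complex.re_ofReal_mul, Complex.exp_ofReal_mul_I_re]
  have e3 : ((3 : ℂ) * ((v n * (n : ℝ) ^ (-σ) : ℝ) : ℂ)).re = 3 * (v n * (n : ℝ) ^ (-σ)) := by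
    rw [show (3 : ℂ) = ((3 : ℝ) : ℂ) by norm_num, ← Complex.ofReal_mul, Complex.ofReal_re]
  have e4 : ∀ w : ℂ, ((4 : ℂ) * w).re = 4 * w.re := by intro w; simp
  rw [e3, e4, Complex.re_ofReal_mul, Complex.exp_ofReal_mul_I_re]
  have hc : Real.cos (-(2 * t * Real.log n)) = 2 * Real.cos (-(t * Real.log n)) ^ 2 - 1 := by
    rw [← Real.cos_two_mul]; ring_nf
  rw [hc]
  have hw : 0 ≤ v n * (n : ℝ) ^ (-σ) := mul_nonneg (hv n) (by positivity)
  nlinarith [mul_nonneg hw (sq_nonneg (Real.cos (-(t * Real.log n)) + 1))]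


theorem nv_main {v : ℕ → ℝ} (hv : ∀ n, 0 ≤ v n) {A : ℕ → ℂ} {Z : ℂ → ℂ} {x : ℝ} (hx : x < 1)
    (hZ : DifferentiableOn ℂ Z {s | x < s.re}) (hZ1 : Z 1 ≠ 0)
    (h : ∀ s : ℂ, 1 < s.re → LSeriesSummable A s ∧ (s - 1) * LSeries A s = Z s ∧
      LSeriesSummable (fun n => (v n : ℂ)) s ∧
      LSeries (fun n => (v n : ℂ)) s * LSeries A s = LSeries (LSeries.logMul A) s)
    {B : ℝ} (hB : ∀ n : ℕ, ∑ k ∈ Finset.Icc 1 n, v k ≤ B * n) :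
    Tendsto (fun n : ℕ => (∑ k ∈ Finset.Icc 1 n, v k) / n) atTop (𝓝 1) := by
  set D := LSeries (fun n => (v n : ℂ)) with hD
  have hopen : IsOpen {s : ℂ | x < s.re} := isOpen_lt continuous_const Complex.continuous_re
  have hopen1 : IsOpen {s : ℂ | 1 < s.re} := isOpen_lt continuous_const Complex.continuous_re
  have han : AnalyticOnNhd ℂ Z {s | x < s.re} := hZ.analyticOnNhd hopen
  have habs : ∀ {f : ℕ → ℂ}, (∀ s : ℂ, 1 < s.re → LSeriesSummable f s) → ∀ s : ℂ, 1 < s.re →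
      LSeries.abscissaOfAbsConv f < s.re := by
    intro f hf s hs
    refine lt_of_le_of_lt (LSeries.abscissaOfAbsConv_le_of_forall_lt_LSeriesSummable
      (x := 1) fun y hy => hf y (by simpa using hy)) (by exact_mod_cast hs)
  -- key identity
  have key : ∀ s : ℂ, 1 < s.re → (s - 1) * D s * Z s = Z s - (s - 1) * deriv Z s := by
    intro s hs
    have hs1 : s - 1 ≠ 0 := by
      intro h0; rw [sub_eq_zero] at h0; rw [h0] at hs; simp at hs
    have e1 := (LSeries_hasDerivAt (habs (fun s hs => (h s hs).1) s hs))
    have e2 := (((hasDerivAt_id s).sub_const 1).mul e1)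
    have e3 : HasDerivAt Z _ s := e2.congr_of_eventuallyEq (by
      filter_upwards [hopen1.mem_nhds hs] with w hw
      rw [← (h w hw).2.1]; rfl)
    rw [e3.deriv, ← (h s hs).2.2.2, ← (h s hs).2.1]
    simp only [id]
    ring
  have hnz : ∀ s : ℂ, 1 ≤ s.re → ¬ ∀ᶠ z in 𝓝 s, Z z = 0 := by
    intro s hs h0
    have hconv : Convex ℝ {s : ℂ | x < s.re} := convex_halfSpace_re_gt x
    have := han.eqOn_zero_of_preconnected_of_eventuallyEq_zero hconv.isPreconnected
      (z₀ := s) (lt_of_lt_of_le hx hs) h0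
    exact hZ1 (this (by simpa using hx))
  -- limits
  have hpath : ∀ s₀ : ℂ, Tendsto (fun ε : ℝ => s₀ + ε) (𝓝[>] 0) (𝓝[≠] s₀) := by
    intro s₀
    refine tendsto_nhdsWithin_iff.mpr ⟨?_, ?_⟩
    · have : Continuous (fun ε : ℝ => s₀ + ε) := by fun_prop
      have := this.tendsto 0
      simp only [Complex.ofReal_zero, add_zero] at this
      exact this.mono_left nhdsWithin_le_nhds
    · filter_upwards [self_mem_nhdsWithin] with ε hε
      simpa using (ne_of_gt hε)
  have hlim : ∀ s₀ : ℂ, 1 ≤ s₀.re → ∃ n : ℕ, (Z s₀ = 0 ↔ n ≠ 0) ∧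
      Tendsto (fun ε : ℝ => (ε : ℂ) * D (s₀ + ε)) (𝓝[>] 0) (𝓝 ((if s₀ = 1 then 1 else 0) - n)) := by
    intro s₀ hs₀
    obtain ⟨n, hn, hne, ht⟩ := nv_order (han s₀ (lt_of_lt_of_le hx hs₀)) (hnz s₀ hs₀)
    refine ⟨n, hn, ?_⟩
    have t1 := ht.comp (hpath s₀)
    have t2 : Tendsto (fun ε : ℝ => (ε : ℂ) / (s₀ + ε - 1)) (𝓝[>] 0) (𝓝 (if s₀ = 1 then 1 else 0)) := by
      split_ifs with h1
      · subst h1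
        refine tendsto_const_nhds.congr' ?_
        filter_upwards [self_mem_nhdsWithin] with ε hε
        have : (ε : ℂ) ≠ 0 := by exact_mod_cast (ne_of_gt hε)
        rw [add_sub_cancel_left, div_self this]
      · have hc : ContinuousAt (fun ε : ℝ => (ε : ℂ) / (s₀ + ε - 1)) 0 := by
          have : s₀ + ((0 : ℝ) : ℂ) - 1 ≠ 0 := by simpa [sub_eq_zero] using h1
          fun_prop (disch := assumption)
        have := hc.tendsto
        simp only [Complex.ofReal_zero, zero_div] at this
        exact this.mono_left nhdsWithin_le_nhds
    refine (t2.sub t1).congr' ?_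
    filter_upwards [self_mem_nhdsWithin, (hpath s₀).eventually hne] with ε hε hz
    have hε' : 0 < ε := hε
    have hre : 1 < (s₀ + ε).re := by simp; linarith
    have hs1 : s₀ + ε - 1 ≠ 0 := by
      intro h0; rw [sub_eq_zero] at h0; rw [h0] at hre; simp at hre
    have hk := key _ hre
    simp only [Function.comp, add_sub_cancel_left]
    field_simp
    linear_combination -(ε : ℂ) * hk
  have hD1 : Tendsto (fun ε : ℝ => (ε : ℂ) * D (1 + ε)) (𝓝[>] 0) (𝓝 1) := by
    obtain ⟨n, hn, ht⟩ := hlim 1 (by simp)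
    have : n = 0 := by by_contra h0; exact hZ1 (hn.mpr h0)
    subst this
    simpa using ht
  have hne : ∀ s : ℂ, 1 ≤ s.re → Z s ≠ 0 := by
    intro s hs h0
    obtain ⟨n, hn, ht⟩ := hlim s hs
    have hn0 := hn.mp h0
    have hs1 : s ≠ 1 := by rintro rfl; exact hZ1 h0
    rw [if_neg hs1, zero_sub] at ht
    rcases hs.lt_or_eq with hs' | hs'
    · have hc : ContinuousAt D s :=
        (LSeries_hasDerivAt (habs (fun s hs => (h s hs).2.2.1) s hs')).continuousAt
      have c1 : Tendsto (fun ε : ℝ => D (s + ε)) (𝓝[>] 0) (𝓝 (D s)) :=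
        hc.tendsto.comp ((hpath s).mono_right nhdsWithin_le_nhds)
      have c2 : Tendsto (fun ε : ℝ => (ε : ℂ)) (𝓝[>] 0) (𝓝 0) := by
        have := (Complex.continuous_ofReal.tendsto 0).mono_left (nhdsWithin_le_nhds (s := Set.Ioi 0))
        simpa using this
      have c3 := c2.mul c1
      rw [zero_mul] at c3
      have := tendsto_nhds_unique ht c3
      rw [neg_eq_zero] at this
      exact hn0 (by exact_mod_cast this)
    · set t := s.im with htdef
      have hst : s = 1 + t * Complex.I := by
        apply Complex.ext <;> simp [← hs', htdef]
      have ht0 : t ≠ 0 := by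
        intro h0; rw [h0] at hst; simp at hst; exact hs1 hst
      obtain ⟨n2, -, ht2⟩ := hlim (1 + (2 * t : ℝ) * Complex.I) (by simp)
      rw [if_neg (by intro h; have := congrArg Complex.im h; simp at this; exact ht0 this), zero_sub] at ht2
      have tt := ((hD1.const_mul 3).add (ht.const_mul 4)).add ht2
      have tr := (Complex.continuous_re.tendsto _).comp tt
      have : 0 ≤ ((3 : ℂ) * 1 + 4 * -(n : ℂ) + -(n2 : ℂ)).re := by
        refine ge_of_tendsto tr ?_
        filter_upwards [self_mem_nhdsWithin] with ε hε
        have hε' : 0 < ε := hε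
        have := nv_341 hv (σ := 1 + ε) (t := t) (fun s hs => (h s (by rw [hs]; linarith)).2.2.1)
        have e2 : ((1 + ε : ℝ) : ℂ) + t * Complex.I = s + ε := by rw [hst]; push_cast; ring
        have e3 : ((1 + ε : ℝ) : ℂ) + (2 * t : ℝ) * Complex.I = 1 + (2 * t : ℝ) * Complex.I + ε := by
          push_cast; ring
        have e1 : ((1 + ε : ℝ) : ℂ) = 1 + ε := by push_cast; ring
        rw [e2, e3, e1] at this
        have e4 : (3 * (ε * D (1 + ε)) + 4 * (ε * D (s + ε)) + ε * D (1 + (2 * t : ℝ) * Complex.I + ε)) =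
          (ε : ℂ) * (3 * D (1 + ε) + 4 * D (s + ε) + D (1 + (2 * t : ℝ) * Complex.I + ε)) := by ring
        simp only [Function.comp]
        rw [e4, Complex.re_ofReal_mul]
        exact mul_nonneg hε'.le this
      have hn1 : (1 : ℝ) ≤ n := by exact_mod_cast Nat.one_le_iff_ne_zero.mpr hn0
      have hn2 : (0 : ℝ) ≤ n2 := by positivity
      simp at this
      linarith
  refine pit_dirichlet hv hB (H := fun s => -(deriv Z s / Z s)) ?_ ?_
  · have c1 : ContinuousOn (deriv Z) {s : ℂ | 1 ≤ s.re} :=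
      (hZ.deriv hopen).continuousOn.mono fun s hs => lt_of_lt_of_le hx hs
    have c2 : ContinuousOn Z {s : ℂ | 1 ≤ s.re} :=
      hZ.continuousOn.mono fun s hs => lt_of_lt_of_le hx hs
    exact (c1.div c2 fun s hs => hne s hs).neg
  · intro s hs
    have hs1 : s - 1 ≠ 0 := by
      intro h0; rw [sub_eq_zero] at h0; rw [h0] at hs; simp at hs
    have hz := hne s hs.le
    have hk := key s hs
    change D s = _
    field_simp
    linear_combination hk

end


section
open Filter Set Topology
open NumberField
open scoped Classical nonZeroDivisors

variable (K : Type*) [Field K] [NumberField K]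

theorem nf_absNorm_prime_nat (p : ℕ) : Ideal.absNorm (Ideal.span {(p : 𝓞 K)}) = p ^ Module.finrank ℚ K := by
  rw [Ideal.absNorm_span_singleton]
  have := Algebra.norm_algebraMap (S := 𝓞 K) (p : ℤ)
  rw [map_natCast] at this
  rw [this, Int.natAbs_pow, Int.natAbs_natCast, RingOfIntegers.rank]

theorem nf_prime_rat {P : Ideal (𝓞 K)} (hP : Prime P) : ∃ p : ℕ, p.Prime ∧ (p : 𝓞 K) ∈ P ∧
    ∃ f : ℕ, f ≠ 0 ∧ Ideal.absNorm P = p ^ f := by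
  have hp := Ideal.isPrime_of_prime hP
  have : NeZero P := ⟨hP.ne_zero⟩
  have h1 := Nat.absNorm_under_prime P
  have h2 : ((Ideal.absNorm (Ideal.under ℤ P) : ℕ) : 𝓞 K) ∈ P := by
    have := Ideal.absNorm_mem (Ideal.under ℤ P)
    rw [Ideal.mem_comap] at this
    simpa using this
  refine ⟨_, h1, h2, ?_⟩
  have h3 : P ∣ Ideal.span {((Ideal.absNorm (Ideal.under ℤ P) : ℕ) : 𝓞 K)} :=
    Ideal.dvd_span_singleton.mpr h2
  have h4 := map_dvd (Ideal.absNorm (S := 𝓞 K)) h3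
  rw [nf_absNorm_prime_nat, Nat.dvd_prime_pow h1] at h4
  obtain ⟨f, -, hf⟩ := h4
  refine ⟨f, ?_, hf⟩
  rintro rfl
  rw [pow_zero, Ideal.absNorm_eq_one_iff] at hf
  exact hp.ne_top hf

theorem nfPow_norm (x : nfPP K) : Ideal.absNorm (nfPow K x : Ideal (𝓞 K)) = Ideal.absNorm x.1.1 ^ (x.1.2 + 1) := by
  simp [nfPow]

theorem nfV_le (n : ℕ) : nfV K n ≤ Module.finrank ℚ K * ArithmeticFunction.vonMangoldt n := by
  have hf := nfPP_fin K (n := n)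
  have := Fintype.ofFinite {x : nfPP K // Ideal.absNorm (nfPow K x : Ideal (𝓞 K)) = n}
  rcases isEmpty_or_nonempty {x : nfPP K // Ideal.absNorm (nfPow K x : Ideal (𝓞 K)) = n} with he | ⟨⟨x₀, hx₀⟩⟩
  · rw [nfV, tsum_empty]
    exact mul_nonneg (by positivity) ArithmeticFunction.vonMangoldt_nonneg
  · obtain ⟨p, hp, -, f, hf0, hf1⟩ := nf_prime_rat K x₀.2
    have hn : n = p ^ (f * (x₀.1.2 + 1)) := by
      rw [← hx₀, nfPow_norm, hf1, pow_mul]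
    have hL : ArithmeticFunction.vonMangoldt n = Real.log p := by
      rw [hn, ArithmeticFunction.vonMangoldt_apply_pow (by positivity),
        ArithmeticFunction.vonMangoldt_apply_prime hp]
    rw [nfV, tsum_fintype, hL]
    have hmem : ∀ x : {x : nfPP K // Ideal.absNorm (nfPow K x : Ideal (𝓞 K)) = n},
        x.1.1.1 ∣ Ideal.span {(p : 𝓞 K)} := by
      rintro ⟨x, hx⟩
      rw [Ideal.dvd_span_singleton]
      change (p : 𝓞 K) ∈ x.1.1
      have hP := Ideal.isPrime_of_prime x.2
      have h1 : ((n : ℕ) : 𝓞 K) ∈ x.1.1 := by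
        rw [← hx, nfPow_norm, Nat.cast_pow]
        exact Ideal.pow_mem_of_mem _ (Ideal.absNorm_mem _) _ (Nat.succ_pos _)
      rw [hn, Nat.cast_pow] at h1
      exact hP.mem_of_pow_mem _ h1
    have hinj : Function.Injective (fun x : {x : nfPP K // Ideal.absNorm (nfPow K x : Ideal (𝓞 K)) = n} =>
        x.1.1.1) := by
      rintro ⟨⟨⟨P, k⟩, hP⟩, h⟩ ⟨⟨⟨Q, l⟩, hQ⟩, h'⟩ hh
      have hh : P = Q := hh
      subst hh
      have h1 : Ideal.absNorm P ^ (k + 1) = Ideal.absNorm P ^ (l + 1) := by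
        rw [nfPow_norm] at h h'
        exact h.trans h'.symm
      obtain ⟨p, hp, -, f, hf0, hf1⟩ := nf_prime_rat K hP
      have h2 : 2 ≤ Ideal.absNorm P := by
        rw [hf1]; exact hp.two_le.trans (Nat.le_self_pow hf0 p)
      have := Nat.pow_right_injective h2 h1
      have : k = l := by omega
      subst this; rfl
    have hprod : ∏ x : {x : nfPP K // Ideal.absNorm (nfPow K x : Ideal (𝓞 K)) = n}, x.1.1.1 ∣
        Ideal.span {(p : 𝓞 K)} := by
      have := Finset.prod_primes_dvd (s := Finset.univ.map ⟨_, hinj⟩) (Ideal.span {(p : 𝓞 K)})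
        (by simp only [Finset.mem_map]; rintro _ ⟨x, -, rfl⟩; exact x.1.2)
        (by simp only [Finset.mem_map]; rintro _ ⟨x, -, rfl⟩; exact hmem x)
      rw [Finset.prod_map] at this
      exact this
    have h5 := map_dvd (Ideal.absNorm (S := 𝓞 K)) hprod
    rw [nf_absNorm_prime_nat, map_prod] at h5
    have h6 := Nat.le_of_dvd (pow_pos hp.pos _) h5
    have hpos : ∀ x : {x : nfPP K // Ideal.absNorm (nfPow K x : Ideal (𝓞 K)) = n},
        (Ideal.absNorm x.1.1.1 : ℝ) ≠ 0 := by
      intro x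
      have := x.1.2.ne_zero
      simpa [Ideal.absNorm_eq_zero_iff] using this
    rw [← Real.log_prod fun x _ => hpos x, ← Real.log_pow]
    refine Real.log_le_log (Finset.prod_pos fun x _ => lt_of_le_of_ne (by positivity) (hpos x).symm) ?_
    exact_mod_cast h6

theorem nfV_prime {p : ℕ} (hp : p.Prime) :
    nfV K p = Nat.card {P : Ideal (𝓞 K) // Ideal.absNorm P = p} * Real.log p := by
  have hf := nfPP_fin K (n := p)
  have := Fintype.ofFinite {x : nfPP K // Ideal.absNorm (nfPow K x : Ideal (𝓞 K)) = p}
  have hk : ∀ x : {x : nfPP K // Ideal.absNorm (nfPow K x : Ideal (𝓞 K)) = p},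
      x.1.1.2 = 0 ∧ Ideal.absNorm x.1.1.1 = p := by
    rintro ⟨⟨⟨P, k⟩, hP⟩, h⟩
    rw [nfPow_norm] at h
    have h : Ideal.absNorm P ^ (k + 1) = p := h
    have hk0 : k = 0 := by
      by_contra hk
      exact Nat.Prime.not_prime_pow (x := Ideal.absNorm P) (n := k + 1) (by omega) (h ▸ hp)
    subst hk0
    exact ⟨rfl, by simpa using h⟩
  rw [nfV, tsum_fintype, Finset.sum_congr rfl fun x _ => by rw [(hk x).2], Finset.sum_const, Finset.card_univ,
    nsmul_eq_mul, ← Nat.card_eq_fintype_card]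
  congr 2
  refine Nat.card_congr ⟨fun x => ⟨x.1.1.1, (hk x).2⟩, fun P => ⟨⟨⟨P.1, 0⟩, ?_⟩, ?_⟩, ?_, ?_⟩
  · have h1 : P.1.IsPrime := Ideal.isPrime_of_irreducible_absNorm (by rw [P.2]; exact hp)
    refine (Ideal.prime_iff_isPrime ?_).mpr h1
    intro h0
    have h0 : P.1 = ⊥ := h0
    have := P.2
    rw [h0] at this
    simp at this
    exact hp.ne_zero this.symm
  · rw [nfPow_norm]; simpa using P.2
  · rintro ⟨⟨⟨P, k⟩, hP⟩, h⟩
    have := (hk ⟨⟨⟨P, k⟩, hP⟩, h⟩).1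
    simp only at this
    subst this
    rfl
  · intro P; rfl

theorem nf_pnt : Tendsto (fun y : ℕ => (∑ p ∈ Finset.Icc 1 y with p.Prime,
    (Nat.card {P : Ideal (𝓞 K) // Ideal.absNorm P = p} : ℝ) * Real.log p) / y) atTop (𝓝 1) := by
  obtain ⟨Z, hZ, hZ1, h⟩ := nf_zeta_residue K
  have hN : (0 : ℝ) < Module.finrank ℚ K := by exact_mod_cast Module.finrank_pos
  have hIoc : ∀ n : ℕ, Finset.Icc 1 n = Finset.Ioc 0 n := fun n => by ext; simp [Nat.succ_le_iff]
  have hmain := nv_main (nfV_nonneg K) (x := 1 - 1 / (Module.finrank ℚ K : ℝ))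
    (by have := one_div_pos.mpr hN; linarith) hZ hZ1 h (B := Module.finrank ℚ K * (Real.log 4 + 4)) (by
      intro n
      have h1 := Chebyshev.psi_le_const_mul_self (x := n) (by positivity)
      rw [Chebyshev.psi, Nat.floor_natCast] at h1
      calc _ ≤ ∑ k ∈ Finset.Icc 1 n, Module.finrank ℚ K * ArithmeticFunction.vonMangoldt k :=
            Finset.sum_le_sum fun k _ => nfV_le K k
        _ ≤ _ := by
          rw [← Finset.mul_sum, hIoc, mul_assoc]
          exact mul_le_mul_of_nonneg_left h1 hN.le)
  obtain ⟨C, hC⟩ := Chebyshev.psi_sub_theta_le_mul_sqrt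
  have hdiff : Tendsto (fun y : ℕ => (∑ p ∈ Finset.Icc 1 y with ¬ p.Prime, nfV K p) / y) atTop (𝓝 0) := by
    have hsq : Tendsto (fun y : ℕ => Module.finrank ℚ K * C * (√(y : ℝ))⁻¹) atTop (𝓝 0) := by
      have : Tendsto (fun y : ℕ => (√(y : ℝ))⁻¹) atTop (𝓝 0) :=
        tendsto_inv_atTop_zero.comp (Real.tendsto_sqrt_atTop.comp tendsto_natCast_atTop_atTop)
      simpa using this.const_mul (Module.finrank ℚ K * C)
    refine squeeze_zero (fun y => div_nonneg (Finset.sum_nonneg fun p _ => nfV_nonneg K p) (by positivity)) ?_ hsq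
    intro y
    have h1 := hC y
    rw [Chebyshev.psi_sub_theta_eq_sum_not_prime, Nat.floor_natCast] at h1
    have h2 : ∑ p ∈ Finset.Icc 1 y with ¬ p.Prime, nfV K p ≤ Module.finrank ℚ K * (C * √(y : ℝ)) := by
      calc _ ≤ ∑ k ∈ Finset.Icc 1 y with ¬ k.Prime, Module.finrank ℚ K * ArithmeticFunction.vonMangoldt k :=
            Finset.sum_le_sum fun k _ => nfV_le K k
        _ ≤ _ := by
          rw [← Finset.mul_sum, hIoc]
          exact mul_le_mul_of_nonneg_left h1 hN.le
    rcases Nat.eq_zero_or_pos y with rfl | hy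
    · simp
    have hy' : (0 : ℝ) < y := by exact_mod_cast hy
    have hsy : 0 < √(y : ℝ) := Real.sqrt_pos.mpr hy'
    rw [div_le_iff₀ hy']
    calc _ ≤ _ := h2
      _ = _ := by
        nth_rw 3 [← Real.mul_self_sqrt hy'.le]
        field_simp
  have := hmain.sub hdiff
  rw [sub_zero] at this
  refine this.congr fun y => ?_
  rw [← sub_div]
  congr 1
  rw [← Finset.sum_filter_add_sum_filter_not (Finset.Icc 1 y) Nat.Prime (nfV K), add_sub_cancel_right]
  exact Finset.sum_congr rfl fun p hp => nfV_prime K (Finset.mem_filter.mp hp).2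

end


section
open Filter Set Topology
open NumberField
open scoped Classical nonZeroDivisors

variable {L : Type*} [Field L] [NumberField L]

theorem al_index {S : Set (𝓞 L)} (hgen : ∀ x : L, x ∈ Algebra.adjoin ℚ ((algebraMap (𝓞 L) L) '' S)) :
    ∃ f : ℕ, f ≠ 0 ∧ ∀ x : 𝓞 L, (f : 𝓞 L) * x ∈ Subring.closure S := by
  have h1 : ∀ x : L, ∃ f : ℕ, f ≠ 0 ∧ ∃ y ∈ Subring.closure S, (f : L) * x = algebraMap (𝓞 L) L y := by
    intro x
    induction hgen x using Algebra.adjoin_induction with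
    | mem x hx =>
      obtain ⟨a, ha, rfl⟩ := hx
      exact ⟨1, one_ne_zero, a, Subring.subset_closure ha, by simp⟩
    | algebraMap r =>
      refine ⟨r.den, r.den_nz, (r.num : 𝓞 L), intCast_mem _ _, ?_⟩
      have : (r.den : ℚ) * r = r.num := Rat.den_mul_eq_num r
      have h2 := congrArg (algebraMap ℚ L) this
      rw [map_mul, map_natCast, map_intCast] at h2
      rw [h2, map_intCast]
    | add x y _ _ hx hy =>
      obtain ⟨f, hf, a, ha, h⟩ := hx
      obtain ⟨g, hg, b, hb, h'⟩ := hy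
      refine ⟨f * g, mul_ne_zero hf hg, g * a + f * b,
        add_mem (mul_mem (natCast_mem _ _) ha) (mul_mem (natCast_mem _ _) hb), ?_⟩
      simp only [map_add, map_mul, map_natCast, Nat.cast_mul]
      rw [← h, ← h']
      ring
    | mul x y _ _ hx hy =>
      obtain ⟨f, hf, a, ha, h⟩ := hx
      obtain ⟨g, hg, b, hb, h'⟩ := hy
      refine ⟨f * g, mul_ne_zero hf hg, a * b, mul_mem ha hb, ?_⟩
      simp only [map_add, map_mul, map_natCast, Nat.cast_mul]
      rw [← h, ← h']
      ring
  have h2 : ∀ x : 𝓞 L, ∃ f : ℕ, f ≠ 0 ∧ (f : 𝓞 L) * x ∈ Subring.closure S := by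
    intro x
    obtain ⟨f, hf, y, hy, h⟩ := h1 x
    refine ⟨f, hf, ?_⟩
    have : (f : 𝓞 L) * x = y := by
      apply FaithfulSMul.algebraMap_injective (𝓞 L) L
      rw [map_mul, map_natCast]; exact h
    rwa [this]
  choose F hF hF' using h2
  obtain ⟨T, hT⟩ := (Module.Finite.fg_top : (⊤ : Submodule ℤ (𝓞 L)).FG)
  refine ⟨∏ t ∈ T, F t, Finset.prod_ne_zero_iff.mpr fun t _ => hF t, fun x => ?_⟩
  have hx : x ∈ Submodule.span ℤ (T : Set (𝓞 L)) := by rw [hT]; trivial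
  induction hx using Submodule.span_induction with
  | mem x hx =>
    have hx : x ∈ T := hx
    rw [← Finset.mul_prod_erase _ _ hx, Nat.cast_mul, mul_assoc, mul_comm, mul_assoc, mul_comm x]
    exact mul_mem (natCast_mem _ _) (hF' x)
  | zero => simp
  | add x y _ _ hx hy => rw [mul_add]; exact add_mem hx hy
  | smul a x _ hx => rw [mul_smul_comm]; exact zsmul_mem hx a

theorem al_card_le {R : Type*} [CommRing R] [IsDomain R] {p : ℕ} (hp : 1 < p)
    (h : ∀ y : R, y ^ p = y) : Nat.card R ≤ p := by
  have hX : (Polynomial.X ^ p - Polynomial.X : Polynomial R) ≠ 0 := by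
    intro h0
    have := congrArg (fun f => Polynomial.coeff f p) h0
    simp [Polynomial.coeff_X, hp.ne] at this
  have hdeg : (Polynomial.X ^ p - Polynomial.X : Polynomial R).natDegree ≤ p := by
    refine (Polynomial.natDegree_sub_le _ _).trans ?_
    simp [hp.le]
  have hsub : (Set.univ : Set R) ⊆ (Polynomial.X ^ p - Polynomial.X : Polynomial R).roots.toFinset := by
    intro y _
    rw [Finset.mem_coe, Multiset.mem_toFinset, Polynomial.mem_roots hX]
    simp [Polynomial.IsRoot.def, h y]
  rw [← Set.ncard_univ]
  refine (Set.ncard_le_ncard hsub (Finset.finite_toSet _)).trans ?_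
  rw [Set.ncard_coe_finset]
  exact (Multiset.toFinset_card_le _).trans ((Polynomial.card_roots' _).trans hdeg)

theorem al_norm {p : ℕ} (hp : p.Prime) (h : ∀ x : 𝓞 L, x ^ p - x ∈ Ideal.span {(p : 𝓞 L)})
    {P : Ideal (𝓞 L)} (hP : Prime P) (hPI : P ∣ Ideal.span {(p : 𝓞 L)}) : Ideal.absNorm P = p := by
  have hle : Ideal.span {(p : 𝓞 L)} ≤ P := Ideal.le_of_dvd hPI
  have hPp := Ideal.isPrime_of_prime hP
  have h4 := map_dvd (Ideal.absNorm (S := 𝓞 L)) hPI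
  rw [nf_absNorm_prime_nat, Nat.dvd_prime_pow hp] at h4
  obtain ⟨f, -, hf⟩ := h4
  have hne1 : Ideal.absNorm P ≠ 1 := by
    rw [Ne, Ideal.absNorm_eq_one_iff]; exact hPp.ne_top
  have hle' : Ideal.absNorm P ≤ p := by
    rw [Ideal.absNorm_apply, Submodule.cardQuot_apply]
    refine al_card_le (R := 𝓞 L ⧸ P) hp.one_lt fun y => ?_
    obtain ⟨x, rfl⟩ := Ideal.Quotient.mk_surjective y
    rw [← sub_eq_zero, ← map_pow, ← map_sub, Ideal.Quotient.eq_zero_iff_mem]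
    exact hle (h x)
  rw [hf] at hne1 hle' ⊢
  have hf1 : f ≠ 0 := by rintro rfl; simp at hne1
  exact le_antisymm hle' (Nat.le_self_pow hf1 p)

theorem al_sqfree {p : ℕ} (hp : p.Prime) {I : Ideal (𝓞 L)} (hI0 : I ≠ 0) (h : ∀ x : 𝓞 L, x ^ p - x ∈ I) :
    (UniqueFactorizationMonoid.normalizedFactors I).Nodup := by
  rw [Multiset.nodup_iff_count_le_one]
  intro P
  by_contra hc
  push Not at hc
  have hP := UniqueFactorizationMonoid.prime_of_normalized_factor P
    (Multiset.count_pos.mp (by omega : 0 < Multiset.count P (UniqueFactorizationMonoid.normalizedFactors I)))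
  have h2 := ((nf_mem_T L I hI0 P 1).mp (by
    simp only [Finset.mem_sigma, Multiset.mem_toFinset, Finset.mem_range]
    exact ⟨Multiset.count_pos.mp (by omega), hc⟩)).2
  obtain ⟨J, hJ⟩ := h2
  have hJ0 : J ≠ 0 := by rintro rfl; simp at hJ; exact hI0 hJ
  have hnle : ¬ P * J ≤ I := by
    intro hle
    have hd := Ideal.dvd_iff_le.mpr hle
    rw [hJ] at hd
    have : P ^ (1 + 1) * J = (P * J) * P := by ring
    rw [this] at hd
    obtain ⟨c, hc⟩ := hd
    have hPJ := mul_ne_zero hP.ne_zero hJ0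
    have : (1 : Ideal (𝓞 L)) = P * c := by
      apply mul_left_cancel₀ hPJ
      rw [mul_one, ← mul_assoc]; exact hc
    exact hP.not_isUnit (isUnit_iff_dvd_one.mpr ⟨c, this⟩)
  obtain ⟨x, hx, hxI⟩ := SetLike.not_le_iff_exists.mp hnle
  have hx2 : x ^ 2 ∈ I := by
    have : x * x ∈ (P * J) * (P * J) := Ideal.mul_mem_mul hx hx
    have e : (P * J) * (P * J) = I * J := by rw [hJ]; ring
    rw [e] at this
    rw [sq]; exact Ideal.le_of_dvd (Dvd.intro J rfl) this
  have hxp : x ^ p ∈ I := by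
    obtain ⟨k, hk⟩ := Nat.exists_eq_add_of_le hp.two_le
    rw [hk, pow_add]; exact Ideal.mul_mem_right _ _ hx2
  apply hxI
  have := I.sub_mem hxp (h x)
  simpa using this

/-- if Frobenius is trivial modulo p then p splits completely -/
theorem al_split {p : ℕ} (hp : p.Prime) (h : ∀ x : 𝓞 L, x ^ p - x ∈ Ideal.span {(p : 𝓞 L)}) :
    Nat.card {P : Ideal (𝓞 L) // Ideal.absNorm P = p} = Module.finrank ℚ L := by
  have hp0 : (p : 𝓞 L) ≠ 0 := by exact_mod_cast hp.ne_zero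
  set I : Ideal (𝓞 L) := Ideal.span {(p : 𝓞 L)} with hI
  have hI0 : I ≠ 0 := by simpa [hI] using hp0
  have hnd := al_sqfree hp hI0 h
  have hcard : Multiset.card (UniqueFactorizationMonoid.normalizedFactors I) = Module.finrank ℚ L := by
    have h1 : Ideal.absNorm I = p ^ Multiset.card (UniqueFactorizationMonoid.normalizedFactors I) := by
      conv_lhs => rw [← Ideal.prod_normalizedFactors_eq_self hI0]
      rw [map_multiset_prod, Multiset.map_congr rfl (g := fun _ => p), Multiset.map_const', Multiset.prod_replicate]
      intro P hP
      exact al_norm hp h (UniqueFactorizationMonoid.prime_of_normalized_factor P hP)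
        (UniqueFactorizationMonoid.dvd_of_mem_normalizedFactors hP)
    rw [hI, nf_absNorm_prime_nat] at h1
    exact (Nat.pow_right_injective hp.two_le h1).symm
  rw [← hcard, ← Multiset.toFinset_card_of_nodup hnd, ← Fintype.card_coe, ← Nat.card_eq_fintype_card]
  refine Nat.card_congr (Equiv.subtypeEquivRight fun P => ?_)
  rw [Multiset.mem_toFinset]
  constructor
  · intro hP
    have h1 : P.IsPrime := Ideal.isPrime_of_irreducible_absNorm (by rw [hP]; exact hp)
    have h2 := Ideal.absNorm_mem P
    rw [hP] at h2
    exact (Ideal.mem_normalizedFactors_iff hI0).mpr ⟨h1, by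
      rw [hI, Ideal.span_singleton_le_iff_mem]; exact h2⟩
  · intro hP
    exact al_norm hp h (UniqueFactorizationMonoid.prime_of_normalized_factor P hP)
        (UniqueFactorizationMonoid.dvd_of_mem_normalizedFactors hP)

end


section
open Filter Set Topology
open NumberField
open scoped Classical nonZeroDivisors

variable {L : Type*} [Field L] [NumberField L]

theorem al_frob {p f : ℕ} (hp : p.Prime) (hfp : ¬ p ∣ f) {S : Set (𝓞 L)}
    (hf : ∀ x : 𝓞 L, (f : 𝓞 L) * x ∈ Subring.closure S) {I : Ideal (𝓞 L)} (hI : (p : 𝓞 L) ∈ I)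
    (hS : ∀ x ∈ S, x ^ p - x ∈ I) (x : 𝓞 L) : x ^ p - x ∈ I := by
  rcases eq_or_ne I ⊤ with rfl | hItop
  · trivial
  have : Nontrivial (𝓞 L ⧸ I) := Ideal.Quotient.nontrivial_iff.mpr hItop
  have hpI : ((p : ℕ) : 𝓞 L ⧸ I) = 0 := by
    rw [← map_natCast (Ideal.Quotient.mk I), Ideal.Quotient.eq_zero_iff_mem]; exact hI
  have hchar : CharP (𝓞 L ⧸ I) p := (CharP.charP_iff_prime_eq_zero hp).mpr hpI
  have : Fact p.Prime := ⟨hp⟩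
  have : ExpChar (𝓞 L ⧸ I) p := ExpChar.prime hp
  let φ : 𝓞 L →+* 𝓞 L ⧸ I := (frobenius (𝓞 L ⧸ I) p).comp (Ideal.Quotient.mk I)
  have hφ : ∀ y, φ y = Ideal.Quotient.mk I (y ^ p) := fun y => by simp [φ, frobenius_def]
  have hcl : Subring.closure S ≤ RingHom.eqLocus φ (Ideal.Quotient.mk I) := by
    rw [Subring.closure_le]
    intro y hy
    change φ y = Ideal.Quotient.mk I y
    rw [hφ, Ideal.Quotient.eq]
    exact hS y hy
  have h1 : φ (f * x) = Ideal.Quotient.mk I (f * x) := hcl (hf x)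
  rw [map_mul, map_mul, map_natCast, map_natCast] at h1
  have hu : IsUnit ((f : ℕ) : 𝓞 L ⧸ I) := by
    have hc : Nat.Coprime f p := (Nat.Coprime.symm ((Nat.Prime.coprime_iff_not_dvd hp).mpr hfp))
    obtain ⟨a, b, hab⟩ := Nat.isCoprime_iff_coprime.mpr hc
    refine IsUnit.of_mul_eq_one ((a : ℤ) : 𝓞 L ⧸ I) ?_
    have := congrArg (fun z : ℤ => (z : 𝓞 L ⧸ I)) hab
    push_cast at this
    rw [hpI, mul_zero, add_zero] at this
    rw [mul_comm]; exact this
  have h2 := hu.mul_left_cancel h1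
  rw [hφ, Ideal.Quotient.eq] at h2
  exact h2

theorem al_count {n d : ℕ} (hn : 0 < n) (hd : d ∣ n) (q : ℤ) {ζ α : 𝓞 L} (hζ : IsPrimitiveRoot ζ n)
    (hα : α ^ d = (q : 𝓞 L))
    (hgen : ∀ x : L, x ∈ Algebra.adjoin ℚ ((algebraMap (𝓞 L) L) '' {ζ, α})) :
    ∃ B : ℕ, ∀ p : ℕ, p.Prime → B < p → Nat.card {P : Ideal (𝓞 L) // Ideal.absNorm P = p} =
      if (n ∣ p - 1 ∧ ∃ x : ZMod p, x ^ d = (q : ZMod p)) then Module.finrank ℚ L else 0 := by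
  obtain ⟨f, hf0, hf⟩ := al_index hgen
  have hd0 : d ≠ 0 := (Nat.pos_of_dvd_of_pos hd hn).ne'
  refine ⟨max f (max n q.natAbs), fun p hp hB => ?_⟩
  have hBf : f < p := lt_of_le_of_lt (le_max_left _ _) hB
  have hBn : n < p := lt_of_le_of_lt ((le_max_left _ _).trans (le_max_right _ _)) hB
  have hBq : q.natAbs < p := lt_of_le_of_lt ((le_max_right _ _).trans (le_max_right _ _)) hB
  have : Fact p.Prime := ⟨hp⟩
  split_ifs with hA
  · obtain ⟨hnp, x₀, hx₀⟩ := hA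
    refine al_split hp fun x => ?_
    refine al_frob hp (fun h => absurd (Nat.le_of_dvd (Nat.pos_of_ne_zero hf0) h) (by omega)) hf
      (Ideal.mem_span_singleton_self _) ?_ x
    have hpp : p = (p - 1) + 1 := by have := hp.pos; omega
    rintro y (rfl | rfl)
    · obtain ⟨k, hk⟩ := hnp
      have : y ^ p = y := by
        rw [hpp, pow_succ, hk, pow_mul, hζ.pow_eq_one, one_pow, one_mul]
      rw [this, sub_self]; exact Ideal.zero_mem _
    · rcases eq_or_ne q 0 with hq | hq
      · rw [hq, Int.cast_zero] at hα
        have : y = 0 := eq_zero_of_pow_eq_zero hα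
        rw [this, zero_pow hp.ne_zero, sub_zero]
        exact Ideal.zero_mem _
      · obtain ⟨k, hk⟩ := hd.trans hnp
        have hqp : (q : ZMod p) ≠ 0 := by
          rw [Ne, ZMod.intCast_zmod_eq_zero_iff_dvd]
          intro hdv
          have := Int.natAbs_dvd_natAbs.mpr hdv
          have := Nat.le_of_dvd (Int.natAbs_pos.mpr hq) this
          simp at this
          omega
        have hx0 : x₀ ≠ 0 := by
          rintro rfl; rw [zero_pow hd0] at hx₀; exact hqp hx₀.symm
        have h1 : (q : ZMod p) ^ k = 1 := by
          rw [← hx₀, ← pow_mul, ← hk]; exact ZMod.pow_card_sub_one_eq_one hx0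
        have h2 : (p : ℤ) ∣ q ^ k - 1 := by
          rw [← ZMod.intCast_zmod_eq_zero_iff_dvd]
          push_cast
          rw [h1, sub_self]
        obtain ⟨c, hc⟩ := h2
        rw [Ideal.mem_span_singleton]
        refine ⟨c * y, ?_⟩
        have h3 := congrArg (fun z : ℤ => (z : 𝓞 L)) hc
        push_cast at h3
        have h4 : y ^ p = (q : 𝓞 L) ^ k * y := by
          conv_lhs => rw [hpp, pow_succ, hk, pow_mul, hα]
        rw [h4]
        linear_combination y * h3
  · rw [Nat.card_eq_zero]
    left
    refine ⟨fun ⟨P, hP⟩ => hA ?_⟩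
    have hPp : P.IsPrime := Ideal.isPrime_of_irreducible_absNorm (by rw [hP]; exact hp)
    have hcard : Nat.card (𝓞 L ⧸ P) = p := by
      rw [← hP, Ideal.absNorm_apply, Submodule.cardQuot_apply]
    have hfin : Finite (𝓞 L ⧸ P) := Nat.finite_of_card_ne_zero (by rw [hcard]; exact hp.ne_zero)
    have := Fintype.ofFinite (𝓞 L ⧸ P)
    rw [Nat.card_eq_fintype_card] at hcard
    let e : ZMod p ≃+* 𝓞 L ⧸ P := ZMod.ringEquivOfPrime _ hp hcard
    let ψ : 𝓞 L →+* ZMod p := (e.symm : (𝓞 L ⧸ P) →+* ZMod p).comp (Ideal.Quotient.mk P)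
    constructor
    · have h1 : NeZero ((n : ℕ) : ZMod p) := ⟨by
        rw [Ne, ZMod.natCast_eq_zero_iff]
        exact fun h => absurd (Nat.le_of_dvd hn h) (by omega)⟩
      have h2 : (Polynomial.cyclotomic n (ZMod p)).IsRoot (ψ ζ) := by
        have := hζ.isRoot_cyclotomic hn
        rw [← Polynomial.map_cyclotomic n ψ]
        exact this.map
      have h3 := Polynomial.isRoot_cyclotomic_iff.mp h2
      have h4 : ψ ζ ≠ 0 := h3.ne_zero hn.ne'
      exact h3.dvd_of_pow_eq_one _ (ZMod.pow_card_sub_one_eq_one h4)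
    · exact ⟨ψ α, by rw [← map_pow, hα, map_intCast]⟩

end


section
open NumberField

theorem kc_reduced {R : Type*} [CommRing R] {n p : ℕ} (hn : 0 < n) (hp : p.Prime) (hpn : ¬ p ∣ n)
    {ζ : R} (hζ : ζ ^ n = 1) (htop : Algebra.adjoin ℤ {ζ} = ⊤) {x : R} {k : ℕ}
    (hx : (p : R) ∣ x ^ k) : (p : R) ∣ x := by
  classical
  set I : Ideal R := Ideal.span {(p : R)} with hI
  rw [← Ideal.mem_span_singleton, ← Ideal.Quotient.eq_zero_iff_mem] at hx ⊢
  rcases eq_or_ne I ⊤ with hItop | hItop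
  · rw [Ideal.Quotient.eq_zero_iff_mem]
    change x ∈ I
    rw [hItop]; trivial
  have : Nontrivial (R ⧸ I) := Ideal.Quotient.nontrivial_iff.mpr hItop
  have hpI : ((p : ℕ) : R ⧸ I) = 0 := by
    rw [← map_natCast (Ideal.Quotient.mk I), Ideal.Quotient.eq_zero_iff_mem]
    exact Ideal.mem_span_singleton_self _
  have hchar : CharP (R ⧸ I) p := (CharP.charP_iff_prime_eq_zero hp).mpr hpI
  have : Fact p.Prime := ⟨hp⟩
  have : ExpChar (R ⧸ I) p := ExpChar.prime hp
  have hcop : p.Coprime n := (hp.coprime_iff_not_dvd).mpr hpn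
  -- exponent with p^N = 1 mod n and p^N ≥ k
  set N := n.totient * (k + 1) with hN
  have hmod : p ^ N ≡ 1 [MOD n] := by
    rw [hN, pow_mul]
    simpa using (Nat.ModEq.pow_totient hcop).pow (k + 1)
  have hNk : k ≤ p ^ N := by
    have h1 : k + 1 ≤ N := Nat.le_mul_of_pos_left _ (Nat.totient_pos.mpr hn)
    have h2 : N < p ^ N := Nat.lt_pow_self hp.one_lt
    omega
  have hpos : 1 ≤ p ^ N := Nat.one_le_pow _ _ hp.pos
  have hdvd : n ∣ p ^ N - 1 := (Nat.modEq_iff_dvd' hpos).mp hmod.symm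
  let φ : R →+* R ⧸ I := (iterateFrobenius (R ⧸ I) p N).comp (Ideal.Quotient.mk I)
  have hφ : ∀ y, φ y = (Ideal.Quotient.mk I y) ^ (p ^ N) := fun y => by
    simp [φ, iterateFrobenius_def]
  have hφζ : φ ζ = Ideal.Quotient.mk I ζ := by
    obtain ⟨c, hc⟩ := hdvd
    rw [hφ, ← map_pow]
    have : p ^ N = n * c + 1 := by omega
    rw [this, pow_succ, pow_mul, hζ, one_pow, one_mul]
  have hall : ∀ y : R, φ y = Ideal.Quotient.mk I y := by
    intro y
    have hy : y ∈ Algebra.adjoin ℤ {ζ} := by rw [htop]; trivial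
    induction hy using Algebra.adjoin_induction with
    | mem y hy => rw [Set.mem_singleton_iff] at hy; rw [hy]; exact hφζ
    | algebraMap r => simp
    | add a b _ _ ha hb => rw [map_add, map_add, ha, hb]
    | mul a b _ _ ha hb => rw [map_mul, map_mul, ha, hb]
  rw [← hall x, hφ]
  rw [map_pow] at hx
  exact pow_eq_zero_of_le hNk hx

theorem kc_int_dvd {K : Type*} [Field K] [NumberField K] {a b : ℤ} (ha : a ≠ 0)
    (h : (a : 𝓞 K) ∣ (b : 𝓞 K)) : a ∣ b := by
  obtain ⟨c, hc⟩ := h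
  have hc' : (b : K) = a * (algebraMap (𝓞 K) K c) := by
    have := congrArg (algebraMap (𝓞 K) K) hc
    simpa using this
  have haK : (a : K) ≠ 0 := by exact_mod_cast ha
  have h1 : algebraMap (𝓞 K) K c = algebraMap ℚ K ((b : ℚ) / a) := by
    rw [map_div₀, map_intCast, map_intCast, hc']; field_simp
  have hIntgr : IsIntegral ℤ (algebraMap ℚ K ((b : ℚ) / a)) := by
    rw [← h1]; exact RingOfIntegers.isIntegral_coe c
  rw [isIntegral_algebraMap_iff (algebraMap ℚ K).injective] at hIntgr
  obtain ⟨z, hz⟩ := IsIntegrallyClosed.isIntegral_iff.mp hIntgr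
  refine ⟨z, ?_⟩
  have haQ : (a : ℚ) ≠ 0 := by exact_mod_cast ha
  have : (b : ℚ) = a * z := by
    have hz' : (z : ℚ) = b / a := by simpa using hz
    rw [hz']; field_simp
  exact_mod_cast this

theorem kc_power {K : Type*} [Field K] [NumberField K] {n : ℕ} (hn : 0 < n)
    {ζ : 𝓞 K} (hζ : ζ ^ n = 1) (htop : Algebra.adjoin ℤ {ζ} = ⊤) {l : ℕ} (hl : 0 < l) :
    ∀ (N : ℕ) (q : ℤ), q.natAbs ≤ N → q ≠ 0 → (∀ p : ℕ, p.Prime → (p : ℤ) ∣ q → ¬ p ∣ n) →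
      ∀ β : 𝓞 K, β ^ l = (q : 𝓞 K) → ∃ x : ℤ, q = x ^ l ∨ q = - x ^ l := by
  intro N
  induction N with
  | zero => intro q hq h0; exact absurd (Int.natAbs_eq_zero.mp (by omega)) h0
  | succ N ih =>
    intro q hq h0 hp β hβ
    by_cases h1 : q.natAbs = 1
    · refine ⟨1, ?_⟩
      rw [one_pow]
      exact Int.natAbs_eq_iff.mp h1
    obtain ⟨p, hpp, hpq⟩ := Nat.exists_prime_and_dvd h1
    have hpq' : (p : ℤ) ∣ q := Int.natCast_dvd.mpr hpq
    have hpn := hp p hpp hpq'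
    have hd : (p : 𝓞 K) ∣ β ^ l := by
      rw [hβ]
      obtain ⟨c, hc⟩ := hpq'
      exact ⟨(c : 𝓞 K), by rw [hc]; push_cast; ring⟩
    obtain ⟨γ, hγ⟩ := kc_reduced hn hpp hpn hζ htop hd
    have hpl : ((p : ℤ) ^ l) ∣ q := by
      apply kc_int_dvd (K := K) (pow_ne_zero _ (by exact_mod_cast hpp.ne_zero))
      refine ⟨γ ^ l, ?_⟩
      rw [← hβ, hγ]; push_cast; ring
    obtain ⟨q', hq'⟩ := hpl
    have hq'0 : q' ≠ 0 := by rintro rfl; simp at hq'; exact h0 hq'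
    have hlt : q'.natAbs < q.natAbs := by
      rw [hq', Int.natAbs_mul, Int.natAbs_pow, Int.natAbs_natCast]
      have : 1 < p ^ l := Nat.one_lt_pow (by omega) hpp.one_lt
      have h3 : 0 < q'.natAbs := Int.natAbs_pos.mpr hq'0
      nlinarith
    obtain ⟨x, hx⟩ := ih q' (by omega) hq'0 (fun r hr hrq => hp r hr (hq' ▸ hrq.mul_left _)) γ (by
      have hp0 : ((p : 𝓞 K) ^ l) ≠ 0 := pow_ne_zero _ (by exact_mod_cast hpp.ne_zero)
      apply mul_left_cancel₀ hp0
      rw [← mul_pow, ← hγ, hβ, hq']; push_cast; ring)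
    refine ⟨p * x, ?_⟩
    rw [mul_pow, hq']
    rcases hx with hx | hx
    · left; rw [hx]
    · right; rw [hx]; ring

/-- `q` is not an `l`-th power in the cyclotomic field. -/
theorem kc_not_power (K : Type*) [Field K] [NumberField K] {n : ℕ} [NeZero n]
    [IsCyclotomicExtension {n} ℚ K] (hsq : Squarefree n) {q : ℤ} (hco : IsCoprime q (n : ℤ))
    {l : ℕ} (hl : l.Prime) (hln : l ∣ n) (hpow : ¬ ∃ x : ℤ, x ^ l = q) :
    ∀ b : K, b ^ l ≠ (q : K) := by
  intro b hb
  have hn : 0 < n := NeZero.pos n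
  have hζ := IsCyclotomicExtension.zeta_spec n ℚ K
  have htop := IsCyclotomicExtension.Rat.adjoin_singleton_eq_top hζ
  have hq0 : q ≠ 0 := by rintro rfl; exact hpow ⟨0, zero_pow hl.ne_zero⟩
  have hbint : IsIntegral ℤ b := by
    apply IsIntegral.of_pow hl.pos
    rw [hb]
    exact isIntegral_algebraMap (R := ℤ) (x := q)
  obtain ⟨b', hb'⟩ : ∃ b' : 𝓞 K, algebraMap (𝓞 K) K b' = b := ⟨⟨b, hbint⟩, rfl⟩
  obtain ⟨x, hx⟩ := kc_power hn (hζ.toInteger_isPrimitiveRoot).pow_eq_one htop hl.pos q.natAbs q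
    le_rfl hq0 (by
      intro p hp hpq hpn
      have := hco.isUnit_of_dvd' hpq (Int.natCast_dvd_natCast.mpr hpn)
      rw [Int.isUnit_iff] at this
      have := hp.two_le
      omega) b' (by
      apply RingOfIntegers.coe_injective
      rw [map_pow, map_intCast, hb']; exact hb)
  rcases hx with hx | hx
  · exact hpow ⟨x, hx.symm⟩
  · rcases hl.eq_two_or_odd' with h2 | hodd
    · subst h2
      have hx0 : (x : K) ≠ 0 := by
        intro h
        have : x = 0 := by exact_mod_cast h
        rw [this] at hx; simp at hx; exact hq0 hx
      have hi : (b / x) ^ 2 = -1 := by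
        rw [div_pow, hb, hx]; push_cast; field_simp
      have hprim : IsPrimitiveRoot (b / x) 4 := by
        have := IsPrimitiveRoot.iff_def (b / x) 4
        rw [this]
        have h4 : (b / x) ^ 4 = 1 := by
          rw [show (4 : ℕ) = 2 * 2 from rfl, pow_mul, hi]; norm_num
        refine ⟨h4, fun k hk => ?_⟩
        have hmod : (b / x) ^ (k % 4) = 1 := by
          rw [← pow_mod_orderOf] at hk
          conv_lhs => rw [← pow_mod_orderOf, Nat.mod_mod_of_dvd _ (orderOf_dvd_of_pow_eq_one h4)]
          exact hk
        have : k % 4 < 4 := Nat.mod_lt _ (by norm_num)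
        have hne1 : b / x ≠ 1 := by intro h; rw [h] at hi; norm_num at hi
        interval_cases hr : k % 4
        · omega
        · rw [pow_one] at hmod; exact absurd hmod hne1
        · rw [hi] at hmod; norm_num at hmod
        · rw [pow_succ, hi] at hmod
          have : b / x = -1 := by linear_combination -hmod
          rw [this] at hi; norm_num at hi
      have hdv := NumberField.Units.dvd_torsionOrder_of_isPrimitiveRoot hprim
      rw [IsCyclotomicExtension.Rat.torsionOrder_eq (n := n), if_pos (even_iff_two_dvd.mpr hln)] at hdv
      have := hsq 2 (by simpa using hdv)
      norm_num at this
    · exact hpow ⟨-x, by rw [hodd.neg_pow, hx]⟩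
end


section
open NumberField Polynomial
open scoped Classical

theorem kd_irred {K : Type*} [Field K] {d : ℕ} (hsq : Squarefree d) {a : K}
    (h : ∀ l : ℕ, l.Prime → l ∣ d → ∀ b : K, b ^ l ≠ a) : Irreducible (X ^ d - C a) := by
  have hd0 : d ≠ 0 := hsq.ne_zero
  have hd : 0 < d := Nat.pos_of_ne_zero hd0
  have hne : (X ^ d - C a : K[X]) ≠ 0 := X_pow_sub_C_ne_zero hd a
  have hmon : (X ^ d - C a : K[X]).Monic := monic_X_pow_sub_C a hd0
  obtain ⟨α, hα⟩ := IsAlgClosed.exists_pow_nat_eq (algebraMap K (AlgebraicClosure K) a) hd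
  have hIntgr : IsIntegral K α := Algebra.IsIntegral.isIntegral α
  have hroot : aeval α (X ^ d - C a) = 0 := by simp [hα]
  have hfin : FiniteDimensional K (IntermediateField.adjoin K {α}) :=
    IntermediateField.adjoin.finiteDimensional hIntgr
  have hdvd : ∀ l : ℕ, l.Prime → l ∣ d → l ∣ (minpoly K α).natDegree := by
    intro l hl hld
    obtain ⟨c, hc⟩ := hld
    have hirr := X_pow_sub_C_irreducible_of_prime hl (h l hl ⟨c, hc⟩)
    have hr : aeval (α ^ c) (X ^ l - C a) = 0 := by
      simp only [map_sub, map_pow, aeval_X, aeval_C]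
      rw [← pow_mul, mul_comm c l, ← hc, hα, sub_self]
    have hmp := minpoly.eq_of_irreducible_of_monic hirr hr (monic_X_pow_sub_C a hl.ne_zero)
    have hIntgr' : IsIntegral K (α ^ c) := hIntgr.pow c
    have h1 := IntermediateField.adjoin.finrank hIntgr'
    rw [← hmp, natDegree_X_pow_sub_C] at h1
    have hle : IntermediateField.adjoin K {α ^ c} ≤ IntermediateField.adjoin K {α} := by
      rw [IntermediateField.adjoin_simple_le_iff]
      exact pow_mem (IntermediateField.mem_adjoin_simple_self K α) c
    rw [← h1, ← IntermediateField.adjoin.finrank hIntgr]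
    exact IntermediateField.finrank_dvd_of_le_right hle
  have hdd : d ∣ (minpoly K α).natDegree := by
    rw [← Nat.prod_primeFactors_of_squarefree hsq]
    refine Finset.prod_primes_dvd _ (fun l hl => (Nat.prime_of_mem_primeFactors hl).prime) ?_
    intro l hl
    exact hdvd l (Nat.prime_of_mem_primeFactors hl) (Nat.dvd_of_mem_primeFactors hl)
  have hle : d ≤ (minpoly K α).natDegree := Nat.le_of_dvd (minpoly.natDegree_pos hIntgr) hdd
  have heq : minpoly K α = X ^ d - C a := by
    refine (eq_of_monic_of_dvd_of_natDegree_le (minpoly.monic hIntgr) hmon (minpoly.dvd K α hroot) ?_).symm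
    rw [natDegree_X_pow_sub_C]; exact hle
  rw [← heq]
  exact minpoly.irreducible hIntgr

theorem kd_tower (K L : Type*) [Field K] [NumberField K] [Field L] [Algebra K L]
    [FiniteDimensional K L] :
    ∃ _ : NumberField L, Module.finrank ℚ L = Module.finrank ℚ K * Module.finrank K L := by
  have hc : CharZero L := charZero_of_injective_algebraMap (algebraMap K L).injective
  have hf : FiniteDimensional ℚ L := FiniteDimensional.trans ℚ K L
  exact ⟨⟨⟩, (Module.finrank_mul_finrank ℚ K L).symm⟩

theorem kd_count {n d : ℕ} (hn : 0 < n) (hd : d ∣ n) (q : ℤ)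
    (K L : Type*) [Field K] [NumberField K] [Field L] [Algebra K L] [NumberField L]
    [IsCyclotomicExtension {n} ℚ K] (α : L)
    (hα : α ^ d = (q : L)) (hgen : Algebra.adjoin K {α} = ⊤) :
    ∃ B : ℕ, ∀ p : ℕ, p.Prime → B < p → Nat.card {P : Ideal (𝓞 L) // Ideal.absNorm P = p} =
      if (n ∣ p - 1 ∧ ∃ x : ZMod p, x ^ d = (q : ZMod p)) then Module.finrank ℚ L else 0 := by
  have hne : NeZero n := ⟨hn.ne'⟩
  have hζ := IsCyclotomicExtension.zeta_spec n ℚ K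
  have hζL := hζ.map_of_injective (algebraMap K L).injective
  have hd0 : 0 < d := Nat.pos_of_dvd_of_pos hd hn
  have hαint : IsIntegral ℤ α := by
    apply IsIntegral.of_pow hd0
    rw [hα]
    exact isIntegral_algebraMap (R := ℤ) (x := q)
  have hprim : IsPrimitiveRoot (hζL.toInteger) n := hζL.toInteger_isPrimitiveRoot
  obtain ⟨α', e2⟩ : ∃ α' : 𝓞 L, algebraMap (𝓞 L) L α' = α := ⟨⟨α, hαint⟩, rfl⟩
  refine al_count hn hd q (ζ := hζL.toInteger) (α := α') hprim ?_ ?_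
  · apply RingOfIntegers.coe_injective
    rw [map_pow, map_intCast, e2]; exact hα
  · intro x
    rw [Set.image_pair]
    have e1 : algebraMap (𝓞 L) L hζL.toInteger = algebraMap K L (IsCyclotomicExtension.zeta n ℚ K) := rfl
    rw [e1, e2]
    have hx : x ∈ Algebra.adjoin K {α} := by rw [hgen]; trivial
    induction hx using Algebra.adjoin_induction with
    | mem y hy =>
      rw [Set.mem_singleton_iff] at hy; rw [hy]
      exact Algebra.subset_adjoin (by simp)
    | algebraMap r =>
      have hr : r ∈ Algebra.adjoin ℚ {IsCyclotomicExtension.zeta n ℚ K} := by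
        have h2 := IsCyclotomicExtension.adjoin_primitive_root_eq_top (A := ℚ) hζ
        rw [h2]; trivial
      have h3 : algebraMap K L r ∈ (Algebra.adjoin ℚ {IsCyclotomicExtension.zeta n ℚ K}).map
          (IsScalarTower.toAlgHom ℚ K L) := ⟨r, hr, rfl⟩
      rw [AlgHom.map_adjoin_singleton] at h3
      exact Algebra.adjoin_mono (by simp) h3
    | add a b _ _ ha hb => exact add_mem ha hb
    | mul a b _ _ ha hb => exact mul_mem ha hb

theorem kd_ratalg {n : ℕ} (K : Type*) [Field K] [CharZero K] (i : Algebra ℚ K)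
    (h : IsCyclotomicExtension {n} ℚ K) :
    @IsCyclotomicExtension {n} ℚ K _ _ DivisionRing.toRatAlgebra := by
  have : i = DivisionRing.toRatAlgebra := Subsingleton.elim _ _
  rw [← this]; exact h

theorem kd_exists_aux {n d : ℕ} (hsq : Squarefree n) (hd : d ∣ n) (q : ℤ) (hco : IsCoprime q (n : ℤ))
    (hpow : ∀ p : ℕ, p.Prime → p ∣ n → ¬∃ x : ℤ, x ^ p = q) (K : Type) [Field K] [NumberField K]
    [IsCyclotomicExtension {n} ℚ K] :
    ∃ (L : Type) (_ : Field L) (_ : NumberField L), Module.finrank ℚ L = n.totient * d ∧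
    ∃ B : ℕ, ∀ p : ℕ, p.Prime → B < p → Nat.card {P : Ideal (𝓞 L) // Ideal.absNorm P = p} =
      if (n ∣ p - 1 ∧ ∃ x : ZMod p, x ^ d = (q : ZMod p)) then Module.finrank ℚ L else 0 := by
  have hn : 0 < n := Nat.pos_of_ne_zero hsq.ne_zero
  have hne : NeZero n := ⟨hn.ne'⟩
  have hd0 : 0 < d := Nat.pos_of_dvd_of_pos hd hn
  have hirr : Irreducible (X ^ d - C (q : K)) := by
    refine kd_irred (hsq.squarefree_of_dvd hd) ?_
    intro l hl hld
    exact kc_not_power K hsq hco hl (hld.trans hd) (hpow l hl (hld.trans hd))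
  have : Fact (Irreducible (X ^ d - C (q : K))) := ⟨hirr⟩
  have hX0 := hirr.ne_zero
  let L := AdjoinRoot (X ^ d - C (q : K))
  have hfin : FiniteDimensional K L := (AdjoinRoot.powerBasis hX0).finite
  have hdeg : Module.finrank K L = d := by
    rw [(AdjoinRoot.powerBasis hX0).finrank, AdjoinRoot.powerBasis_dim, natDegree_X_pow_sub_C]
  obtain ⟨hNF, hrank⟩ := kd_tower K L
  refine ⟨L, inferInstance, hNF, ?_, ?_⟩
  · rw [hrank, hdeg, IsCyclotomicExtension.Rat.finrank n K]
  · refine kd_count hn hd q K L (AdjoinRoot.root _) ?_ AdjoinRoot.adjoinRoot_eq_top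
    have := AdjoinRoot.eval₂_root (X ^ d - C (q : K))
    rw [eval₂_sub, eval₂_pow, eval₂_X, eval₂_C] at this
    exact (sub_eq_zero.mp this).trans (map_intCast (AdjoinRoot.of _) q)

theorem kd_exists {n d : ℕ} (hsq : Squarefree n) (hd : d ∣ n) (q : ℤ) (hco : IsCoprime q (n : ℤ))
    (hpow : ∀ p : ℕ, p.Prime → p ∣ n → ¬∃ x : ℤ, x ^ p = q) :
    ∃ (L : Type) (_ : Field L) (_ : NumberField L), Module.finrank ℚ L = n.totient * d ∧
    ∃ B : ℕ, ∀ p : ℕ, p.Prime → B < p → Nat.card {P : Ideal (𝓞 L) // Ideal.absNorm P = p} =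
      if (n ∣ p - 1 ∧ ∃ x : ZMod p, x ^ d = (q : ZMod p)) then Module.finrank ℚ L else 0 := by
  have hn : 0 < n := Nat.pos_of_ne_zero hsq.ne_zero
  have hne : NeZero n := ⟨hn.ne'⟩
  have hd0 : 0 < d := Nat.pos_of_dvd_of_pos hd hn
  have hNF : NumberField (CyclotomicField n ℚ) := inferInstance
  have hcyc := kd_ratalg (CyclotomicField n ℚ) _ (CyclotomicField.isCyclotomicExtension n ℚ)
  exact kd_exists_aux hsq hd q hco hpow (CyclotomicField n ℚ)

open Filter Topology in
theorem kd_density {n d : ℕ} (hsq : Squarefree n) (hd : d ∣ n) (q : ℤ) (hco : IsCoprime q (n : ℤ))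
    (hpow : ∀ p : ℕ, p.Prime → p ∣ n → ¬∃ x : ℤ, x ^ p = q) :
    Tendsto (fun y : ℕ => (∑ p ∈ Finset.Icc 1 y with p.Prime,
      if (n ∣ p - 1 ∧ ∃ x : ZMod p, x ^ d = (q : ZMod p)) then Real.log p else 0) / (y : ℝ))
      atTop (𝓝 (1 / (n.totient * d))) := by
  obtain ⟨L, hF, hNF, hrank, B, hB⟩ := kd_exists hsq hd q hco hpow
  have hn : 0 < n := Nat.pos_of_ne_zero hsq.ne_zero
  have hd0 : 0 < d := Nat.pos_of_dvd_of_pos hd hn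
  have hN0 : 0 < n.totient * d := Nat.mul_pos (Nat.totient_pos.mpr hn) hd0
  have hpnt := nf_pnt L
  set N : ℝ := (n.totient : ℝ) * d with hN
  have hNpos : 0 < N := by rw [hN]; exact_mod_cast hN0
  have hrank' : (Module.finrank ℚ L : ℝ) = N := by rw [hrank, hN]; push_cast; ring
  set A : ℕ → ℝ := fun p => if (n ∣ p - 1 ∧ ∃ x : ZMod p, x ^ d = (q : ZMod p)) then Real.log p else 0
    with hA
  set S : ℕ → ℝ := fun p => (Nat.card {P : Ideal (𝓞 L) // Ideal.absNorm P = p} : ℝ) * Real.log p with hS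
  set D : ℝ := ∑ p ∈ Finset.Icc 1 B with p.Prime, (A p - S p / N) with hD
  have hkey : ∀ y, B ≤ y → ∑ p ∈ Finset.Icc 1 y with p.Prime, A p =
      (∑ p ∈ Finset.Icc 1 y with p.Prime, S p) / N + D := by
    intro y hy
    have : ∑ p ∈ Finset.Icc 1 y with p.Prime, (A p - S p / N) = D := by
      rw [hD]
      symm
      apply Finset.sum_subset
      · intro p hp
        simp only [Finset.mem_filter, Finset.mem_Icc] at hp ⊢
        exact ⟨⟨hp.1.1, hp.1.2.trans hy⟩, hp.2⟩
      · intro p hp hp'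
        simp only [Finset.mem_filter, Finset.mem_Icc] at hp hp'
        have hBp : B < p := by
          by_contra hc
          exact hp' ⟨⟨hp.1.1, by omega⟩, hp.2⟩
        simp only [hA, hS]
        rw [hB p hp.2 hBp]
        split_ifs
        · rw [hrank']; field_simp; simp
        · simp
    rw [Finset.sum_sub_distrib, ← Finset.sum_div] at this
    linarith
  have h1 : Tendsto (fun y : ℕ => ((∑ p ∈ Finset.Icc 1 y with p.Prime, S p) / (y : ℝ)) / N + D / (y : ℝ))
      atTop (𝓝 (1 / N + 0)) :=
    (hpnt.div_const N).add (tendsto_const_div_atTop_nhds_zero_nat D)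
  rw [add_zero] at h1
  refine h1.congr' ?_
  filter_upwards [eventually_ge_atTop B] with y hy
  rw [hkey y hy]
  ring

end


section
open Filter Topology
open scoped Classical

theorem fd_gap : Tendsto (fun y : ℕ => (∑ p ∈ (Finset.range (y + 1)).filter Nat.Prime,
    (Real.log y - Real.log p)) / (y : ℝ)) atTop (𝓝 0) := by
  have h1 := Chebyshev.primeCounting_sub_theta_div_log_isBigO.comp_tendsto
    (tendsto_natCast_atTop_atTop (R := ℝ))
  obtain ⟨C, hC⟩ := h1.bound
  have hlog : Tendsto (fun y : ℕ => Real.log (y : ℝ)) atTop atTop :=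
    Real.tendsto_log_atTop.comp tendsto_natCast_atTop_atTop
  have hb : Tendsto (fun y : ℕ => C / Real.log (y : ℝ)) atTop (𝓝 0) := hlog.const_div_atTop C
  refine squeeze_zero_norm' ?_ hb
  filter_upwards [hC, eventually_ge_atTop 3] with y hy hy3
  have hy0 : (0 : ℝ) < y := by exact_mod_cast (by omega : 0 < y)
  have hl : 0 < Real.log y := Real.log_pos (by exact_mod_cast (by omega : 1 < y))
  have hsum : ∑ p ∈ (Finset.range (y + 1)).filter Nat.Prime, (Real.log y - Real.log p) =
      (Nat.primeCounting y - Chebyshev.theta y / Real.log y) * Real.log y := by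
    rw [Finset.sum_sub_distrib, Finset.sum_const, nsmul_eq_mul, Chebyshev.theta_eq_sum_Icc,
      Nat.floor_natCast, sub_mul, div_mul_cancel₀ _ hl.ne', Nat.primeCounting, Nat.primeCounting',
      Nat.count_eq_card_filter_range, Nat.range_succ_eq_Icc_zero]
  simp only [Function.comp_def, Nat.floor_natCast] at hy
  rw [hsum, norm_div, norm_mul, Real.norm_of_nonneg hl.le, Real.norm_of_nonneg hy0.le]
  rw [Real.norm_of_nonneg (by positivity : (0 : ℝ) ≤ (y : ℝ) / Real.log y ^ 2)] at hy
  calc _ ≤ C * ((y : ℝ) / Real.log y ^ 2) * Real.log y / y := by gcongr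
    _ = C / Real.log y := by field_simp

theorem fd_conv (S : ℕ → Prop) (δ : ℝ)
    (h : Tendsto (fun y : ℕ => (∑ p ∈ Finset.Icc 1 y with p.Prime,
      if S p then Real.log p else 0) / (y : ℝ)) atTop (𝓝 δ)) :
    Tendsto (fun y : ℕ => ((((Finset.range (y + 1)).filter (fun p => p.Prime ∧ S p)).card : ℝ) *
      Real.log y) / (y : ℝ)) atTop (𝓝 δ) := by
  have hIcc : ∀ y : ℕ, (Finset.Icc 1 y).filter Nat.Prime = (Finset.range (y + 1)).filter Nat.Prime := by
    intro y
    ext p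
    simp only [Finset.mem_filter, Finset.mem_Icc, Finset.mem_range]
    constructor
    · rintro ⟨⟨_, h2⟩, h3⟩; exact ⟨by omega, h3⟩
    · rintro ⟨h2, h3⟩; exact ⟨⟨h3.pos, by omega⟩, h3⟩
  have hdiff : Tendsto (fun y : ℕ => (∑ p ∈ (Finset.range (y + 1)).filter Nat.Prime,
      if S p then (Real.log y - Real.log p) else 0) / (y : ℝ)) atTop (𝓝 0) := by
    have hnn : ∀ y : ℕ, ∀ p ∈ (Finset.range (y + 1)).filter Nat.Prime, 0 ≤ Real.log y - Real.log p := by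
      intro y p hp
      simp only [Finset.mem_filter, Finset.mem_range] at hp
      have := Real.log_le_log (by exact_mod_cast hp.2.pos) (by exact_mod_cast (by omega : p ≤ y) : (p : ℝ) ≤ y)
      linarith
    refine squeeze_zero (fun y => ?_) (fun y => ?_) fd_gap
    · refine div_nonneg (Finset.sum_nonneg fun p hp => ?_) (Nat.cast_nonneg y)
      split_ifs
      · exact hnn y p hp
      · exact le_rfl
    · refine div_le_div_of_nonneg_right (Finset.sum_le_sum fun p hp => ?_) (Nat.cast_nonneg y)
      split_ifs
      · exact le_rfl
      · exact hnn y p hp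
  have := h.add hdiff
  rw [add_zero] at this
  refine this.congr fun y => ?_
  rw [← add_div]
  congr 1
  rw [hIcc, ← Finset.sum_add_distrib, ← Finset.filter_filter, Finset.card_filter]
  push_cast
  rw [Finset.sum_mul]
  refine Finset.sum_congr rfl fun p _ => ?_
  split_ifs <;> ring

theorem fd_ratio (S : ℕ → Prop) (δ : ℝ)
    (h : Tendsto (fun y : ℕ => (∑ p ∈ Finset.Icc 1 y with p.Prime,
      if S p then Real.log p else 0) / (y : ℝ)) atTop (𝓝 δ))
    (h1 : Tendsto (fun y : ℕ => (∑ p ∈ Finset.Icc 1 y with p.Prime, Real.log p) / (y : ℝ)) atTop (𝓝 1)) :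
    Tendsto (fun y : ℕ => (((Finset.range (y + 1)).filter (fun p => p.Prime ∧ S p)).card : ℝ) /
      (((Finset.range (y + 1)).filter Nat.Prime).card : ℝ)) atTop (𝓝 δ) := by
  have hS := fd_conv S δ h
  have hT := fd_conv (fun _ => True) 1 (by simpa using h1)
  have := hS.div hT one_ne_zero
  rw [div_one] at this
  refine this.congr' ?_
  filter_upwards [eventually_ge_atTop 3] with y hy3
  have hy0 : (y : ℝ) ≠ 0 := by exact_mod_cast (by omega : y ≠ 0)
  have hl : Real.log y ≠ 0 := (Real.log_pos (by exact_mod_cast (by omega : 1 < y))).ne'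
  simp only [Pi.div_apply, and_true]
  rw [div_div_div_cancel_right₀ hy0, mul_div_mul_right _ _ hl]

/-- Power residues for coprime exponents. -/
theorem fd_coprime {F : Type*} [Field F] {a b : ℕ} (ha : 0 < a) (hb : 0 < b) (hab : a.Coprime b) (q : F) :
    (∃ x : F, x ^ (a * b) = q) ↔ (∃ x : F, x ^ a = q) ∧ (∃ x : F, x ^ b = q) := by
  constructor
  · rintro ⟨x, hx⟩
    exact ⟨⟨x ^ b, by rw [← pow_mul, mul_comm b a, hx]⟩, ⟨x ^ a, by rw [← pow_mul, hx]⟩⟩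
  · rintro ⟨⟨x, hx⟩, ⟨y, hy⟩⟩
    rcases eq_or_ne q 0 with rfl | hq
    · exact ⟨0, zero_pow (Nat.mul_pos ha hb).ne'⟩
    have hbez : (1 : ℤ) = a * a.gcdA b + b * a.gcdB b := by
      have := Nat.gcd_eq_gcd_ab a b
      rw [hab.gcd_eq_one] at this; exact_mod_cast this
    have hx0 : x ≠ 0 := by rintro rfl; rw [zero_pow ha.ne'] at hx; exact hq hx.symm
    have hy0 : y ≠ 0 := by rintro rfl; rw [zero_pow hb.ne'] at hy; exact hq hy.symm
    refine ⟨y ^ (a.gcdA b) * x ^ (a.gcdB b), ?_⟩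
    have e1 : (y ^ (a.gcdA b)) ^ (a * b) = q ^ ((a : ℤ) * a.gcdA b) := by
      rw [← hy, ← zpow_natCast, ← zpow_natCast, ← zpow_mul, ← zpow_mul]
      congr 1; push_cast; ring
    have e2 : (x ^ (a.gcdB b)) ^ (a * b) = q ^ ((b : ℤ) * a.gcdB b) := by
      rw [← hx, ← zpow_natCast, ← zpow_natCast, ← zpow_mul, ← zpow_mul]
      congr 1; push_cast; ring
    rw [mul_pow, e1, e2, ← zpow_add₀ hq, ← hbez, zpow_one]

theorem fd_prod {F : Type*} [Field F] (s : Finset ℕ) (hs : ∀ l ∈ s, l.Prime) (q : F) :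
    (∃ x : F, x ^ (∏ l ∈ s, l) = q) ↔ ∀ l ∈ s, ∃ x : F, x ^ l = q := by
  induction s using Finset.induction_on with
  | empty => simp
  | insert a s ha ih =>
    have hs' : ∀ l ∈ s, l.Prime := fun l hl => hs l (Finset.mem_insert_of_mem hl)
    have hap := hs a (Finset.mem_insert_self a s)
    rw [Finset.prod_insert ha, fd_coprime hap.pos (Finset.prod_pos fun l hl => (hs' l hl).pos)
      (Nat.Coprime.prod_right fun l hl => (Nat.coprime_primes hap (hs' l hl)).mpr (by
        rintro rfl; exact ha hl)), ih hs', Finset.forall_mem_insert]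

theorem fd_auto {p l : ℕ} (hp : p.Prime) (hl : l.Prime) (hlp : ¬ l ∣ p - 1) (q : ZMod p) :
    ∃ x : ZMod p, x ^ l = q := by
  have : Fact p.Prime := ⟨hp⟩
  rcases eq_or_ne q 0 with rfl | hq
  · exact ⟨0, zero_pow hl.ne_zero⟩
  have hcop : (Nat.card (ZMod p)ˣ).Coprime l := by
    rw [Nat.card_eq_fintype_card, ZMod.card_units]
    exact ((hl.coprime_iff_not_dvd).mpr hlp).symm
  obtain ⟨u, hu⟩ := (powCoprime hcop).surjective (Units.mk0 q hq)
  refine ⟨(u : ZMod p), ?_⟩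
  have := congrArg (fun v : (ZMod p)ˣ => (v : ZMod p)) hu
  simpa using this

theorem fd_dvd (s : Finset ℕ) (hs : ∀ l ∈ s, l.Prime) (k : ℕ) :
    (∏ l ∈ s, l) ∣ k ↔ ∀ l ∈ s, l ∣ k := by
  constructor
  · intro h l hl; exact (Finset.dvd_prod_of_mem _ hl).trans h
  · intro h; exact Finset.prod_primes_dvd _ (fun l hl => (hs l hl).prime) h

theorem fd_totient (s : Finset ℕ) (hs : ∀ l ∈ s, l.Prime) :
    (((∏ l ∈ s, l).totient : ℕ) : ℝ) = ∏ l ∈ s, ((l : ℝ) - 1) := by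
  induction s using Finset.induction_on with
  | empty => simp
  | insert a s ha ih =>
    have hs' : ∀ l ∈ s, l.Prime := fun l hl => hs l (Finset.mem_insert_of_mem hl)
    have hap := hs a (Finset.mem_insert_self a s)
    rw [Finset.prod_insert ha, Finset.prod_insert ha, Nat.totient_mul
      (Nat.Coprime.prod_right fun l hl => (Nat.coprime_primes hap (hs' l hl)).mpr (by
        rintro rfl; exact ha hl)), Nat.totient_prime hap, Nat.cast_mul, ih hs',
        Nat.cast_sub hap.one_le, Nat.cast_one]

theorem fd_expand (P : Finset ℕ) (f g : ℕ → ℝ) :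
    ∏ l ∈ P, (1 - f l * (1 - g l)) = ∑ t ∈ P.powerset, ∑ s ∈ t.powerset,
      ((-1) ^ t.card * (-1) ^ s.card) * ((∏ l ∈ t, f l) * ∏ l ∈ s, g l) := by
  have h1 : ∀ l, 1 - f l * (1 - g l) = 1 + (-f l) * (1 + -g l) := fun l => by ring
  simp_rw [h1]
  rw [Finset.prod_one_add]
  refine Finset.sum_congr rfl fun t _ => ?_
  rw [Finset.prod_mul_distrib, Finset.prod_one_add, Finset.mul_sum]
  refine Finset.sum_congr rfl fun s _ => ?_
  rw [Finset.prod_neg, Finset.prod_neg]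
  ring

theorem fd_boole (s : Finset ℕ) (Q : ℕ → Prop) (A : Prop) {_ : DecidablePred Q} {_ : Decidable A}
    (h : A ↔ ∀ l ∈ s, Q l) : (∏ l ∈ s, if Q l then (1 : ℝ) else 0) = if A then 1 else 0 := by
  rw [Finset.prod_boole]
  exact if_congr h.symm rfl rfl

theorem fd_and (A B : Prop) [Decidable A] [Decidable B] {_ : Decidable (A ∧ B)} :
    (if A ∧ B then (1 : ℝ) else 0) = (if A then 1 else 0) * (if B then 1 else 0) := by
  by_cases hA : A <;> by_cases hB : B <;> simp [hA, hB]

theorem fd_ind {p m : ℕ} (hp : p.Prime) (hsq : Squarefree m) (q : ℤ) :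
    (if (∃ x : ZMod p, x ^ m = (q : ZMod p)) then (1 : ℝ) else 0) =
    ∑ t ∈ m.primeFactors.powerset, ∑ s ∈ t.powerset, ((-1) ^ t.card * (-1) ^ s.card) *
      (if ((∏ l ∈ t, l) ∣ p - 1 ∧ ∃ x : ZMod p, x ^ (∏ l ∈ s, l) = (q : ZMod p)) then (1 : ℝ) else 0) := by
  have : Fact p.Prime := ⟨hp⟩
  have hP : ∀ l ∈ m.primeFactors, l.Prime := fun l hl => Nat.prime_of_mem_primeFactors hl
  trans ∏ l ∈ m.primeFactors, (1 - (if l ∣ p - 1 then (1 : ℝ) else 0) *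
    (1 - if (∃ x : ZMod p, x ^ l = (q : ZMod p)) then (1 : ℝ) else 0))
  · have e : ∀ l ∈ m.primeFactors, (1 - (if l ∣ p - 1 then (1 : ℝ) else 0) *
        (1 - if (∃ x : ZMod p, x ^ l = (q : ZMod p)) then (1 : ℝ) else 0)) =
        if (∃ x : ZMod p, x ^ l = (q : ZMod p)) then (1 : ℝ) else 0 := by
      intro l hl
      by_cases h1 : ∃ x : ZMod p, x ^ l = (q : ZMod p)
      · rw [if_pos h1]; ring
      · have h2 : l ∣ p - 1 := by
          by_contra hc
          exact h1 (fd_auto hp (hP l hl) hc q)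
        rw [if_neg h1, if_pos h2]; ring
    rw [Finset.prod_congr rfl e]
    refine (fd_boole _ (fun l => ∃ x : ZMod p, x ^ l = (q : ZMod p)) _ ?_).symm
    rw [← fd_prod _ hP, Nat.prod_primeFactors_of_squarefree hsq]
  · rw [fd_expand]
    refine Finset.sum_congr rfl fun t ht => Finset.sum_congr rfl fun s hs => ?_
    rw [Finset.mem_powerset] at ht hs
    rw [fd_and]
    congr 2
    · exact fd_boole t (fun l => l ∣ p - 1) _ (fd_dvd t (fun l hl => hP l (ht hl)) (p - 1))
    · exact fd_boole s (fun l => ∃ x : ZMod p, x ^ l = (q : ZMod p)) _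
        (fd_prod s (fun l hl => hP l (ht (hs hl))) (q : ZMod p))

theorem fd_value {m : ℕ} (hm : 0 < m) :
    ∑ t ∈ m.primeFactors.powerset, ∑ s ∈ t.powerset, ((-1 : ℝ) ^ t.card * (-1) ^ s.card) *
      (1 / (((∏ l ∈ t, l).totient : ℕ) * ((∏ l ∈ s, l : ℕ) : ℝ))) = (m.totient : ℝ) / m := by
  have hP : ∀ l ∈ m.primeFactors, l.Prime := fun l hl => Nat.prime_of_mem_primeFactors hl
  trans ∏ l ∈ m.primeFactors, (1 - ((l : ℝ) - 1)⁻¹ * (1 - (l : ℝ)⁻¹))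
  · rw [fd_expand]
    refine Finset.sum_congr rfl fun t ht => Finset.sum_congr rfl fun s hs => ?_
    rw [Finset.mem_powerset] at ht hs
    rw [fd_totient t (fun l hl => hP l (ht hl)), Finset.prod_inv_distrib, Finset.prod_inv_distrib,
      Nat.cast_prod, one_div, mul_inv]
  · have hq := Nat.totient_eq_mul_prod_factors m
    have hq' : (m.totient : ℝ) = m * ∏ p ∈ m.primeFactors, (1 - (p : ℝ)⁻¹) := by
      have := congrArg (fun r : ℚ => (r : ℝ)) hq
      push_cast at this
      exact this
    have hm0 : (m : ℝ) ≠ 0 := by exact_mod_cast hm.ne'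
    rw [hq', mul_div_cancel_left₀ _ hm0]
    refine Finset.prod_congr rfl fun l hl => ?_
    have h1 : (1 : ℝ) < l := by exact_mod_cast (hP l hl).one_lt
    have h2 : (l : ℝ) - 1 ≠ 0 := by linarith
    have h3 : (l : ℝ) ≠ 0 := by linarith
    field_simp

theorem fd_theta {m : ℕ} (hm : 0 < m) (hsq : Squarefree m) (q : ℤ) (hco : IsCoprime q (m : ℤ))
    (hpow : ∀ p : ℕ, p.Prime → p ∣ m → ¬∃ x : ℤ, x ^ p = q) :
    Tendsto (fun y : ℕ => (∑ p ∈ Finset.Icc 1 y with p.Prime,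
      if (∃ x : ZMod p, x ^ m = (q : ZMod p)) then Real.log p else 0) / (y : ℝ))
      atTop (𝓝 ((m.totient : ℝ) / m)) := by
  have hP : ∀ l ∈ m.primeFactors, l.Prime := fun l hl => Nat.prime_of_mem_primeFactors hl
  rw [← fd_value hm]
  have hlim : ∀ t ∈ m.primeFactors.powerset, ∀ s ∈ t.powerset, Tendsto (fun y : ℕ =>
      ((-1 : ℝ) ^ t.card * (-1) ^ s.card) * ((∑ p ∈ Finset.Icc 1 y with p.Prime,
        if ((∏ l ∈ t, l) ∣ p - 1 ∧ ∃ x : ZMod p, x ^ (∏ l ∈ s, l) = (q : ZMod p)) then Real.log p else 0) / (y : ℝ)))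
      atTop (𝓝 (((-1 : ℝ) ^ t.card * (-1) ^ s.card) *
      (1 / (((∏ l ∈ t, l).totient : ℕ) * ((∏ l ∈ s, l : ℕ) : ℝ))))) := by
    intro t ht s hs
    rw [Finset.mem_powerset] at ht hs
    have htm : (∏ l ∈ t, l) ∣ m := by
      conv_rhs => rw [← Nat.prod_primeFactors_of_squarefree hsq]
      exact Finset.prod_dvd_prod_of_subset _ _ _ ht
    refine Tendsto.const_mul _ (kd_density (hsq.squarefree_of_dvd htm)
      (Finset.prod_dvd_prod_of_subset _ _ _ hs) q ?_ fun p hp hpt => hpow p hp (hpt.trans htm))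
    exact hco.of_isCoprime_of_dvd_right (Int.natCast_dvd_natCast.mpr htm)
  have hlim' := tendsto_finsetSum m.primeFactors.powerset fun t ht =>
    tendsto_finsetSum t.powerset fun s hs => hlim t ht s hs
  refine hlim'.congr ?_
  intro y
  simp_rw [Finset.sum_div, Finset.mul_sum]
  have hsw : ∀ t : Finset ℕ, ∀ G : Finset ℕ → ℕ → ℝ, ∑ s ∈ t.powerset,
      ∑ p ∈ Finset.Icc 1 y with p.Prime, G s p = ∑ p ∈ Finset.Icc 1 y with p.Prime,
      ∑ s ∈ t.powerset, G s p := fun t G => Finset.sum_comm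
  simp_rw [hsw]
  refine Finset.sum_congr rfl fun p hp => ?_
  have hp' := (Finset.mem_filter.mp hp).2
  have hmul : (if (∃ x : ZMod p, x ^ m = (q : ZMod p)) then Real.log p else 0) =
      (if (∃ x : ZMod p, x ^ m = (q : ZMod p)) then (1 : ℝ) else 0) * Real.log p := by
    split_ifs <;> simp
  rw [hmul, fd_ind hp' hsq q, Finset.sum_mul, Finset.sum_div]
  refine Finset.sum_congr rfl fun t _ => ?_
  rw [Finset.sum_mul, Finset.sum_div]
  refine Finset.sum_congr rfl fun s _ => ?_
  split_ifs <;> ring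

theorem fd_main (m : ℕ) (hm : 0 < m) (hsq : Squarefree m) (q : ℤ)
    (hco : IsCoprime q (m : ℤ))
    (hpow : ∀ p : ℕ, p.Prime → p ∣ m → ¬∃ x : ℤ, x ^ p = q) :
    Tendsto (fun y : ℕ =>
        (((Finset.range (y + 1)).filter
            (fun p : ℕ => p.Prime ∧ ∃ x : ℤ, (p : ℤ) ∣ x ^ m - q)).card : ℝ) /
          (((Finset.range (y + 1)).filter Nat.Prime).card : ℝ))
      atTop (𝓝 ((Nat.totient m : ℝ) / m)) := by
  have hS : ∀ p : ℕ, (∃ x : ℤ, (p : ℤ) ∣ x ^ m - q) ↔ ∃ x : ZMod p, x ^ m = (q : ZMod p) := by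
    intro p
    constructor
    · rintro ⟨x, hx⟩
      refine ⟨(x : ZMod p), ?_⟩
      have := (ZMod.intCast_zmod_eq_zero_iff_dvd (x ^ m - q) p).mpr hx
      push_cast at this
      exact sub_eq_zero.mp this
    · rintro ⟨x, hx⟩
      obtain ⟨z, rfl⟩ := ZMod.intCast_surjective x
      refine ⟨z, (ZMod.intCast_zmod_eq_zero_iff_dvd (z ^ m - q) p).mp ?_⟩
      push_cast
      rw [hx, sub_self]
  have h1 : Tendsto (fun y : ℕ => (∑ p ∈ Finset.Icc 1 y with p.Prime, Real.log p) / (y : ℝ))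
      atTop (𝓝 1) := by
    have := fd_theta Nat.one_pos squarefree_one 1 (by exact isCoprime_one_left) (by
      intro p hp hp1; exact absurd (Nat.dvd_one.mp hp1) hp.ne_one)
    simpa using this
  refine fd_ratio (fun p => ∃ x : ℤ, (p : ℤ) ∣ x ^ m - q) _ ?_ h1
  simp_rw [hS]
  exact fd_theta hm hsq q hco hpow

end


open Filter in
open scoped Classical in
theorem stmt_13 (m : ℕ) (hm : 0 < m) (hsq : Squarefree m) (q : ℤ)
    (hco : IsCoprime q (m : ℤ))
    (hpow : ∀ p : ℕ, p.Prime → p ∣ m → ¬∃ x : ℤ, x ^ p = q) :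
    Tendsto (fun y : ℕ =>
        (((Finset.range (y + 1)).filter
            (fun p : ℕ => p.Prime ∧ ∃ x : ℤ, (p : ℤ) ∣ x ^ m - q)).card : ℝ) /
          (((Finset.range (y + 1)).filter Nat.Prime).card : ℝ))
      atTop (nhds ((Nat.totient m : ℝ) / m)) := by
  exact fd_main m hm hsq q hco hpow
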